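/- arXiv:math/0104241 — 6 statements merged into one kernel-verified Lean document; each statement's English description precedes it below -/
import Mathlib

section
/- Let a,b be positive integers and let y : ℕ → ℚ(y₀,y₁,y₂) satisfy y(k) = (y(k-2)^a · y(k-1)^b + 1)/y(k-3) for k ≥ 3, with y(0),y(1),y(2) being indeterminates. Then every y(k) is a Laurent polynomial in y₀, y₁, y₂ with integer coefficients. -/
open MvPolynomial

/-- The key divisibility, valid in every commutative ring. -/
theorem somos_key {R : Type*} [CommRing R] (a b : ℕ) (ha : 0 < a) (hb : 0 < b)
    (u v w m n o : R) (h1 : m * u = v ^ a * w ^ b + 1) (h2 : n * v = w ^ a * m ^ b + 1)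
    (h3 : o * w = m ^ a * n ^ b + 1) : m ∣ n ^ a * o ^ b + 1 := by
  have d2 : m ∣ (n * v) ^ a - 1 := by
    have h := sub_dvd_pow_sub_pow (n * v) 1 a
    rw [one_pow] at h
    refine Dvd.dvd.trans ?_ h
    rw [h2, add_sub_cancel_right]
    exact Dvd.dvd.mul_left (dvd_pow_self m hb.ne') _
  have d3 : m ∣ (o * w) ^ b - 1 := by
    have h := sub_dvd_pow_sub_pow (o * w) 1 b
    rw [one_pow] at h
    refine Dvd.dvd.trans ?_ h
    rw [h3, add_sub_cancel_right]
    exact Dvd.dvd.mul_right (dvd_pow_self m ha.ne') _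
  obtain ⟨c, hc⟩ := d2
  obtain ⟨d, hd⟩ := d3
  refine ⟨u * n ^ a * o ^ b - c * (o * w) ^ b - d, ?_⟩
  rw [mul_pow] at hc hd
  rw [mul_pow]
  linear_combination (-(n ^ a * o ^ b)) * h1 - (o ^ b * w ^ b) * hc - hd

/-- Quotients of polynomials that are positive at the point (1,1,1). -/
def SomosPos (F : Type*) [Field F] [Algebra (MvPolynomial (Fin 3) ℤ) F] (z : F) : Prop :=
  ∃ p q : MvPolynomial (Fin 3) ℤ, 0 < eval (fun _ => (1 : ℤ)) p ∧
    0 < eval (fun _ => (1 : ℤ)) q ∧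
    z * algebraMap (MvPolynomial (Fin 3) ℤ) F q = algebraMap (MvPolynomial (Fin 3) ℤ) F p

section
variable {F : Type*} [Field F] [Algebra (MvPolynomial (Fin 3) ℤ) F]

theorem somos_alg_ne [IsFractionRing (MvPolynomial (Fin 3) ℤ) F]
    {p : MvPolynomial (Fin 3) ℤ} (hp : 0 < eval (fun _ => (1 : ℤ)) p) :
    algebraMap (MvPolynomial (Fin 3) ℤ) F p ≠ 0 := by
  intro h
  have h0 : p = 0 := by
    apply IsFractionRing.injective (MvPolynomial (Fin 3) ℤ) F
    rw [h, map_zero]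
  rw [h0, map_zero] at hp
  exact lt_irrefl _ hp

theorem SomosPos.ne_zero [IsFractionRing (MvPolynomial (Fin 3) ℤ) F] {z : F}
    (h : SomosPos F z) : z ≠ 0 := by
  obtain ⟨p, q, hp, hq, e⟩ := h
  rintro rfl
  rw [zero_mul] at e
  exact somos_alg_ne hp e.symm

theorem SomosPos.one : SomosPos F 1 := ⟨1, 1, by simp, by simp, by simp⟩

theorem SomosPos.mul {z w : F} (hz : SomosPos F z) (hw : SomosPos F w) :
    SomosPos F (z * w) := by
  obtain ⟨p, q, hp, hq, e⟩ := hz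
  obtain ⟨p', q', hp', hq', e'⟩ := hw
  refine ⟨p * p', q * q', by rw [map_mul]; positivity, by rw [map_mul]; positivity, ?_⟩
  rw [map_mul, map_mul, ← e, ← e']; ring

theorem SomosPos.pow {z : F} (hz : SomosPos F z) (n : ℕ) : SomosPos F (z ^ n) := by
  induction n with
  | zero => simpa using SomosPos.one
  | succ n ih => rw [pow_succ]; exact ih.mul hz

theorem SomosPos.add_one {z : F} (hz : SomosPos F z) : SomosPos F (z + 1) := by
  obtain ⟨p, q, hp, hq, e⟩ := hz
  refine ⟨p + q, q, by rw [map_add]; positivity, hq, ?_⟩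
  rw [map_add, ← e]; ring

theorem SomosPos.inv [IsFractionRing (MvPolynomial (Fin 3) ℤ) F] {z : F}
    (hz : SomosPos F z) : SomosPos F z⁻¹ := by
  have h0 := hz.ne_zero
  obtain ⟨p, q, hp, hq, e⟩ := hz
  refine ⟨q, p, hq, hp, ?_⟩
  rw [← e, inv_mul_cancel_left₀ h0]

end

/-- The recurrence y_k y_{k-3} = y_{k-2}^a y_{k-1}^b + 1 exhibits the
Laurent phenomenon. -/
theorem somos3_like_laurent
    (a b : ℕ) (ha : 0 < a) (hb : 0 < b)
    (F : Type*) [Field F] [Algebra (MvPolynomial (Fin 3) ℤ) F]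
    [IsFractionRing (MvPolynomial (Fin 3) ℤ) F]
    (x : Fin 3 → F) (hx : ∀ i, x i = algebraMap (MvPolynomial (Fin 3) ℤ) F (X i))
    (y : ℕ → F)
    (hinit : ∀ i : Fin 3, y i = x i)
    (hrec : ∀ k : ℕ, y (k + 3) = (y (k + 1) ^ a * y (k + 2) ^ b + 1) / y k) :
    ∀ k : ℕ, y k ∈ Algebra.adjoin ℤ
      (Set.range x ∪ Set.range (fun i => (x i)⁻¹)) := by
  set A := Algebra.adjoin ℤ (Set.range x ∪ Set.range (fun i => (x i)⁻¹)) with hA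
  have h0 : y 0 = x 0 := hinit 0
  have h1 : y 1 = x 1 := hinit 1
  have h2 : y 2 = x 2 := hinit 2
  have hxA : ∀ i, x i ∈ A := fun i => Algebra.subset_adjoin (Or.inl ⟨i, rfl⟩)
  have hiA : ∀ i, (x i)⁻¹ ∈ A := fun i => Algebra.subset_adjoin (Or.inr ⟨i, rfl⟩)
  have hxP : ∀ i, SomosPos F (x i) := fun i => ⟨X i, 1, by simp, by simp, by simp [hx]⟩
  have hP : ∀ k, SomosPos F (y k) ∧ SomosPos F (y (k + 1)) ∧ SomosPos F (y (k + 2)) := by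
    intro k
    induction k with
    | zero => simp only [zero_add, h0, h1, h2]; exact ⟨hxP 0, hxP 1, hxP 2⟩
    | succ k ih =>
      obtain ⟨i0, i1, i2⟩ := ih
      refine ⟨i1, i2, ?_⟩
      show SomosPos F (y (k + 3))
      rw [hrec k, div_eq_mul_inv]
      exact (((i1.pow a).mul (i2.pow b)).add_one).mul i0.inv
  have hne : ∀ k, y k ≠ 0 := fun k => (hP k).1.ne_zero
  have hmul : ∀ k, y (k + 3) * y k = y (k + 1) ^ a * y (k + 2) ^ b + 1 := by
    intro k
    rw [hrec k, div_mul_cancel₀ _ (hne k)]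
  have hnum : ∀ k, y (k + 1) ∈ A → y (k + 2) ∈ A →
      y (k + 1) ^ a * y (k + 2) ^ b + 1 ∈ A := fun k p q =>
    A.add_mem (A.mul_mem (A.pow_mem p a) (A.pow_mem q b)) A.one_mem
  have m0 : y 0 ∈ A := h0 ▸ hxA 0
  have m1 : y 1 ∈ A := h1 ▸ hxA 1
  have m2 : y 2 ∈ A := h2 ▸ hxA 2
  have m3 : y 3 ∈ A := by
    rw [hrec 0, div_eq_mul_inv, h0]
    exact A.mul_mem (hnum 0 m1 m2) (hiA 0)
  have m4 : y 4 ∈ A := by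
    rw [hrec 1, div_eq_mul_inv, h1]
    exact A.mul_mem (hnum 1 m2 m3) (hiA 1)
  have m5 : y 5 ∈ A := by
    rw [hrec 2, div_eq_mul_inv, h2]
    exact A.mul_mem (hnum 2 m3 m4) (hiA 2)
  have main : ∀ k, y k ∈ A ∧ y (k + 1) ∈ A ∧ y (k + 2) ∈ A ∧ y (k + 3) ∈ A ∧
      y (k + 4) ∈ A ∧ y (k + 5) ∈ A := by
    intro k
    induction k with
    | zero => exact ⟨m0, m1, m2, m3, m4, m5⟩
    | succ k ih =>
      obtain ⟨i0, i1, i2, i3, i4, i5⟩ := ih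
      refine ⟨i1, i2, i3, i4, i5, ?_⟩
      show y (k + 6) ∈ A
      have key := somos_key (R := A) a b ha hb ⟨_, i0⟩ ⟨_, i1⟩ ⟨_, i2⟩ ⟨_, i3⟩ ⟨_, i4⟩ ⟨_, i5⟩
        (Subtype.ext (hmul k)) (Subtype.ext (hmul (k + 1))) (Subtype.ext (hmul (k + 2)))
      obtain ⟨c, hc⟩ := key
      have hc' : y (k + 4) ^ a * y (k + 5) ^ b + 1 = y (k + 3) * (c : F) :=
        congrArg Subtype.val hc
      have e : y (k + 6) = (c : F) := by
        have := hmul (k + 3)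
        apply mul_right_cancel₀ (hne (k + 3))
        rw [mul_comm (c : F), ← hc']
        exact this
      rw [e]
      exact c.2
  exact fun k => (main k).1
end

section
/- Let p < q ≤ n/2 be positive integers, let α, β be indeterminates, and let y : ℕ → F, where F is the field of rational functions over ℤ[α,β] in indeterminates y₀,…,y_{n-1}, be defined by y(i) = yᵢ for i < n and y(k+n) = (α·y(k+p)·y(k+n−p) + β·y(k+q)·y(k+n−q))/y(k). Then every y(m) is a Laurent polynomial in y₀,…,y_{n−1} with coefficients in ℤ[α,β]. -/
open MvPolynomial

namespace GaleRob

/-- product of the initial variables -/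
noncomputable def PP (n : ℕ) : MvPolynomial (Fin n ⊕ Fin 2) ℤ := ∏ i : Fin n, X (Sum.inl i)

/-- evaluation at the initial window of a sequence -/
noncomputable def ev (n : ℕ) {K : Type*} [CommRing K] (a b : K) (y : ℕ → K) :
    MvPolynomial (Fin n ⊕ Fin 2) ℤ →+* K :=
  eval₂Hom (Int.castRingHom K) (Sum.elim (fun i : Fin n => y i) ![a, b])

/-- nonvanishing Gale-Robinson sequence -/
def GR (n p q : ℕ) {K : Type*} [Field K] (a b : K) (y : ℕ → K) : Prop :=
  (∀ k, y k ≠ 0) ∧ ∀ k, y (k + n) * y k =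
    a * y (k + p) * y (k + (n - p)) + b * y (k + q) * y (k + (n - q))

theorem GR.shift {n p q : ℕ} {K : Type*} [Field K] {a b : K} {y : ℕ → K} (h : GR n p q a b y)
    (j : ℕ) : GR n p q a b (fun k => y (k + j)) := by
  refine ⟨fun k => h.1 _, fun k => ?_⟩
  have := h.2 (k + j)
  simp only [show k + n + j = k + j + n by omega, show k + p + j = k + j + p by omega,
    show k + q + j = k + j + q by omega, show k + (n - p) + j = k + j + (n - p) by omega,
    show k + (n - q) + j = k + j + (n - q) by omega]
  exact this

section basic
variable {n : ℕ} {K : Type*} [CommRing K] (a b : K) (y : ℕ → K)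

theorem ev_inl (i : Fin n) : ev n a b y (X (Sum.inl i)) = y i := by simp [ev]
theorem ev_a : ev n a b y (X (Sum.inr 0)) = a := by simp [ev]
theorem ev_b : ev n a b y (X (Sum.inr 1)) = b := by simp [ev]
theorem ev_P : ev n a b y (PP n) = ∏ i : Fin n, y i := by
  simp [PP, map_prod, ev_inl]

theorem ev_mem (S : Subring K) (ha : a ∈ S) (hb : b ∈ S) (hy : ∀ i < n, y i ∈ S)
    (r : MvPolynomial (Fin n ⊕ Fin 2) ℤ) : ev n a b y r ∈ S := by
  induction r using MvPolynomial.induction_on with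
  | C c => simp [ev]
  | add f g hf hg => rw [map_add]; exact S.add_mem hf hg
  | mul_X f s hf =>
    rw [map_mul]
    refine S.mul_mem hf ?_
    rcases s with i | i
    · rw [ev_inl]; exact hy _ i.2
    · fin_cases i
      · simpa [ev_a] using ha
      · simpa [ev_b] using hb

/-- Laurent polynomials in the initial window -/
def L (n : ℕ) {K : Type*} [CommRing K] (a b : K) (y : ℕ → K) : Subring K where
  carrier := {z | ∃ (e : ℕ) (r : MvPolynomial (Fin n ⊕ Fin 2) ℤ),
    z * ev n a b y (PP n) ^ e = ev n a b y r}
  mul_mem' := by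
    rintro u v ⟨e, r, h⟩ ⟨f, s, h'⟩
    refine ⟨e + f, r * s, ?_⟩
    rw [map_mul, ← h, ← h']; ring
  one_mem' := ⟨0, 1, by simp⟩
  add_mem' := by
    rintro u v ⟨e, r, h⟩ ⟨f, s, h'⟩
    refine ⟨e + f, r * PP n ^ f + s * PP n ^ e, ?_⟩
    rw [map_add, map_mul, map_mul, map_pow, map_pow, ← h, ← h']; ring
  zero_mem' := ⟨0, 0, by simp⟩
  neg_mem' := by
    rintro u ⟨e, r, h⟩
    exact ⟨e, -r, by rw [map_neg, ← h]; ring⟩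

theorem ev_mem_L (r : MvPolynomial (Fin n ⊕ Fin 2) ℤ) : ev n a b y r ∈ L n a b y :=
  ⟨0, r, by simp⟩

end basic

section graph
variable {n : ℕ} {F K : Type*} [Field F] [Field K] (α β : F) (y : ℕ → F) (a b : K) (y' : ℕ → K)

/-- graph of the specialization map -/
def G (n : ℕ) {F K : Type*} [Field F] [Field K] (α β : F) (y : ℕ → F) (a b : K) (y' : ℕ → K)
    (z : F) (s : K) : Prop :=
  ∃ (e : ℕ) (r : MvPolynomial (Fin n ⊕ Fin 2) ℤ),
    z * ev n α β y (PP n) ^ e = ev n α β y r ∧ s * ev n a b y' (PP n) ^ e = ev n a b y' r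

variable {α β y a b y'}

theorem G.mul {u v : F} {u' v' : K} (h : G n α β y a b y' u u') (h' : G n α β y a b y' v v') :
    G n α β y a b y' (u * v) (u' * v') := by
  obtain ⟨e, r, h1, h2⟩ := h
  obtain ⟨f, s, h3, h4⟩ := h'
  refine ⟨e + f, r * s, ?_, ?_⟩
  · rw [map_mul, ← h1, ← h3]; ring
  · rw [map_mul, ← h2, ← h4]; ring

theorem G.add {u v : F} {u' v' : K} (h : G n α β y a b y' u u') (h' : G n α β y a b y' v v') :
    G n α β y a b y' (u + v) (u' + v') := by
  obtain ⟨e, r, h1, h2⟩ := h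
  obtain ⟨f, s, h3, h4⟩ := h'
  refine ⟨e + f, r * PP n ^ f + s * PP n ^ e, ?_, ?_⟩
  · rw [map_add, map_mul, map_mul, map_pow, map_pow, ← h1, ← h3]; ring
  · rw [map_add, map_mul, map_mul, map_pow, map_pow, ← h2, ← h4]; ring

theorem G_ev (r : MvPolynomial (Fin n ⊕ Fin 2) ℤ) :
    G n α β y a b y' (ev n α β y r) (ev n a b y' r) := ⟨0, r, by simp, by simp⟩

theorem G_fun (hinj : Function.Injective (ev n α β y)) (hy' : ∀ k, y' k ≠ 0)
    {u : F} {s t : K} (h : G n α β y a b y' u s) (h' : G n α β y a b y' u t) : s = t := by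
  obtain ⟨e, r, h1, h2⟩ := h
  obtain ⟨f, r', h3, h4⟩ := h'
  have hP : ev n a b y' (PP n) ≠ 0 := by
    rw [ev_P]; exact Finset.prod_ne_zero_iff.2 fun i _ => hy' i
  have : r * PP n ^ f = r' * PP n ^ e := by
    apply hinj
    rw [map_mul, map_mul, map_pow, map_pow, ← h1, ← h3]; ring
  have := congrArg (ev n a b y') this
  rw [map_mul, map_mul, map_pow, map_pow, ← h2, ← h4] at this
  have h0 : ev n a b y' (PP n) ^ (e + f) ≠ 0 := pow_ne_zero _ hP
  apply mul_right_cancel₀ h0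
  linear_combination this

theorem G_exists (hy' : ∀ k, y' k ≠ 0) {u : F} (hu : u ∈ L n α β y) :
    ∃ s : K, G n α β y a b y' u s := by
  obtain ⟨e, r, h⟩ := hu
  have hP : ev n a b y' (PP n) ≠ 0 := by
    rw [ev_P]; exact Finset.prod_ne_zero_iff.2 fun i _ => hy' i
  exact ⟨ev n a b y' r / ev n a b y' (PP n) ^ e, e, r, h, by field_simp⟩

theorem transport {p q : ℕ} (hp : 0 < p) (hpq : p < q) (hqn : 2 * q ≤ n)
    (hinj : Function.Injective (ev n α β y)) (hy : GR n p q α β y) (hy' : GR n p q a b y')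
    (m : ℕ) (hm : ∀ j ≤ m, y j ∈ L n α β y) : G n α β y a b y' (y m) (y' m) := by
  induction m using Nat.strong_induction_on with
  | _ m ih =>
  have ih' : ∀ j < m, G n α β y a b y' (y j) (y' j) := fun j hj =>
    ih j hj fun i hi => hm i (by omega)
  by_cases hmn : m < n
  · have := G_ev (α := α) (β := β) (y := y) (a := a) (b := b) (y' := y')
      (X (Sum.inl (⟨m, hmn⟩ : Fin n)))
    rwa [ev_inl, ev_inl] at this
  · obtain ⟨k, rfl⟩ : ∃ k, m = k + n := ⟨m - n, by omega⟩
    obtain ⟨s, hs⟩ := G_exists (a := a) (b := b) hy'.1 (hm (k + n) le_rfl)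
    have ga : G n α β y a b y' α a := by
      have := G_ev (n := n) (α := α) (β := β) (y := y) (a := a) (b := b) (y' := y')
        (X (Sum.inr 0))
      rwa [ev_a, ev_a] at this
    have gb : G n α β y a b y' β b := by
      have := G_ev (n := n) (α := α) (β := β) (y := y) (a := a) (b := b) (y' := y')
        (X (Sum.inr 1))
      rwa [ev_b, ev_b] at this
    have h1 := hs.mul (ih' k (by omega))
    have h2 := ((ga.mul (ih' (k + p) (by omega))).mul (ih' (k + (n - p)) (by omega))).add
      ((gb.mul (ih' (k + q) (by omega))).mul (ih' (k + (n - q)) (by omega)))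
    rw [← hy.2, ← hy'.2] at h2
    have := mul_right_cancel₀ (hy'.1 k) (G_fun hinj hy'.1 h1 h2)
    rwa [this] at hs

end graph

section early
variable {n p q : ℕ} {F : Type*} [Field F] {α β : F} {y : ℕ → F}

theorem inv_mem (hy : ∀ k, y k ≠ 0) {i : ℕ} (hi : i < n) : (y i)⁻¹ ∈ L n α β y := by
  refine ⟨1, ∏ j ∈ Finset.univ.erase (⟨i, hi⟩ : Fin n), X (Sum.inl j), ?_⟩
  have h : PP n = X (Sum.inl ⟨i, hi⟩) *
      ∏ j ∈ Finset.univ.erase (⟨i, hi⟩ : Fin n), X (Sum.inl j) :=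
    (Finset.mul_prod_erase _ _ (Finset.mem_univ _)).symm
  rw [pow_one, h, map_mul, ev_inl, ← mul_assoc, inv_mul_cancel₀ (hy i), one_mul]

theorem a_mem : α ∈ L n α β y := by
  have := ev_mem_L (n := n) α β y (X (Sum.inr 0)); rwa [ev_a] at this
theorem b_mem : β ∈ L n α β y := by
  have := ev_mem_L (n := n) α β y (X (Sum.inr 1)); rwa [ev_b] at this

theorem early (hp : 0 < p) (hpq : p < q) (hqn : 2 * q ≤ n)
    (hy : GR n p q α β y) (m : ℕ) (hm : m < 2 * n) : y m ∈ L n α β y := by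
  induction m using Nat.strong_induction_on with
  | _ m ih =>
  by_cases hmn : m < n
  · have := ev_mem_L (n := n) α β y (X (Sum.inl ⟨m, hmn⟩)); rwa [ev_inl] at this
  · obtain ⟨k, rfl⟩ : ∃ k, m = k + n := ⟨m - n, by omega⟩
    have h := hy.2 k
    have : y (k + n) = (α * y (k + p) * y (k + (n - p)) + β * y (k + q) * y (k + (n - q)))
        * (y k)⁻¹ := by rw [← h, mul_assoc, mul_inv_cancel₀ (hy.1 k), mul_one]
    rw [this]
    exact mul_mem (add_mem
      (mul_mem (mul_mem a_mem (ih _ (by omega) (by omega))) (ih _ (by omega) (by omega)))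
      (mul_mem (mul_mem b_mem (ih _ (by omega) (by omega))) (ih _ (by omega) (by omega))))
      (inv_mem hy.1 (by omega))

theorem mid (hp : 0 < p) (hpq : p < q) (hqn : 2 * q ≤ n)
    (hy : GR n p q α β y) : y (2 * n) ∈ L n α β y := by
  have e := early hp hpq hqn hy
  have h0 := hy.2 0
  have hn := hy.2 n
  have h1 := hy.2 p
  have h2 := hy.2 (n - p)
  have h3 := hy.2 q
  have h4 := hy.2 (n - q)
  rw [show n + n = 2 * n by omega] at hn
  rw [show p + (n - p) = n by omega] at h1
  rw [show n - p + p = n by omega, show n - p + (n - q) = n - q + (n - p) by omega] at h2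
  rw [show q + (n - q) = n by omega, show q + p = p + q by omega] at h3
  rw [show n - q + q = n by omega] at h4
  rw [show n + (n - p) = n - p + n by omega, show n + (n - q) = n - q + n by omega,
    show n + p = p + n by omega, show n + q = q + n by omega] at hn
  simp only [zero_add] at h0
  rw [show q + (n - p) = n - p + q by omega] at h3
  rw [show p + (n - q) = n - q + p by omega] at h1
  set E := α * y q * y (n - q) * (α * α * (y (p + p) * y (n - p + (n - p))) * y n
      + α * β * (y (p + p) * (y (n - p + q) * y (n - q + (n - p)))
        + (y (p + q) * y (n - q + p)) * y (n - p + (n - p))))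
    + β * y p * y (n - p) * (β * β * (y (q + q) * y (n - q + (n - q))) * y n
      + α * β * (y (q + q) * (y (n - q + p) * y (n - q + (n - p)))
        + (y (p + q) * y (n - p + q)) * y (n - q + (n - q))))
    + α * β * (y (p + q) * y (n - q + p)) * (y (n - p + q) * y (n - q + (n - p))) * y 0 with hE
  have key : y (2 * n) * (y p * y (n - p) * y q * y (n - q)) = E := by
    apply mul_right_cancel₀ (hy.1 n)
    calc _ = (y (2 * n) * y n) * (y p * y (n - p) * y q * y (n - q)) := by ring
      _ = α * y q * y (n - q) * (y (p + n) * y p) * (y (n - p + n) * y (n - p))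
        + β * y p * y (n - p) * (y (q + n) * y q) * (y (n - q + n) * y (n - q)) := by
          rw [hn]; ring
      _ = _ := by
          rw [h1, h2, h3, h4, hE]
          linear_combination (-α * β * (y (p + q) * y (n - q + p)) *
            (y (n - p + q) * y (n - q + (n - p)))) * h0
  have : y (2 * n) = E * ((y p)⁻¹ * (y (n - p))⁻¹ * (y q)⁻¹ * (y (n - q))⁻¹) := by
    rw [← key]
    have := hy.1 p; have := hy.1 (n - p); have := hy.1 q; have := hy.1 (n - q)
    field_simp
  rw [this]
  have ha : α ∈ L n α β y := a_mem
  have hb : β ∈ L n α β y := b_mem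
  refine mul_mem ?_ (mul_mem (mul_mem (mul_mem (inv_mem hy.1 ?_) (inv_mem hy.1 ?_))
    (inv_mem hy.1 ?_)) (inv_mem hy.1 ?_)) <;> try omega
  have m1 := e p (by omega)
  have m2 := e q (by omega)
  have m3 := e (n - p) (by omega)
  have m4 := e (n - q) (by omega)
  have m5 := e (p + p) (by omega)
  have m6 := e (n - p + (n - p)) (by omega)
  have m7 := e n (by omega)
  have m8 := e (n - p + q) (by omega)
  have m9 := e (n - q + (n - p)) (by omega)
  have m10 := e (p + q) (by omega)
  have m11 := e (n - q + p) (by omega)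
  have m12 := e (q + q) (by omega)
  have m13 := e (n - q + (n - q)) (by omega)
  have m14 := e 0 (by omega)
  rw [hE]
  repeat' first | assumption | apply add_mem | apply mul_mem

end early

/-- numerator of the first new term -/
noncomputable def N0 (n p q : ℕ) (h1 : p < n) (h2 : n - p < n) (h3 : q < n) (h4 : n - q < n) :
    MvPolynomial (Fin n ⊕ Fin 2) ℤ :=
  (X (Sum.inl ⟨p, h1⟩) * X (Sum.inl ⟨n - p, h2⟩)) * X (Sum.inr 0) +
    X (Sum.inr 1) * (X (Sum.inl ⟨q, h3⟩) * X (Sum.inl ⟨n - q, h4⟩))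

theorem ev_N0 {n p q : ℕ} (h1 : p < n) (h2 : n - p < n) (h3 : q < n) (h4 : n - q < n)
    {K : Type*} [CommRing K] (a b : K) (y : ℕ → K) :
    ev n a b y (N0 n p q h1 h2 h3 h4) =
      a * y p * y (n - p) + b * y q * y (n - q) := by
  simp only [N0, map_add, map_mul, ev_inl, ev_a, ev_b]; ring

theorem relprime_X {σ : Type*} {s t : σ} (h : s ≠ t) :
    IsRelPrime (X s : MvPolynomial σ ℤ) (X t) := by
  have hi : Irreducible (X s : MvPolynomial σ ℤ) := (MvPolynomial.X_prime (i := s) (R := ℤ)).irreducible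
  rw [hi.isRelPrime_iff_not_dvd, MvPolynomial.X_dvd_X]
  simpa using h

theorem N0_prime {n p q : ℕ} (hp : 0 < p) (hpq : p < q) (hqn : 2 * q ≤ n)
    (h1 : p < n) (h2 : n - p < n) (h3 : q < n) (h4 : n - q < n) :
    Prime (N0 n p q h1 h2 h3 h4) := by
  rw [← UniqueFactorizationMonoid.irreducible_iff_prime]
  refine irreducible_mul_X_add _ _ _ (mul_ne_zero (X_ne_zero _) (X_ne_zero _)) ?_ ?_ ?_
  · intro h
    have := vars_mul _ _ h
    simp [vars_X] at this
  · intro h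
    rcases Finset.mem_union.1 (vars_mul _ _ h) with h | h
    · simp [vars_X] at h
    · have := vars_mul _ _ h
      simp [vars_X] at this
  · refine IsRelPrime.mul_left (IsRelPrime.mul_right ?_ (IsRelPrime.mul_right ?_ ?_))
      (IsRelPrime.mul_right ?_ (IsRelPrime.mul_right ?_ ?_)) <;> apply relprime_X <;>
      simp <;> omega

theorem ev_map {n : ℕ} {A K : Type*} [CommRing A] [CommRing K] (f : A →+* K) (a b : A) (y : ℕ → A)
    (r : MvPolynomial (Fin n ⊕ Fin 2) ℤ) :
    ev n (f a) (f b) (fun k => f (y k)) r = f (ev n a b y r) := by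
  have : ev n (f a) (f b) (fun k => f (y k)) = f.comp (ev n a b y) := by
    apply MvPolynomial.ringHom_ext
    · intro c; simp [ev]
    · rintro (i | i)
      · simp [ev]
      · fin_cases i <;> simp [ev]
  rw [this]; rfl

theorem not_dvd {n p q : ℕ} (hp : 0 < p) (hpq : p < q) (hqn : 2 * q ≤ n)
    (h1 : p < n) (h2 : n - p < n) (h3 : q < n) (h4 : n - q < n)
    {F : Type*} [Field F] {α β : F} {y : ℕ → F} (hinj : Function.Injective (ev n α β y))
    (hy : GR n p q α β y) (m : ℕ) (hm : n < m) (hm' : m ≤ 2 * n) :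
    ∃ (e : ℕ) (d : MvPolynomial (Fin n ⊕ Fin 2) ℤ),
      y m * ev n α β y (PP n) ^ e = ev n α β y d ∧ ¬ N0 n p q h1 h2 h3 h4 ∣ d := by
  have hL : ∀ j ≤ m, y j ∈ L n α β y := by
    intro j hj
    rcases Nat.lt_or_ge j (2 * n) with h | h
    · exact early hp hpq hqn hy j h
    · rw [show j = 2 * n by omega]; exact mid hp hpq hqn hy
  let D : ℚ := q * (n - q) - p * (n - p)
  have hq' : (q : ℚ) + q ≤ n := by have : q + q ≤ n := by omega
                                   exact_mod_cast this
  have hpq' : (p : ℚ) < q := by exact_mod_cast hpq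
  have hD : D ≠ 0 := by
    have : D = (q - p) * (n - q - p) := by simp only [D]; ring
    rw [this]
    exact mul_ne_zero (by linarith) (by linarith)
  let a : ℚ := q * (n - q) / D
  let b : ℚ := - (p * (n - p)) / D
  have hab : a + b = 1 := by
    simp only [a, b]; rw [← add_div, ← sub_eq_add_neg]; exact div_self hD
  have hab' : a * (p * (n - p)) + b * (q * (n - q)) = 0 := by
    simp only [a, b]; field_simp; ring
  let z : ℕ → Polynomial ℚ := fun j => Polynomial.X + Polynomial.C ((j : ℚ) - n)
  have hz0 : ∀ j, z j ≠ 0 := fun j => Polynomial.X_add_C_ne_zero _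
  have hzrec : ∀ k, z (k + n) * z k = Polynomial.C a * z (k + p) * z (k + (n - p)) +
      Polynomial.C b * z (k + q) * z (k + (n - q)) := by
    intro k
    apply Polynomial.funext
    intro t
    simp only [z, Polynomial.eval_mul, Polynomial.eval_add, Polynomial.eval_X, Polynomial.eval_C]
    push_cast [Nat.cast_sub h1.le, Nat.cast_sub h3.le]
    linear_combination (-(t + k) * (t + k - n)) * hab - hab'
  let f : Polynomial ℚ →+* RatFunc ℚ := algebraMap _ _
  have hf : Function.Injective f := IsFractionRing.injective _ _
  have hz : GR n p q (f (Polynomial.C a)) (f (Polynomial.C b)) (fun k => f (z k)) := by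
    refine ⟨fun k => (map_ne_zero_iff f hf).2 (hz0 k), fun k => ?_⟩
    simp only [← map_mul, ← map_add, hzrec]
  obtain ⟨e, d, hd, hd'⟩ := transport hp hpq hqn hinj hy hz m hL
  refine ⟨e, d, hd, ?_⟩
  rintro ⟨c, rfl⟩
  rw [ev_map, ev_map, ← map_pow, ← map_mul] at hd'
  have := congrArg (Polynomial.eval 0) (hf hd')
  have h0 := hzrec 0
  simp only [zero_add] at h0
  rw [map_mul, ev_N0, ← h0, ev_P] at this
  simp only [z, Polynomial.eval_mul, Polynomial.eval_pow, Polynomial.eval_prod,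
    Polynomial.eval_add, Polynomial.eval_X, Polynomial.eval_C, sub_self, zero_add, zero_mul] at this
  have hm2 : (m : ℚ) - n ≠ 0 := sub_ne_zero.2 (by exact_mod_cast hm.ne')
  have hprod : (∏ i : Fin n, (((i : ℕ) : ℚ) - n)) ≠ 0 :=
    Finset.prod_ne_zero_iff.2 fun i _ => sub_ne_zero.2 (by exact_mod_cast i.2.ne)
  exact mul_ne_zero hm2 (pow_ne_zero e hprod) this

theorem main {n p q : ℕ} (hp : 0 < p) (hpq : p < q) (hqn : 2 * q ≤ n)
    {F : Type*} [Field F] {α β : F} {y : ℕ → F} (hinj : Function.Injective (ev n α β y))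
    (hy : GR n p q α β y) (m : ℕ) : y m ∈ L n α β y := by
  induction m using Nat.strong_induction_on with
  | _ m ih =>
  rcases Nat.lt_or_ge m (2 * n) with h | h
  · exact early hp hpq hqn hy m h
  rcases h.eq_or_lt with h | h
  · rw [← h]; exact mid hp hpq hqn hy
  have h1 : p < n := by omega
  have h2 : n - p < n := by omega
  have h3 : q < n := by omega
  have h4 : n - q < n := by omega
  have hE : ∀ j ≤ 2 * n, y j ∈ L n α β y := fun j hj => ih j (by omega)
  set θ := ev n α β y with hθ
  set N := N0 n p q h1 h2 h3 h4 with hN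
  have hNp : Prime N := N0_prime hp hpq hqn h1 h2 h3 h4
  have hyn : y n * y 0 = θ N := by
    have := hy.2 0
    simp only [zero_add] at this
    rw [this, hN, hθ, ev_N0]
  -- window 1
  obtain ⟨e, r, _, hr⟩ := transport hp hpq hqn hinj hy (hy.shift 1) (m - 1)
    fun j hj => ih j (by omega)
  simp only [show m - 1 + 1 = m by omega, ev_P] at hr
  have hrL : ev n α β (fun k => y (k + 1)) r ∈ L n α β y :=
    ev_mem _ _ _ _ a_mem b_mem (fun i hi => hE _ (by omega)) r
  have w1 : y m * θ N ^ e ∈ L n α β y := by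
    obtain ⟨n', rfl⟩ : ∃ n', n = n' + 1 := ⟨n - 1, by omega⟩
    rw [Fin.prod_univ_castSucc] at hr
    simp only [Fin.val_castSucc, Fin.val_last] at hr
    have : y m * θ N ^ e = ev (n' + 1) α β (fun k => y (k + 1)) r *
        ((∏ i : Fin n', (y ((i : ℕ) + 1))⁻¹) * y 0) ^ e := by
      rw [← hr, ← hyn, Finset.prod_inv_distrib]
      have : (∏ i : Fin n', (y ((i : ℕ) + 1))) ≠ 0 :=
        Finset.prod_ne_zero_iff.2 fun i _ => hy.1 _
      rw [mul_assoc, ← mul_pow]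
      congr 2
      field_simp
    rw [this]
    refine mul_mem hrL (pow_mem (mul_mem (prod_mem fun i _ => inv_mem hy.1 ?_)
      (hE 0 (by omega))) _)
    have := i.2
    omega
  -- window n+1
  obtain ⟨e', r', _, hr'⟩ := transport hp hpq hqn hinj hy (hy.shift (n + 1)) (m - (n + 1))
    fun j hj => ih j (by omega)
  simp only [show m - (n + 1) + (n + 1) = m by omega, ev_P] at hr'
  have hrL' : ev n α β (fun k => y (k + (n + 1))) r' ∈ L n α β y :=
    ev_mem _ _ _ _ a_mem b_mem (fun i hi => hE _ (by omega)) r'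
  have hnd : ∀ i : Fin n, ∃ (e : ℕ) (d : MvPolynomial (Fin n ⊕ Fin 2) ℤ),
      y (i + (n + 1)) * θ (PP n) ^ e = θ d ∧ ¬ N ∣ d := fun i =>
    not_dvd hp hpq hqn h1 h2 h3 h4 hinj hy _ (by omega) (by have := i.2; omega)
  choose ε d hd hd' using hnd
  have w2 : y m * θ (∏ i, d i) ^ e' ∈ L n α β y := by
    have : y m * θ (∏ i, d i) ^ e' = ev n α β (fun k => y (k + (n + 1))) r' *
        (∏ i, θ (PP n) ^ ε i) ^ e' := by
      rw [map_prod, ← hr', mul_assoc, ← mul_pow, ← Finset.prod_mul_distrib]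
      simp only [hd]
    rw [this]
    exact mul_mem hrL' (pow_mem (prod_mem fun i _ => pow_mem (ev_mem_L _ _ _ _) _) _)
  obtain ⟨g, s, hs⟩ := w1
  obtain ⟨g', s', hs'⟩ := w2
  have hDnd : ¬ N ∣ (∏ i, d i) ^ e' * PP n ^ g' := by
    intro hdiv
    rcases hNp.dvd_or_dvd hdiv with hdiv | hdiv
    · obtain ⟨i, _, hi⟩ := (hNp.dvd_finsetProd_iff _).1 (hNp.dvd_of_dvd_pow hdiv)
      exact hd' i hi
    · obtain ⟨i, _, hi⟩ := (hNp.dvd_finsetProd_iff _).1 (hNp.dvd_of_dvd_pow hdiv)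
      -- evaluate with value one everywhere, a = b = 1
      have := hNp.irreducible.dvd_symm (MvPolynomial.X_prime (R := ℤ)).irreducible hi
      obtain ⟨c, hc⟩ := this
      have h5 := congrArg (ev n (1 : ℤ) 0 (fun k => if k = i then 0 else 1)) hc
      have h6 := congrArg (ev n (0 : ℤ) 1 (fun k => if k = i then 0 else 1)) hc
      rw [hN, map_mul, ev_N0, ev_inl] at h5 h6
      simp at h5 h6
      omega
  have hdvd : N ^ e ∣ s := by
    refine hNp.pow_dvd_of_dvd_mul_right e hDnd ?_
    refine ⟨s' * PP n ^ g, ?_⟩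
    apply hinj
    simp only [map_mul, map_pow]
    rw [← hs, ← hs']
    ring
  obtain ⟨c, rfl⟩ := hdvd
  refine ⟨g, c, ?_⟩
  have hN0 : θ N ^ e ≠ 0 := by
    rw [← hyn]; exact pow_ne_zero _ (mul_ne_zero (hy.1 _) (hy.1 _))
  apply mul_right_cancel₀ hN0
  rw [map_mul, map_pow] at hs
  linear_combination hs

end GaleRob

theorem two_term_gale_robinson_laurent
    (n p q : ℕ) (hp : 0 < p) (hpq : p < q) (hqn : 2 * q ≤ n)
    (F : Type*) [Field F] [Algebra (MvPolynomial (Fin n ⊕ Fin 2) ℤ) F]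
    [IsFractionRing (MvPolynomial (Fin n ⊕ Fin 2) ℤ) F]
    (x : Fin n ⊕ Fin 2 → F)
    (hx : ∀ s, x s = algebraMap (MvPolynomial (Fin n ⊕ Fin 2) ℤ) F (X s))
    (α β : F) (hα : α = x (Sum.inr 0)) (hβ : β = x (Sum.inr 1))
    (y : ℕ → F)
    (hinit : ∀ i : Fin n, y i = x (Sum.inl i))
    (hrec : ∀ k : ℕ,
      y (k + n) = (α * y (k + p) * y (k + (n - p)) + β * y (k + q) * y (k + (n - q))) / y k) :
    ∀ m : ℕ, y m ∈ Algebra.adjoin ℤ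
      (Set.range (fun i : Fin n => x (Sum.inl i)) ∪
       Set.range (fun i : Fin n => (x (Sum.inl i))⁻¹) ∪ {α, β}) := by
  have hev : GaleRob.ev n α β y = algebraMap (MvPolynomial (Fin n ⊕ Fin 2) ℤ) F := by
    apply MvPolynomial.ringHom_ext
    · intro c; simp [GaleRob.ev]
    · rintro (i | i)
      · rw [GaleRob.ev_inl, hinit, hx]
      · fin_cases i
        · simp [GaleRob.ev, hα, hx]
        · simp [GaleRob.ev, hβ, hx]
  have hinj : Function.Injective (GaleRob.ev n α β y) := by
    rw [hev]; exact IsFractionRing.injective _ _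
  let ψ := GaleRob.ev n (1 : ℤ) 1 (fun _ => 1)
  have hne : ∀ s, 0 < ψ s → GaleRob.ev n α β y s ≠ 0 := by
    intro s hs h0
    have : s = 0 := hinj (by rw [h0, map_zero])
    simp [this] at hs
  have hpos : ∀ m, ∃ r s, 0 < ψ r ∧ 0 < ψ s ∧
      y m * GaleRob.ev n α β y s = GaleRob.ev n α β y r := by
    intro m
    induction m using Nat.strong_induction_on with
    | _ m ih =>
    by_cases hmn : m < n
    · refine ⟨X (Sum.inl ⟨m, hmn⟩), 1, ?_, ?_, ?_⟩
      · simp [ψ, GaleRob.ev_inl]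
      · simp
      · rw [GaleRob.ev_inl]; simp
    · obtain ⟨k, rfl⟩ : ∃ k, m = k + n := ⟨m - n, by omega⟩
      obtain ⟨r0, s0, hr0, hs0, h0⟩ := ih k (by omega)
      obtain ⟨r1, s1, hr1, hs1, h1⟩ := ih (k + p) (by omega)
      obtain ⟨r2, s2, hr2, hs2, h2⟩ := ih (k + (n - p)) (by omega)
      obtain ⟨r3, s3, hr3, hs3, h3⟩ := ih (k + q) (by omega)
      obtain ⟨r4, s4, hr4, hs4, h4⟩ := ih (k + (n - q)) (by omega)
      have hs0' := hne s0 hs0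
      have hr0' := hne r0 hr0
      have hk : y k ≠ 0 := by
        intro h; rw [h, zero_mul] at h0; exact hr0' h0.symm
      refine ⟨(X (Sum.inr 0) * r1 * r2 * s3 * s4 + X (Sum.inr 1) * r3 * r4 * s1 * s2) * s0,
        r0 * s1 * s2 * s3 * s4, ?_, ?_, ?_⟩
      · simp only [map_mul, map_add, ψ, GaleRob.ev_a, GaleRob.ev_b]
        positivity
      · simp only [map_mul]; positivity
      · simp only [map_mul, map_add, GaleRob.ev_a, GaleRob.ev_b]
        rw [hrec, ← h0, ← h1, ← h2, ← h3, ← h4]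
        field_simp
  have hy0 : ∀ k, y k ≠ 0 := by
    intro k hk
    obtain ⟨r, s, hr, hs, h⟩ := hpos k
    rw [hk, zero_mul] at h
    exact hne r hr h.symm
  have hGR : GaleRob.GR n p q α β y :=
    ⟨hy0, fun k => by rw [hrec, div_mul_cancel₀ _ (hy0 k)]⟩
  intro m
  obtain ⟨e, r, h⟩ := GaleRob.main hp hpq hqn hinj hGR m
  set S := Algebra.adjoin ℤ
      (Set.range (fun i : Fin n => x (Sum.inl i)) ∪
       Set.range (fun i : Fin n => (x (Sum.inl i))⁻¹) ∪ {α, β}) with hS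
  have hprod : (∏ i : Fin n, y i) ≠ 0 := Finset.prod_ne_zero_iff.2 fun i _ => hy0 i
  have hym : y m = GaleRob.ev n α β y r * (∏ i : Fin n, (y i)⁻¹) ^ e := by
    rw [← h, GaleRob.ev_P, Finset.prod_inv_distrib, mul_assoc, ← mul_pow,
      mul_inv_cancel₀ hprod, one_pow, mul_one]
  rw [hym]
  refine mul_mem ?_ (pow_mem (prod_mem fun i _ => ?_) _)
  · refine GaleRob.ev_mem α β y S.toSubring ?_ ?_ ?_ r
    · exact Algebra.subset_adjoin (by simp)
    · exact Algebra.subset_adjoin (by simp)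
    · intro i hi
      refine Algebra.subset_adjoin (Or.inl (Or.inl ⟨⟨i, hi⟩, ?_⟩))
      exact (hinit ⟨i, hi⟩).symm
  · refine Algebra.subset_adjoin (Or.inl (Or.inr ⟨i, ?_⟩))
    simp only [hinit]
end

section
/- Let p, q, r be distinct positive integers with n = p+q+r, let α,β,γ be indeterminates, and let y : ℕ → F, F the field of rational functions over ℤ[α,β,γ] in y₀,…,y_{n-1}, satisfy y(k+n) = (α y(k+p) y(k+n−p) + β y(k+q) y(k+n−q) + γ y(k+r) y(k+n−r))/y(k). Then every y(m) lies in ℤ[α,β,γ][y₀^{±1},…,y_{n−1}^{±1}]. -/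
open MvPolynomial

namespace GaleRobinson

/-- The polynomial ring. -/
abbrev Sx (n : ℕ) := MvPolynomial (Fin n ⊕ Fin 3) ℤ

/-- The product of the initial variables. -/
noncomputable def Mon (n : ℕ) : Sx n := ∏ i : Fin n, X (Sum.inl i)

/-- The Laurent ring. -/
abbrev Lx (n : ℕ) := Localization.Away (Mon n)

/-- The generators of the Laurent ring. -/
noncomputable def gen (n : ℕ) (s : Fin n ⊕ Fin 3) : Lx n := algebraMap (Sx n) (Lx n) (X s)

lemma Mon_ne (n : ℕ) : Mon n ≠ 0 := by
  unfold Mon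
  exact Finset.prod_ne_zero_iff.2 fun i _ => X_ne_zero _

instance (n : ℕ) : IsDomain (Lx n) :=
  IsLocalization.isDomain_localization
    (powers_le_nonZeroDivisors_of_noZeroDivisors (Mon_ne n))

lemma exists_lift {n : ℕ} {R : Type*} [CommRing R] (v : Fin n ⊕ Fin 3 → R)
    (hv : ∀ i, IsUnit (v (Sum.inl i))) : ∃ φ : Lx n →+* R, ∀ s, φ (gen n s) = v s := by
  have hu : IsUnit ((eval₂Hom (Int.castRingHom R) v) (Mon n)) := by
    unfold Mon
    rw [map_prod]
    simp only [coe_eval₂Hom, eval₂_X]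
    exact (IsUnit.prod_univ_iff).2 hv
  refine ⟨IsLocalization.Away.lift (Mon n) hu, fun s => ?_⟩
  unfold gen
  rw [IsLocalization.Away.lift_eq]
  simp

lemma hom_ext {n : ℕ} {R : Type*} [CommRing R] (φ ψ : Lx n →+* R)
    (h : ∀ s, φ (gen n s) = ψ (gen n s)) : φ = ψ := by
  apply IsLocalization.ringHom_ext (Submonoid.powers (Mon n))
  apply MvPolynomial.ringHom_ext
  · intro r; simp
  · intro s; exact h s

lemma map_Mon (n : ℕ) :
    algebraMap (Sx n) (Lx n) (Mon n) = ∏ i : Fin n, gen n (Sum.inl i) := by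
  have h : ∀ {R : Type} [CommRing R] (f : Sx n →+* R),
      f (Mon n) = ∏ i : Fin n, f (X (Sum.inl i)) := by
    intro R _ f
    rw [show Mon n = ∏ i : Fin n, X (Sum.inl i) from rfl, map_prod]
  exact h _

lemma isUnit_gen {n : ℕ} (i : Fin n) : IsUnit (gen n (Sum.inl i)) := by
  have h : IsUnit (algebraMap (Sx n) (Lx n) (Mon n)) := IsLocalization.Away.algebraMap_isUnit _
  rw [map_Mon] at h
  exact (IsUnit.prod_univ_iff).1 h i

lemma exists_den {n : ℕ} (l : Lx n) :
    ∃ (k : ℕ) (g : Sx n), l * (∏ i : Fin n, gen n (Sum.inl i)) ^ k = algebraMap _ _ g := by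
  obtain ⟨k, g, h⟩ := IsLocalization.Away.surj (Mon n) l
  refine ⟨k, g, ?_⟩
  rw [← h, map_Mon]

lemma prime_lin {n : ℕ} (i1 i2 i3 i4 i5 i6 : Fin n) (P : Lx n)
    (hP : P = gen n (Sum.inr 0) * gen n (Sum.inl i1) * gen n (Sum.inl i2)
      + gen n (Sum.inr 1) * gen n (Sum.inl i3) * gen n (Sum.inl i4)
      + gen n (Sum.inr 2) * gen n (Sum.inl i5) * gen n (Sum.inl i6))
    (h0 : P ≠ 0) (h1 : ¬ IsUnit P) : Prime P := by
  classical
  obtain ⟨u, hu⟩ := (isUnit_gen i1).exists_right_inv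
  obtain ⟨w, hw⟩ := (isUnit_gen i2).exists_right_inv
  obtain ⟨τ, hτ⟩ := exists_lift (n := n) (R := Lx n)
    (Sum.elim (fun i => gen n (Sum.inl i))
      ![-(gen n (Sum.inr 1) * gen n (Sum.inl i3) * gen n (Sum.inl i4)
      + gen n (Sum.inr 2) * gen n (Sum.inl i5) * gen n (Sum.inl i6)) * u * w,
        gen n (Sum.inr 1), gen n (Sum.inr 2)]) (fun i => isUnit_gen i)
  have hα := hτ (Sum.inr 0)
  have hβ := hτ (Sum.inr 1)
  have hγ := hτ (Sum.inr 2)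
  have hi : ∀ i, τ (gen n (Sum.inl i)) = gen n (Sum.inl i) := fun i => hτ (Sum.inl i)
  simp only [Sum.elim_inr, Matrix.cons_val] at hα hβ hγ
  have hτP : τ P = 0 := by
    rw [hP]
    simp only [map_add, map_mul, hα, hβ, hγ, hi]
    generalize gen n (Sum.inl i1) = a at *
    generalize gen n (Sum.inl i2) = b at *
    generalize gen n (Sum.inr 1) * gen n (Sum.inl i3) * gen n (Sum.inl i4) = c
    generalize gen n (Sum.inr 2) * gen n (Sum.inl i5) * gen n (Sum.inl i6) = d
    linear_combination (-(c+d) * b * w) * hu - (c + d) * hw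
  have key : ∀ g, P ∣ g - τ g := by
    have : (Ideal.Quotient.mk (Ideal.span {P})) = (Ideal.Quotient.mk (Ideal.span {P})).comp τ := by
      apply hom_ext
      rintro (i | s)
      · simp [hi]
      · rw [RingHom.comp_apply, Ideal.Quotient.eq, Ideal.mem_span_singleton]
        fin_cases s
        · simp only [Fin.zero_eta, hα]
          refine ⟨u * w, ?_⟩
          rw [hP]
          linear_combination (-(gen n (Sum.inr 0)) * gen n (Sum.inl i2) * w) * hu
            - (gen n (Sum.inr 0)) * hw
        · simp [hβ]
        · simp [hγ]
    intro g
    rw [← Ideal.mem_span_singleton, ← Ideal.Quotient.eq]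
    exact congrArg (fun f => f g) this
  refine ⟨h0, h1, fun g h hgh => ?_⟩
  obtain ⟨c, hc⟩ := hgh
  have h2 : τ g * τ h = 0 := by rw [← map_mul, hc, map_mul, hτP, zero_mul]
  rcases mul_eq_zero.1 h2 with h3 | h3
  · left; simpa [h3] using key g
  · right; simpa [h3] using key h

/-- One instance of the recurrence. -/
def Rec {R : Type*} [CommRing R] (p q r : ℕ) (a b c : R) (y : ℕ → R) (k : ℕ) : Prop :=
  y k * y (k + (p + q + r)) = a * y (k + p) * y (k + (q + r)) + b * y (k + q) * y (k + (p + r))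
    + c * y (k + r) * y (k + (p + q))

lemma Rec.map {R T : Type*} [CommRing R] [CommRing T] (f : R →+* T) {p q r : ℕ} {a b c : R}
    {y : ℕ → R} {k : ℕ} (h : Rec p q r a b c y k) :
    Rec p q r (f a) (f b) (f c) (fun i => f (y i)) k := by
  unfold Rec at *
  simpa using congrArg f h

/-- two solutions which agree initially agree -/
lemma Rec.unique {R : Type*} [CommRing R] [IsDomain R] {p q r : ℕ} (hp : 0 < p) (hq : 0 < q)
    (hr : 0 < r) {a b c : R} {y z : ℕ → R} (m : ℕ)
    (hy : ∀ k, k + (p + q + r) < m → Rec p q r a b c y k)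
    (hz : ∀ k, k + (p + q + r) < m → Rec p q r a b c z k)
    (hne : ∀ k, k + (p + q + r) < m → z k ≠ 0)
    (h0 : ∀ i, i < p + q + r → y i = z i) : ∀ i, i < m → y i = z i := by
  intro i
  induction i using Nat.strong_induction_on with
  | _ i ih =>
    intro him
    by_cases hi : i < p + q + r
    · exact h0 i hi
    · obtain ⟨k, rfl⟩ : ∃ k, i = k + (p + q + r) := ⟨i - (p + q + r), by omega⟩
      have h1 := hy k him
      have h2 := hz k him
      unfold Rec at h1 h2
      rw [ih k (by omega) (by omega), ih (k + p) (by omega) (by omega),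
        ih (k + q) (by omega) (by omega),
        ih (k + r) (by omega) (by omega), ih (k + (q + r)) (by omega) (by omega),
        ih (k + (p + r)) (by omega) (by omega), ih (k + (p + q)) (by omega) (by omega), ← h2] at h1
      exact mul_left_cancel₀ (hne k him) h1

/-- The hexagon identity. -/
lemma dvd_two {R : Type*} [CommRing R] {p q r : ℕ} {a b c : R} {y : ℕ → R}
    (hy : ∀ k, k < p + q + r → Rec p q r a b c y k)
    (hu : ∀ i, i < p + q + r → IsUnit (y i)) (hp : 0 < p) (hq : 0 < q) (hr : 0 < r) :
    y (p + q + r) ∣ a * y (p + q + r + p) * y (p + q + r + (q + r))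
      + b * y (p + q + r + q) * y (p + q + r + (p + r))
      + c * y (p + q + r + r) * y (p + q + r + (p + q)) := by
  have h0 := hy 0 (by omega)
  have h1 := hy p (by omega)
  have h2 := hy q (by omega)
  have h3 := hy r (by omega)
  have h4 := hy (q + r) (by omega)
  have h5 := hy (p + r) (by omega)
  have h6 := hy (p + q) (by omega)
  have hun : IsUnit (y (q + r) * y (p + r) * y (p + q)) :=
    ((hu (q + r) (by omega)).mul (hu (p + r) (by omega))).mul (hu (p + q) (by omega))
  rw [← hun.dvd_mul_left]
  unfold Rec at *
  have e1 : p + (q + r) = p + q + r := by ring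
  have e2 : q + (p + r) = p + q + r := by ring
  have e3 : r + (p + q) = p + q + r := by ring
  have e4 : q + r + p = p + q + r := by ring
  have e5 : p + r + q = p + q + r := by ring
  have e7 : q + p = p + q := by ring
  have e8 : r + p = p + r := by ring
  have e9 : r + q = q + r := by ring
  have f1 : p + (p + q + r) = p + q + r + p := by ring
  have f2 : q + (p + q + r) = p + q + r + q := by ring
  have f3 : r + (p + q + r) = p + q + r + r := by ring
  have f4 : q + r + (p + q + r) = p + q + r + (q + r) := by ring
  have f5 : p + r + (p + q + r) = p + q + r + (p + r) := by ring
  have f6 : p + q + (p + q + r) = p + q + r + (p + q) := by ring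
  have g1 : q + r + (p + r) = p + q + r + r := by ring
  have g2 : q + r + (p + q) = p + q + r + q := by ring
  have g3 : p + r + (q + r) = p + q + r + r := by ring
  have g4 : p + r + (p + q) = p + q + r + p := by ring
  have g5 : p + q + (q + r) = p + q + r + q := by ring
  have g6 : p + q + (p + r) = p + q + r + p := by ring
  have k1 : q + (q + r) = q + r + q := by ring
  have k2 : r + (q + r) = q + r + r := by ring
  have k3 : p + (p + r) = p + r + p := by ring
  have k4 : r + (p + r) = p + r + r := by ring
  have k5 : p + (p + q) = p + q + p := by ring
  have k6 : q + (p + q) = p + q + q := by ring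
  simp only [zero_add] at h0
  rw [f1, e1, k3, k5] at h1
  rw [f2, e7, k1, e2, k6] at h2
  rw [f3, e8, k2, e9, k4, e3] at h3
  rw [f4, e4, g1, g2] at h4
  rw [f5, e5, g3, g4] at h5
  rw [f6, g5, g6] at h6
  set N := y (p + q + r)
  set A := y (p + q + r + p)
  set B := y (p + q + r + q)
  set C := y (p + q + r + r)
  refine ⟨a^2*A*y (p+r)*y (p+q)*y (q+r+(q+r)) + b^2*B*y (q+r)*y (p+q)*y (p+r+(p+r))
    + c^2*C*y (q+r)*y (p+r)*y (p+q+(p+q)) + A*B*C*y 0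
    - (a^2*y (q+r)*B*C*y (p+p) + b^2*y (p+r)*A*C*y (q+q) + c^2*y (p+q)*A*B*y (r+r)), ?_⟩
  linear_combination (a*A*y (p+r)*y (p+q))*h4 + (b*B*y (q+r)*y (p+q))*h5
    + (c*C*y (q+r)*y (p+r))*h6 - (A*B*C)*h0 - (a*y (q+r)*B*C)*h1 - (b*y (p+r)*A*C)*h2
    - (c*y (p+q)*A*B)*h3

/-- the linear solution -/
lemma exists_psi (p q r : ℕ) (hr : 0 < r) (hpq : p ≠ q) :
    ∃ ψ : Lx (p + q + r) →+* PowerSeries ℚ,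
      (∀ i : Fin (p + q + r), ψ (gen _ (Sum.inl i)) =
        PowerSeries.X + PowerSeries.C ((i : ℚ) - ((p + q + r : ℕ) : ℚ))) ∧
      ∀ k, Rec p q r (ψ (gen _ (Sum.inr 0))) (ψ (gen _ (Sum.inr 1))) (ψ (gen _ (Sum.inr 2)))
        (fun i => PowerSeries.X + PowerSeries.C ((i : ℚ) - ((p + q + r : ℕ) : ℚ))) k := by
  have hD : (q : ℚ) - p ≠ 0 := by
    refine sub_ne_zero.2 ?_
    exact_mod_cast hpq.symm
  have hr0 : (r : ℚ) ≠ 0 := by positivity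
  obtain ⟨a, b, h1, h2⟩ : ∃ a b : ℚ, a + b = 1 ∧ a * (p * (q + r)) + b * (q * (p + r)) = 0 := by
    refine ⟨q * (p + r) / (r * (q - p)), -(p * (q + r)) / (r * (q - p)), ?_, ?_⟩
    · field_simp
      ring
    · field_simp
      ring
  obtain ⟨ψ, hψ⟩ := exists_lift (n := p + q + r) (R := PowerSeries ℚ)
    (Sum.elim (fun i => PowerSeries.X + PowerSeries.C ((i : ℚ) - ((p + q + r : ℕ) : ℚ)))
      ![PowerSeries.C a, PowerSeries.C b, 0]) (by
      intro i
      rw [PowerSeries.isUnit_iff_constantCoeff]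
      simp only [Sum.elim_inl, map_add, PowerSeries.constantCoeff_X, PowerSeries.constantCoeff_C,
        zero_add]
      rw [isUnit_iff_ne_zero, sub_ne_zero]
      exact_mod_cast i.2.ne)
  refine ⟨ψ, fun i => hψ _, fun k => ?_⟩
  have hα := hψ (Sum.inr 0)
  have hβ := hψ (Sum.inr 1)
  have hγ := hψ (Sum.inr 2)
  simp only [Sum.elim_inr, Matrix.cons_val] at hα hβ hγ
  rw [hα, hβ, hγ]
  unfold Rec
  have H1 := congrArg (PowerSeries.C (R := ℚ)) h1
  have H2 := congrArg (PowerSeries.C (R := ℚ)) h2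
  simp only [map_add, map_mul, map_one, map_zero, map_natCast, map_sub, Nat.cast_add] at H1 H2 ⊢
  have key : ∀ t a b p q r : PowerSeries ℚ, a + b = 1 →
      a * (p * (q + r)) + b * (q * (p + r)) = 0 →
      t * (t + (p + q + r)) = a * (t + p) * (t + (q + r)) + b * (t + q) * (t + (p + r)) := by
    intro t a b p q r h1 h2
    linear_combination (-(t * (t + (p + q + r)))) * h1 - h2
  have := key (PowerSeries.X + ((k : PowerSeries ℚ) - ((p : PowerSeries ℚ) + (q : PowerSeries ℚ) + (r : PowerSeries ℚ)))) _ _ _ _ _ H1 H2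
  linear_combination this

lemma step {p q r : ℕ} (hp : 0 < p) (hq : 0 < q) (hr : 0 < r) (hpq : p ≠ q)
    {F : Type*} [Field F] (j : Lx (p + q + r) →+* F) (hj : Function.Injective j)
    (y : ℕ → F) (m : ℕ) (hm : 2 * (p + q + r) < m)
    (hrec : ∀ k, k + (p + q + r) ≤ m → Rec p q r (j (gen _ (Sum.inr 0))) (j (gen _ (Sum.inr 1)))
      (j (gen _ (Sum.inr 2))) y k)
    (Y : ℕ → Lx (p + q + r)) (hY : ∀ i, i < m → j (Y i) = y i)
    (hY0 : ∀ i : Fin (p + q + r), Y i = gen _ (Sum.inl i))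
    (hne : ∀ i, i < m → Y i ≠ 0) : ∃ Z, j Z = y m := by
  have hyne : ∀ i, i < m → y i ≠ 0 := fun i hi => by
    rw [← hY i hi]; exact (map_ne_zero_iff j hj).2 (hne i hi)
  have hrecY : ∀ k, k + (p + q + r) < m → Rec p q r (gen _ (Sum.inr 0)) (gen _ (Sum.inr 1))
      (gen _ (Sum.inr 2)) Y k := by
    intro k hk
    have := hrec k (by omega)
    unfold Rec at *
    apply hj
    simp only [map_add, map_mul]
    rw [hY _ (by omega), hY _ (by omega), hY _ (by omega), hY _ (by omega), hY _ (by omega),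
      hY _ (by omega), hY _ (by omega), hY _ (by omega), this]
  -- the shift
  have shift : ∀ s, 0 < s → s ≤ p + q + r + 1 → ∃ (k : ℕ) (g : Lx (p + q + r)),
      y m * j (∏ i : Fin (p + q + r), Y (s + i)) ^ k = j g := by
    intro s hs0 hs
    obtain ⟨σ, hσ⟩ := exists_lift (n := p + q + r) (R := F)
      (Sum.elim (fun i => y (s + i)) (fun t => j (gen _ (Sum.inr t)))) (by
        intro i
        exact (isUnit_iff_ne_zero.2 (hyne _ (by have := i.2; omega))))
    have h1 : ∀ i, i < m - s → σ (Y i) = y (s + i) := by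
      apply Rec.unique hp hq hr (m - s) (a := σ (gen _ (Sum.inr 0))) (b := σ (gen _ (Sum.inr 1)))
        (c := σ (gen _ (Sum.inr 2))) (y := fun i => σ (Y i)) (z := fun i => y (s + i))
      · intro k hk
        exact (hrecY k (by omega)).map σ
      · intro k hk
        have := hrec (s + k) (by omega)
        unfold Rec at *
        simp only [hσ, Sum.elim_inr, ← add_assoc] at this ⊢
        exact this
      · intro k hk
        exact hyne _ (by omega)
      · intro i hi
        have := hY0 ⟨i, hi⟩
        simp only at this
        rw [this, hσ]
        rfl
    have h2 : σ (Y (m - s)) = y m := by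
      obtain ⟨k, hk⟩ : ∃ k, m - s = k + (p + q + r) := ⟨m - s - (p + q + r), by omega⟩
      have hm' : m = s + k + (p + q + r) := by omega
      have e1 := (hrecY k (by omega)).map σ
      have e2 := hrec (s + k) (by omega)
      unfold Rec at e1 e2
      simp only at e1
      rw [h1 k (by omega), h1 (k + p) (by omega), h1 (k + q) (by omega), h1 (k + r) (by omega),
        h1 (k + (q + r)) (by omega), h1 (k + (p + r)) (by omega), h1 (k + (p + q)) (by omega)] at e1
      simp only [hσ, Sum.elim_inr, ← add_assoc] at e1 e2
      rw [← e2] at e1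
      rw [hk, hm']
      have := mul_left_cancel₀ (hyne (s + k) (by omega)) e1
      simpa only [← add_assoc] using this
    obtain ⟨k, g, hg⟩ := exists_den (Y (m - s))
    let θ : Sx (p + q + r) →+* Lx (p + q + r) := eval₂Hom (Int.castRingHom _)
      (Sum.elim (fun i => Y (s + i)) (fun t => gen _ (Sum.inr t)))
    have h3 : σ.comp (algebraMap _ _) = j.comp θ := by
      apply MvPolynomial.ringHom_ext
      · intro t; simp
      · intro t
        have := hσ t
        unfold gen at this
        rw [RingHom.comp_apply, this, RingHom.comp_apply]
        rcases t with i | t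
        · simp [θ, hY (s + i) (by have := i.2; omega)]
        · simp [θ, gen]
    refine ⟨k, θ g, ?_⟩
    have h4 := congrArg σ hg
    rw [map_mul, map_pow, map_prod, h2] at h4
    simp only [hσ, Sum.elim_inl] at h4
    rw [← RingHom.comp_apply, h3, RingHom.comp_apply] at h4
    rw [← h4, map_prod]
    rw [Finset.prod_congr rfl fun (i : Fin (p + q + r)) _ => hY (s + i) (by have := i.2; omega)]
  -- the special solution
  obtain ⟨ψ, hψ0, hψ⟩ := exists_psi p q r hr hpq
  have hψY : ∀ i, i < m → ψ (Y i) =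
      PowerSeries.X + PowerSeries.C ((i : ℚ) - ((p + q + r : ℕ) : ℚ)) := by
    apply Rec.unique hp hq hr m (y := fun i => ψ (Y i)) (fun k hk => (hrecY k hk).map ψ)
      (fun k _ => hψ k)
    · intro k _ h
      have := congrArg (PowerSeries.coeff 1) h
      rw [map_add, PowerSeries.coeff_one_X, PowerSeries.coeff_C, if_neg one_ne_zero] at this
      simp at this
    · intro i hi
      have := hY0 ⟨i, hi⟩
      simp only at this
      simp only [this, hψ0]
  have hcc : ∀ i, i < m → PowerSeries.constantCoeff (ψ (Y i)) =
      (i : ℚ) - ((p + q + r : ℕ) : ℚ) := by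
    intro i hi
    rw [hψY i hi]; simp
  have hunit : ∀ i, i < p + q + r → IsUnit (Y i) := fun i hi => by
    have := hY0 ⟨i, hi⟩
    simp only at this
    rw [this]; exact isUnit_gen _
  have hccN : PowerSeries.constantCoeff (ψ (Y (p + q + r))) = 0 := by
    rw [hcc _ (by omega), sub_self]
  have hN : Prime (Y (p + q + r)) := by
    have h0 := hrecY 0 (by omega)
    have hnu : ¬ IsUnit (Y (p + q + r)) := by
      intro h
      have := (h.map ψ).map PowerSeries.constantCoeff
      rw [hccN] at this
      exact not_isUnit_zero this
    have hassoc : Associated (Y (p + q + r)) (Y 0 * Y (p + q + r)) := by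
      obtain ⟨u, hu⟩ := hunit 0 (by omega)
      exact ⟨u, by rw [hu, mul_comm]⟩
    refine hassoc.symm.prime ?_
    unfold Rec at h0
    simp only [zero_add] at h0
    refine prime_lin ⟨p, by omega⟩ ⟨q + r, by omega⟩ ⟨q, by omega⟩ ⟨p + r, by omega⟩ ⟨r, by omega⟩
      ⟨p + q, by omega⟩ _ ?_ ?_ ?_
    · rw [h0]
      simp only [← hY0]
    · exact mul_ne_zero (hne _ (by omega)) (hne _ (by omega))
    · intro h; exact hnu (isUnit_of_mul_isUnit_right h)
  obtain ⟨k, g, hg⟩ := shift 1 one_pos (by omega)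
  obtain ⟨l, h, hh⟩ := shift (p + q + r + 1) (by omega) le_rfl
  have hH : ¬ Y (p + q + r) ∣ (∏ i : Fin (p + q + r), Y (p + q + r + 1 + i)) ^ l := by
    intro hd
    have := hN.dvd_of_dvd_pow hd
    obtain ⟨i, -, hi⟩ := (Prime.dvd_finsetProd_iff hN _).1 this
    obtain ⟨c, hc⟩ := hi
    have h5 := hcc (p + q + r + 1 + i) (by have := i.2; omega)
    rw [hc, map_mul, map_mul, hccN, zero_mul] at h5
    push_cast at h5
    have : (0 : ℚ) ≤ ((i : ℕ) : ℚ) := by positivity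
    linarith
  -- the first product is a unit times the prime
  obtain ⟨U, hU⟩ : ∃ U : (Lx (p + q + r))ˣ,
      (∏ i : Fin (p + q + r), Y (1 + i)) = U * Y (p + q + r) := by
    have e : ∏ i : Fin (p + q + r), Y (1 + i) = ∏ i ∈ Finset.range (p + q + r), Y (1 + i) :=
      Fin.prod_univ_eq_prod_range (fun i => Y (1 + i)) _
    obtain ⟨t, ht⟩ : ∃ t, p + q + r = t + 1 := ⟨p + q + r - 1, by omega⟩
    have hu : IsUnit (∏ i ∈ Finset.range t, Y (1 + i)) := by
      rw [IsUnit.prod_iff]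
      intro i hi
      rw [Finset.mem_range] at hi
      exact hunit _ (by omega)
    obtain ⟨U, hU⟩ := hu
    refine ⟨U, ?_⟩
    rw [e, hU]
    have e2 : Finset.range (p + q + r) = Finset.range (t + 1) := by rw [ht]
    have e3 : Y (p + q + r) = Y (1 + t) := congrArg Y (by omega)
    rw [e2, e3, Finset.prod_range_succ]
  rw [hU] at hg
  have hdv : Y (p + q + r) ^ k ∣ g * (∏ i : Fin (p + q + r), Y (p + q + r + 1 + i)) ^ l := by
    refine ⟨h * U ^ k, ?_⟩
    apply hj
    simp only [map_mul, map_pow] at *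
    rw [← hg, ← hh]
    ring
  obtain ⟨z, hz⟩ := hN.pow_dvd_of_dvd_mul_right k hH hdv
  refine ⟨z * (↑U⁻¹ : Lx (p + q + r)) ^ k, ?_⟩
  have hyn : j (Y (p + q + r)) ^ k ≠ 0 := pow_ne_zero _ ((map_ne_zero_iff j hj).2 (hne _ (by omega)))
  have hUU : j (↑U⁻¹ : Lx (p + q + r)) ^ k * j U ^ k = 1 := by
    rw [← mul_pow, ← map_mul, Units.inv_mul, map_one, one_pow]
  apply mul_right_cancel₀ hyn
  rw [hz] at hg
  simp only [map_mul, map_pow] at *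
  calc _ = (j (Y (p + q + r)) ^ k * j z) * j (↑U⁻¹ : Lx (p + q + r)) ^ k := by ring
    _ = y m * j (Y (p + q + r)) ^ k * (j (↑U⁻¹ : Lx (p + q + r)) ^ k * j U ^ k) := by
      rw [← hg]; ring
    _ = _ := by rw [hUU, mul_one]

theorem main {p q r : ℕ} (hp : 0 < p) (hq : 0 < q) (hr : 0 < r) (hpq : p ≠ q)
    {F : Type*} [Field F] (j : Lx (p + q + r) →+* F) (hj : Function.Injective j)
    (y : ℕ → F) (hy0 : ∀ i : Fin (p + q + r), y i = j (gen _ (Sum.inl i)))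
    (hrec : ∀ k, y k ≠ 0 → Rec p q r (j (gen _ (Sum.inr 0))) (j (gen _ (Sum.inr 1)))
      (j (gen _ (Sum.inr 2))) y k)
    (e : Lx (p + q + r) →+* ℚ) (he : ∀ s, e (gen _ s) = 1) :
    ∀ m, ∃ Z, j Z = y m ∧ 0 < e Z := by
  intro m
  induction m using Nat.strong_induction_on with
  | _ m ih =>
  by_cases hmn : m < p + q + r
  · exact ⟨_, (hy0 ⟨m, hmn⟩).symm, by rw [he]; exact one_pos⟩
  obtain ⟨Y, hY'⟩ : ∃ Y : ℕ → Lx (p + q + r), ∀ i, i < m → j (Y i) = y i ∧ 0 < e (Y i) := by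
    choose f hf using ih
    refine ⟨fun i => if h : i < m then f i h else 0, fun i hi => ?_⟩
    simp only [hi, dif_pos]
    exact hf i hi
  have hY := fun i hi => (hY' i hi).1
  have hpos := fun i hi => (hY' i hi).2
  have hne : ∀ i, i < m → Y i ≠ 0 := by
    intro i hi h
    have := hpos i hi
    rw [h, map_zero] at this
    exact lt_irrefl _ this
  have hyne : ∀ i, i < m → y i ≠ 0 := fun i hi => by
    rw [← hY i hi]; exact (map_ne_zero_iff j hj).2 (hne i hi)
  have hY0 : ∀ i : Fin (p + q + r), Y i = gen _ (Sum.inl i) := fun i => by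
    apply hj
    rw [hY _ (by have := i.2; omega), hy0]
  have hunit : ∀ i, i < p + q + r → IsUnit (Y i) := fun i hi => by
    have := hY0 ⟨i, hi⟩
    simp only at this
    rw [this]; exact isUnit_gen _
  obtain ⟨k, rfl⟩ : ∃ k, m = k + (p + q + r) := ⟨m - (p + q + r), by omega⟩
  have hk := hrec k (hyne k (by omega))
  unfold Rec at hk
  rw [← hY k (by omega), ← hY (k + p) (by omega), ← hY (k + q) (by omega), ← hY (k + r) (by omega),
    ← hY (k + (q + r)) (by omega), ← hY (k + (p + r)) (by omega), ← hY (k + (p + q)) (by omega)] at hk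
  have hjk : j (Y k) ≠ 0 := (map_ne_zero_iff j hj).2 (hne k (by omega))
  have hex : ∃ Z, j Z = y (k + (p + q + r)) := by
    rcases lt_trichotomy k (p + q + r) with hlt | heq | hgt
    · obtain ⟨u, hu⟩ := (hunit k hlt).exists_right_inv
      have hu' : j (Y k) * j u = 1 := by rw [← map_mul, hu, map_one]
      refine ⟨(gen _ (Sum.inr 0) * Y (k + p) * Y (k + (q + r))
        + gen _ (Sum.inr 1) * Y (k + q) * Y (k + (p + r))
        + gen _ (Sum.inr 2) * Y (k + r) * Y (k + (p + q))) * u, ?_⟩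
      simp only [map_mul, map_add]
      rw [← hk]
      linear_combination y (k + (p + q + r)) * hu'
    · subst heq
      have hrecY : ∀ k, k < (p + q + r) → Rec p q r (gen _ (Sum.inr 0)) (gen _ (Sum.inr 1))
          (gen _ (Sum.inr 2)) Y k := by
        intro k hk
        have := hrec k (hyne k (by omega))
        unfold Rec at *
        apply hj
        simp only [map_add, map_mul]
        rw [hY _ (by omega), hY _ (by omega), hY _ (by omega), hY _ (by omega), hY _ (by omega),
          hY _ (by omega), hY _ (by omega), hY _ (by omega), this]
      obtain ⟨Z, hZ⟩ := dvd_two hrecY hunit hp hq hr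
      refine ⟨Z, ?_⟩
      apply mul_left_cancel₀ hjk
      rw [hk, ← map_mul, ← hZ]
      simp only [map_add, map_mul]
    · exact step hp hq hr hpq j hj y _ (by omega) (fun i hi => hrec i (hyne i (by omega))) Y hY
        hY0 hne
  obtain ⟨Z, hZ⟩ := hex
  refine ⟨Z, hZ, ?_⟩
  rw [← hZ] at hk
  have hk2 : Y k * Z = gen _ (Sum.inr 0) * Y (k + p) * Y (k + (q + r))
        + gen _ (Sum.inr 1) * Y (k + q) * Y (k + (p + r))
        + gen _ (Sum.inr 2) * Y (k + r) * Y (k + (p + q)) := by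
    apply hj
    simpa only [map_add, map_mul] using hk
  have hk3 := congrArg e hk2
  simp only [map_add, map_mul, he, one_mul] at hk3
  have p0 := hpos k (by omega)
  have p1 := hpos (k + p) (by omega)
  have p2 := hpos (k + (q + r)) (by omega)
  have p3 := hpos (k + q) (by omega)
  have p4 := hpos (k + (p + r)) (by omega)
  have p5 := hpos (k + r) (by omega)
  have p6 := hpos (k + (p + q)) (by omega)
  have : 0 < e (Y k) * e Z := by rw [hk3]; positivity
  exact (mul_pos_iff_of_pos_left p0).1 this

end GaleRobinson

/-- The three-term Gale–Robinson recurrence exhibits the Laurent phenomenon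
over ℤ[α,β,γ]. -/
theorem gale_robinson_laurent
    (p q r : ℕ) (hp : 0 < p) (hq : 0 < q) (hr : 0 < r)
    (hpq : p ≠ q) (hpr : p ≠ r) (hqr : q ≠ r)
    (n : ℕ) (hn : n = p + q + r)
    (F : Type*) [Field F] [Algebra (MvPolynomial (Fin n ⊕ Fin 3) ℤ) F]
    [IsFractionRing (MvPolynomial (Fin n ⊕ Fin 3) ℤ) F]
    (x : Fin n ⊕ Fin 3 → F)
    (hx : ∀ s, x s = algebraMap (MvPolynomial (Fin n ⊕ Fin 3) ℤ) F (X s))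
    (α β γ : F) (hα : α = x (Sum.inr 0)) (hβ : β = x (Sum.inr 1)) (hγ : γ = x (Sum.inr 2))
    (y : ℕ → F)
    (hinit : ∀ i : Fin n, y i = x (Sum.inl i))
    (hrec : ∀ k : ℕ,
      y (k + n) = (α * y (k + p) * y (k + (n - p)) + β * y (k + q) * y (k + (n - q))
        + γ * y (k + r) * y (k + (n - r))) / y k) :
    ∀ m : ℕ, y m ∈ Algebra.adjoin ℤ
      (Set.range (fun i : Fin n => x (Sum.inl i)) ∪
       Set.range (fun i : Fin n => (x (Sum.inl i))⁻¹) ∪ {α, β, γ}) := by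
  classical
  subst hn
  have hS : Function.Injective (algebraMap (MvPolynomial (Fin (p + q + r) ⊕ Fin 3) ℤ) F) :=
    IsFractionRing.injective _ _
  have hxne : ∀ s, x s ≠ 0 := fun s => by
    rw [hx, Ne, map_eq_zero_iff _ hS]
    exact X_ne_zero s
  obtain ⟨j, hj⟩ := GaleRobinson.exists_lift x (fun i => isUnit_iff_ne_zero.2 (hxne _))
  have hjS : ∀ g, j (algebraMap (GaleRobinson.Sx (p + q + r)) _ g) = algebraMap _ F g := by
    intro g
    have : j.comp (algebraMap (GaleRobinson.Sx (p + q + r)) _) = algebraMap _ F := by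
      apply MvPolynomial.ringHom_ext
      · intro t; simp
      · intro s
        exact (hj s).trans (hx s)
    exact congrArg (fun f => f g) this
  have hjinj : Function.Injective j := by
    rw [injective_iff_map_eq_zero]
    intro l hl
    obtain ⟨k, g, hg⟩ := GaleRobinson.exists_den l
    have h1 := congrArg j hg
    rw [map_mul, hl, zero_mul, hjS] at h1
    have h2 : g = 0 := hS (by rw [← h1, map_zero])
    rw [h2, map_zero] at hg
    refine (mul_eq_zero.1 hg).resolve_right (pow_ne_zero _ ?_)
    exact Finset.prod_ne_zero_iff.2 fun i _ => (GaleRobinson.isUnit_gen i).ne_zero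
  obtain ⟨e, he⟩ := GaleRobinson.exists_lift (n := p + q + r) (R := ℚ) (fun _ => 1)
    (fun i => isUnit_one)
  intro m
  obtain ⟨Z, hZ, -⟩ := GaleRobinson.main hp hq hr hpq j hjinj y
    (fun i => by rw [hinit, hj]) (by
      intro k hk
      have h := hrec k
      unfold GaleRobinson.Rec
      rw [hj, hj, hj, ← hα, ← hβ, ← hγ, h, mul_div_cancel₀ _ hk]
      have e1 : p + q + r - p = q + r := by omega
      have e2 : p + q + r - q = p + r := by omega
      have e3 : p + q + r - r = p + q := by omega
      rw [e1, e2, e3]) e he m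
  rw [← hZ]
  obtain ⟨k, g, hg⟩ := GaleRobinson.exists_den Z
  have h1 := congrArg j hg
  rw [map_mul, map_pow, map_prod, hjS] at h1
  simp only [hj] at h1
  have hMne : (∏ i : Fin (p + q + r), x (Sum.inl i)) ^ k ≠ 0 :=
    pow_ne_zero _ (Finset.prod_ne_zero_iff.2 fun i _ => hxne _)
  have h2 : j Z = algebraMap _ F g * (∏ i : Fin (p + q + r), (x (Sum.inl i))⁻¹) ^ k := by
    rw [← h1, Finset.prod_inv_distrib, inv_pow, mul_assoc, mul_inv_cancel₀ hMne, mul_one]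
  rw [h2]
  refine mul_mem ?_ (Subalgebra.pow_mem _ (Subalgebra.prod_mem _ fun i _ => Algebra.subset_adjoin ?_) k)
  · have hmem : ∀ g : MvPolynomial (Fin (p + q + r) ⊕ Fin 3) ℤ, algebraMap _ F g ∈
        Algebra.adjoin ℤ (Set.range (fun i : Fin (p + q + r) => x (Sum.inl i)) ∪
        Set.range (fun i : Fin (p + q + r) => (x (Sum.inl i))⁻¹) ∪ {α, β, γ}) := by
      intro g
      induction g using MvPolynomial.induction_on with
      | C a =>
        have : algebraMap (MvPolynomial (Fin (p + q + r) ⊕ Fin 3) ℤ) F (C a) = (a : F) := by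
          simp
        rw [this]
        exact intCast_mem _ a
      | add f g hf hg => rw [map_add]; exact add_mem hf hg
      | mul_X f s hf =>
        rw [map_mul, ← hx]
        refine mul_mem hf (Algebra.subset_adjoin ?_)
        rcases s with i | s
        · exact Or.inl (Or.inl ⟨i, rfl⟩)
        · right
          fin_cases s
          · simp [hα]
          · simp [hβ]
          · simp [hγ]
    exact hmem g
  · exact Or.inl (Or.inr ⟨i, rfl⟩)
end

section
/- Let p,q,r be distinct positive integers, n = p+q+r, and let (y_k) be the sequence with y₀ = ⋯ = y_{n−1} = 1 satisfying y_{k+n} y_k = α y_{k+p} y_{k+n−p} + β y_{k+q} y_{k+n−q} + γ y_{k+r} y_{k+n−r}, where α,β,γ are positive integers. Then every y_k is an integer. -/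
/-- Confinement: the key divisibility identity. -/
lemma gr_confine {L : Type*} [CommRing L] (a b c : L)
    (f000 f100 f010 f001 f110 f101 f011 f111 f200 f020 f002 f210 f201 f120 f021 f102 f012
      f220 f202 f022 f211 f121 f112 f221 f212 f122 : L)
    (h0 : f111 * f000 = a * f100 * f011 + b * f010 * f101 + c * f001 * f110)
    (h1 : f211 * f100 = a * f200 * f111 + b * f110 * f201 + c * f101 * f210)
    (h2 : f121 * f010 = a * f110 * f021 + b * f020 * f111 + c * f011 * f120)
    (h3 : f112 * f001 = a * f101 * f012 + b * f011 * f102 + c * f002 * f111)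
    (h4 : f122 * f011 = a * f111 * f022 + b * f021 * f112 + c * f012 * f121)
    (h5 : f212 * f101 = a * f201 * f112 + b * f111 * f202 + c * f102 * f211)
    (h6 : f221 * f110 = a * f210 * f121 + b * f120 * f211 + c * f111 * f220) :
    f111 ∣ (a * f211 * f122 + b * f121 * f212 + c * f112 * f221) * (f011 * f101 * f110) := by
  refine ⟨f211 * f121 * f112 * f000 + a * f211 * f101 * f110 * a * f022
    + b * f121 * f011 * f110 * b * f202 + c * f112 * f011 * f101 * c * f220
    - f112 * f121 * a * f011 * a * f200 - f211 * f112 * b * f101 * b * f020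
    - f211 * f121 * c * f110 * c * f002, ?_⟩
  linear_combination a * f211 * f101 * f110 * h4 + b * f121 * f011 * f110 * h5
    + c * f112 * f011 * f101 * h6 - f112 * f121 * a * f011 * h1
    - f211 * f112 * b * f101 * h2 - f211 * f121 * c * f110 * h3 - f211 * f121 * f112 * h0

/-- If `w` lies in `L[1/(uπ)]` and in `L[1/Q]` with `π` prime not dividing `Q`, then `w ∈ L`. -/
lemma gr_inter {L K : Type*} [CommRing L] [IsDomain L] [Field K] [Algebra L K]
    [IsFractionRing L K] (π u Q : L) (hπ : Prime π) (hu : IsUnit u) (hQ : ¬ π ∣ Q)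
    (w : K) (N M : ℕ) (A B : L) (hA : w * algebraMap L K (u * π) ^ N = algebraMap L K A)
    (hB : w * algebraMap L K Q ^ M = algebraMap L K B) : ∃ z : L, algebraMap L K z = w := by
  have hinj := IsFractionRing.injective L K
  have h1 : Q ^ M * A = (u * π) ^ N * B := by
    apply hinj
    simp only [map_mul (algebraMap L K) (Q ^ M), map_mul (algebraMap L K) ((u * π) ^ N), map_pow]
    rw [← hA, ← hB]; ring
  have h2 : π ^ N ∣ Q ^ M * A := by
    rw [h1, mul_pow]
    exact Dvd.dvd.mul_right (Dvd.intro_left _ rfl) _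
  have h3 : π ^ N ∣ A := by
    refine hπ.pow_dvd_of_dvd_mul_left N ?_ h2
    exact fun h => hQ (hπ.dvd_of_dvd_pow h)
  have h4 : (u * π) ^ N ∣ A := by
    rw [mul_pow]
    exact ((hu.pow N).mul_left_dvd).2 h3
  obtain ⟨z, hz⟩ := h4
  refine ⟨z, ?_⟩
  have hne : algebraMap L K (u * π) ^ N ≠ 0 := by
    apply pow_ne_zero
    rw [Ne, map_eq_zero_iff _ hinj]
    exact mul_ne_zero hu.ne_zero hπ.ne_zero
  apply mul_right_cancel₀ hne
  rw [hA, hz, map_mul (algebraMap L K) ((u * π) ^ N), map_pow]; ring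

/-- Existence of the generic Laurent ring. -/
lemma gr_ring (n : ℕ) : ∃ (L : Type) (_ : CommRing L) (_ : IsDomain L) (x : Fin n → L)
    (a b c : L), (∀ i, IsUnit (x i)) ∧
    (∀ i j k l s t, Prime (a * x i * x j + b * x k * x l + c * x s * x t)) ∧
    (∀ (K : Type) (_ : CommRing K) (Y : Fin n → K) (a' b' c' : K), (∀ i, IsUnit (Y i)) →
      ∃ φ : L →+* K, (∀ i, φ (x i) = Y i) ∧ φ a = a' ∧ φ b = b' ∧ φ c = c') ∧
    (∀ z : L, ∃ N : ℕ, z * (∏ i, x i) ^ N ∈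
      Subring.closure (insert a (insert b (insert c (Set.range x))))) := by
  classical
  let A := MvPolynomial (Fin n ⊕ Bool) ℤ
  let s : A := ∏ i : Fin n, MvPolynomial.X (Sum.inl i)
  have hs : s ≠ 0 := Finset.prod_ne_zero_iff.2 fun i _ => MvPolynomial.X_ne_zero _
  let R := Localization.Away s
  have hdom : IsDomain R := IsLocalization.isDomain_localization (M := Submonoid.powers s)
    (powers_le_nonZeroDivisors_of_noZeroDivisors hs)
  let ι : A →+* R := algebraMap A R
  have hsu : IsUnit (ι s) := IsLocalization.Away.algebraMap_isUnit s
  have hxu : ∀ i : Fin n, IsUnit (ι (MvPolynomial.X (Sum.inl i))) := by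
    intro i
    refine isUnit_of_dvd_unit ?_ hsu
    exact map_dvd ι (Finset.dvd_prod_of_mem _ (Finset.mem_univ i))
  let x : Fin n → Polynomial R := fun i => Polynomial.C (ι (MvPolynomial.X (Sum.inl i)))
  refine ⟨Polynomial R, inferInstance, inferInstance, x, Polynomial.X,
    Polynomial.C (ι (MvPolynomial.X (Sum.inr true))),
    Polynomial.C (ι (MvPolynomial.X (Sum.inr false))),
    fun i => (hxu i).map Polynomial.C, ?_, ?_, ?_⟩
  · intro i j k l s' t
    obtain ⟨u, hu⟩ := (hxu i).mul (hxu j)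
    set d : R := ι (MvPolynomial.X (Sum.inr true)) * ι (MvPolynomial.X (Sum.inl k)) *
      ι (MvPolynomial.X (Sum.inl l)) + ι (MvPolynomial.X (Sum.inr false)) *
      ι (MvPolynomial.X (Sum.inl s')) * ι (MvPolynomial.X (Sum.inl t)) with hd
    have h : Associated (Polynomial.X - Polynomial.C (-(d * ((u⁻¹ : Rˣ) : R))))
        (Polynomial.X * x i * x j + Polynomial.C (ι (MvPolynomial.X (Sum.inr true))) * x k * x l
          + Polynomial.C (ι (MvPolynomial.X (Sum.inr false))) * x s' * x t) := by
      refine ⟨Units.map Polynomial.C.toMonoidHom u, ?_⟩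
      have e1 : ((Units.map (Polynomial.C : R →+* Polynomial R).toMonoidHom u :
        (Polynomial R)ˣ) : Polynomial R) = Polynomial.C (u : R) := rfl
      have e2 : d * ((u⁻¹ : Rˣ) : R) * u = d := by simp
      have e3 : Polynomial.C (d * ((u⁻¹ : Rˣ) : R)) * Polynomial.C (u : R) = Polynomial.C d := by
        rw [← Polynomial.C_mul, e2]
      rw [e1, Polynomial.C_neg, sub_neg_eq_add, add_mul, e3, hu, hd]
      simp only [x, Polynomial.C_add, Polynomial.C_mul]
      ring
    exact h.prime (Polynomial.prime_X_sub_C _)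
  · intro K _ Y a' b' c' hY
    let ψ : A →+* K := MvPolynomial.eval₂Hom (Int.castRingHom K)
      (Sum.elim Y (fun t => if t then b' else c'))
    have hψX : ∀ v, ψ (MvPolynomial.X v) = Sum.elim Y (fun t => if t then b' else c') v :=
      fun v => MvPolynomial.eval₂_X _ _ v
    have hψ : IsUnit (ψ s) := by
      simp only [s, map_prod]
      rw [IsUnit.prod_univ_iff]
      intro i
      simpa [hψX] using hY i
    let θ : R →+* K := IsLocalization.Away.lift s hψ
    have hθ : ∀ t, θ (ι t) = ψ t := fun t => IsLocalization.Away.lift_eq s hψ t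
    refine ⟨Polynomial.eval₂RingHom θ a', ?_, ?_, ?_, ?_⟩
    · intro i; simp [x, hθ, hψX]
    · simp
    · simp [hθ, hψX]
    · simp [hθ, hψX]
  · have hprod : ∏ i, x i = Polynomial.C (ι s) := by simp [x, s, map_prod]
    rw [hprod]
    set S := Subring.closure (insert Polynomial.X
      (insert (Polynomial.C (ι (MvPolynomial.X (Sum.inr true))))
      (insert (Polynomial.C (ι (MvPolynomial.X (Sum.inr false)))) (Set.range x)))) with hS
    have hA : ∀ t : A, Polynomial.C (ι t) ∈ S := by
      intro t
      induction t using MvPolynomial.induction_on with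
      | C z =>
        have : Polynomial.C (ι (MvPolynomial.C z)) = ((z : ℤ) : Polynomial R) := by
          simp
        rw [this]; exact intCast_mem S z
      | add f g hf hg => rw [map_add, map_add]; exact add_mem hf hg
      | mul_X f v hf =>
        rw [map_mul, map_mul]
        refine mul_mem hf (Subring.subset_closure ?_)
        rcases v with i | (_ | _)
        · exact Or.inr (Or.inr (Or.inr ⟨i, rfl⟩))
        · exact Or.inr (Or.inr (Or.inl rfl))
        · exact Or.inr (Or.inl rfl)
    have hsS : Polynomial.C (ι s) ∈ S := hA s
    intro z
    induction z using Polynomial.induction_on' with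
    | add f g hf hg =>
      obtain ⟨N, hN⟩ := hf
      obtain ⟨M, hM⟩ := hg
      refine ⟨N + M, ?_⟩
      have : (f + g) * Polynomial.C (ι s) ^ (N + M) =
        f * Polynomial.C (ι s) ^ N * Polynomial.C (ι s) ^ M
        + g * Polynomial.C (ι s) ^ M * Polynomial.C (ι s) ^ N := by ring
      rw [this]
      exact add_mem (mul_mem hN (pow_mem hsS _)) (mul_mem hM (pow_mem hsS _))
    | monomial k t =>
      obtain ⟨N, u, hu⟩ := IsLocalization.Away.surj s t
      refine ⟨N, ?_⟩
      have : Polynomial.monomial k t * Polynomial.C (ι s) ^ N =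
          Polynomial.C (ι u) * Polynomial.X ^ k := by
        rw [← Polynomial.C_mul_X_pow_eq_monomial, show ι u = t * ι s ^ N from hu.symm, Polynomial.C_mul,
          Polynomial.C_pow]
        ring
      rw [this]
      have hX : Polynomial.X ∈ S := Subring.subset_closure (Or.inl rfl)
      exact mul_mem (hA u) (pow_mem hX _)

/-- A sequence satisfying the Gale-Robinson recurrence. -/
def GRRec {K : Type*} [CommRing K] (p q r : ℕ) (a b c : K) (y : ℕ → K) : Prop :=
  ∀ k, y (k + (p + q + r)) * y k = a * y (k + p) * y (k + (q + r))
    + b * y (k + q) * y (k + (p + r)) + c * y (k + r) * y (k + (p + q))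

lemma gr_transfer {L K K' : Type*} [CommRing L] [CommRing K] [CommRing K'] [IsDomain K']
    (e : L →+* K) (he : Function.Injective e) (φ : L →+* K') (p q r : ℕ)
    (hp : 0 < p) (hq : 0 < q) (hr : 0 < r) (a b c : L)
    (y : ℕ → K) (hy : GRRec p q r (e a) (e b) (e c) y) (Y : ℕ → K')
    (hY : GRRec p q r (φ a) (φ b) (φ c) Y) (hY0 : ∀ i, Y i ≠ 0) (m : ℕ) (z : ℕ → L)
    (hz : ∀ i < m, e (z i) = y i)
    (hφ : ∀ i < m, i < p + q + r → φ (z i) = Y i) : ∀ i < m, φ (z i) = Y i := by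
  intro i
  induction i using Nat.strong_induction_on with
  | _ i ih =>
    intro him
    by_cases hin : i < p + q + r
    · exact hφ i him hin
    · obtain ⟨j, rfl⟩ : ∃ j, i = j + (p + q + r) := ⟨i - (p + q + r), by omega⟩
      have h : z (j + (p + q + r)) * z j = a * z (j + p) * z (j + (q + r))
          + b * z (j + q) * z (j + (p + r)) + c * z (j + r) * z (j + (p + q)) := by
        apply he
        simp only [map_add, map_mul]
        rw [hz _ him, hz _ (by omega), hz _ (by omega), hz _ (by omega), hz _ (by omega),
          hz _ (by omega), hz _ (by omega), hz _ (by omega)]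
        exact hy j
      have h2 := congrArg φ h
      simp only [map_add, map_mul] at h2
      rw [ih j (by omega) (by omega), ih (j + p) (by omega) (by omega),
        ih (j + q) (by omega) (by omega), ih (j + r) (by omega) (by omega),
        ih (j + (q + r)) (by omega) (by omega), ih (j + (p + r)) (by omega) (by omega),
        ih (j + (p + q)) (by omega) (by omega), ← hY j] at h2
      exact mul_right_cancel₀ (hY0 j) h2

/-- The sequence with given initial values. -/
noncomputable def grSeq {K : Type*} [Field K] (p q r : ℕ) (hp : 0 < p) (hq : 0 < q) (hr : 0 < r)
    (a b c : K) (x : ℕ → K) (k : ℕ) : K :=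
  if h : k < p + q + r then x k else
    (a * grSeq p q r hp hq hr a b c x (k - (p + q + r) + p)
        * grSeq p q r hp hq hr a b c x (k - (p + q + r) + (q + r))
      + b * grSeq p q r hp hq hr a b c x (k - (p + q + r) + q)
        * grSeq p q r hp hq hr a b c x (k - (p + q + r) + (p + r))
      + c * grSeq p q r hp hq hr a b c x (k - (p + q + r) + r)
        * grSeq p q r hp hq hr a b c x (k - (p + q + r) + (p + q)))
      / grSeq p q r hp hq hr a b c x (k - (p + q + r))
termination_by k
decreasing_by all_goals omega

lemma gr_seq {K : Type*} [Field K] (p q r : ℕ) (hp : 0 < p) (hq : 0 < q) (hr : 0 < r)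
    (a b c : K) (x : ℕ → K) (Pos : K → Prop) (hadd : ∀ s t, Pos s → Pos t → Pos (s + t))
    (hmul : ∀ s t, Pos s → Pos t → Pos (s * t)) (hdiv : ∀ s t, Pos s → Pos t → Pos (s / t))
    (hne : ∀ s, Pos s → s ≠ 0) (ha : Pos a) (hb : Pos b) (hc : Pos c)
    (hx : ∀ i < p + q + r, Pos (x i)) :
    ∃ y : ℕ → K, (∀ i < p + q + r, y i = x i) ∧ (∀ i, y i ≠ 0) ∧ GRRec p q r a b c y := by
  have key : ∀ k, Pos (grSeq p q r hp hq hr a b c x k) := by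
    intro k
    induction k using Nat.strong_induction_on with
    | _ k ih =>
      rw [grSeq]
      split_ifs with h
      · exact hx k h
      · apply hdiv _ _ _ (ih _ (by omega))
        exact hadd _ _ (hadd _ _ (hmul _ _ (hmul _ _ ha (ih _ (by omega))) (ih _ (by omega)))
          (hmul _ _ (hmul _ _ hb (ih _ (by omega))) (ih _ (by omega))))
          (hmul _ _ (hmul _ _ hc (ih _ (by omega))) (ih _ (by omega)))
  refine ⟨grSeq p q r hp hq hr a b c x, ?_, fun i => hne _ (key i), ?_⟩
  · intro i hi
    rw [grSeq, dif_pos hi]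
  · intro k
    rw [grSeq, dif_neg (by omega), Nat.add_sub_cancel, div_mul_cancel₀ _ (hne _ (key k))]

/-- Positivity of the generic sequence. -/
lemma gr_generic {L : Type*} [CommRing L] [IsDomain L] {K : Type*} [Field K] [Algebra L K]
    [IsFractionRing L K] (p q r : ℕ) (hp : 0 < p) (hq : 0 < q) (hr : 0 < r)
    (a b c : L) (x : ℕ → L) (ρ : L →+* ℚ) (ha : ρ a = 1) (hb : ρ b = 1) (hc : ρ c = 1)
    (hx : ∀ i < p + q + r, ρ (x i) = 1) :
    ∃ y : ℕ → K, (∀ i < p + q + r, y i = algebraMap L K (x i)) ∧ (∀ i, y i ≠ 0) ∧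
      GRRec p q r (algebraMap L K a) (algebraMap L K b) (algebraMap L K c) y := by
  have hinj := IsFractionRing.injective L K
  have hne : ∀ v, 0 < ρ v → algebraMap L K v ≠ 0 := by
    intro v hv h
    rw [map_eq_zero_iff _ hinj] at h
    simp [h] at hv
  have hone : ∀ v, ρ v = 1 → ∃ u v' : L, 0 < ρ u ∧ 0 < ρ v' ∧
      algebraMap L K v = algebraMap L K u / algebraMap L K v' := by
    intro v hv
    exact ⟨v, 1, by simp [hv], by simp, by simp⟩
  refine gr_seq p q r hp hq hr _ _ _ _
    (fun s => ∃ u v : L, 0 < ρ u ∧ 0 < ρ v ∧ s = algebraMap L K u / algebraMap L K v)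
    ?_ ?_ ?_ ?_ (hone _ ha) (hone _ hb) (hone _ hc) (fun i hi => hone _ (hx i hi))
  · rintro _ _ ⟨u, v, hu, hv, rfl⟩ ⟨u', v', hu', hv', rfl⟩
    refine ⟨u * v' + v * u', v * v', ?_, ?_, ?_⟩
    · rw [map_add, map_mul, map_mul]; positivity
    · rw [map_mul]; positivity
    · rw [div_add_div _ _ (hne _ hv) (hne _ hv'), map_add, map_mul, map_mul, map_mul]
  · rintro _ _ ⟨u, v, hu, hv, rfl⟩ ⟨u', v', hu', hv', rfl⟩
    refine ⟨u * u', v * v', ?_, ?_, ?_⟩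
    · rw [map_mul]; positivity
    · rw [map_mul]; positivity
    · rw [div_mul_div_comm, map_mul, map_mul]
  · rintro _ _ ⟨u, v, hu, hv, rfl⟩ ⟨u', v', hu', hv', rfl⟩
    refine ⟨u * v', v * u', ?_, ?_, ?_⟩
    · rw [map_mul]; positivity
    · rw [map_mul]; positivity
    · rw [div_div_div_eq, map_mul, map_mul]
  · rintro _ ⟨u, v, hu, hv, rfl⟩
    exact div_ne_zero (hne _ hu) (hne _ hv)

/-- The rational specialisation `y k = k - n + ε`. -/
lemma gr_special (p q r : ℕ) (hr : 0 < r) (hpq : p ≠ q) :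
    ∃ a b c : PowerSeries ℚ, GRRec p q r a b c
      (fun k => PowerSeries.C ((k : ℚ) - ((p + q + r : ℕ) : ℚ)) + PowerSeries.X) := by
  have hpq' : (p : ℚ) - q ≠ 0 := sub_ne_zero.2 (by exact_mod_cast hpq)
  have hr' : (r : ℚ) ≠ 0 := by exact_mod_cast hr.ne'
  have hD : ((q : ℚ) - p) * r ≠ 0 := mul_ne_zero (fun h => hpq' (by linarith)) hr'
  refine ⟨PowerSeries.C ((q : ℚ) * (p + r) / ((q - p) * r)),
    PowerSeries.C (-(p : ℚ) * (q + r) / ((q - p) * r)), 0, ?_⟩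
  intro k
  set A : ℚ := (q : ℚ) * (p + r) / ((q - p) * r) with hA
  set B : ℚ := -(p : ℚ) * (q + r) / ((q - p) * r) with hB
  have h1 : A + B = 1 := by
    rw [hA, hB, ← add_div, div_eq_one_iff_eq hD]; ring
  have h2 : A * (p * (q + r)) + B * (q * (p + r)) = 0 := by
    rw [hA, hB]; ring
  have h1' := congrArg (PowerSeries.C (R := ℚ)) h1
  have h2' := congrArg (PowerSeries.C (R := ℚ)) h2
  push_cast
  simp only [map_add, map_mul, map_sub, map_one, map_zero] at h1' h2' ⊢
  set P : PowerSeries ℚ := PowerSeries.C (p : ℚ)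
  set Q : PowerSeries ℚ := PowerSeries.C (q : ℚ)
  set R : PowerSeries ℚ := PowerSeries.C (r : ℚ)
  set T : PowerSeries ℚ := PowerSeries.C (k : ℚ)
  set X : PowerSeries ℚ := PowerSeries.X
  linear_combination (-(T + X) * (T - (P + Q + R) + X)) * h1' - h2'

lemma gr_unit_div {L K : Type*} [CommRing L] [CommRing K] (e : L →+* K) (w : K) (u A : L)
    (hu : IsUnit u) (h : w * e u = e A) : ∃ z, e z = w := by
  obtain ⟨u, rfl⟩ := hu
  refine ⟨A * ((u⁻¹ : Lˣ) : L), ?_⟩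
  rw [map_mul, ← h, mul_assoc, ← map_mul]
  simp

lemma gr_laurent {L : Type} [CommRing L] [IsDomain L] {K : Type} [Field K] [Algebra L K]
    [IsFractionRing L K] (p q r : ℕ) (hp : 0 < p) (hq : 0 < q) (hr : 0 < r) (hpq : p ≠ q)
    (a b c : L) (x : ℕ → L) (hxu : ∀ i < p + q + r, IsUnit (x i))
    (hprime : Prime (a * x p * x (q + r) + b * x q * x (p + r) + c * x r * x (p + q)))
    (huniv : ∀ (K : Type) (_ : CommRing K) (Y : ℕ → K) (a' b' c' : K),
      (∀ i < p + q + r, IsUnit (Y i)) →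
      ∃ φ : L →+* K, (∀ i < p + q + r, φ (x i) = Y i) ∧ φ a = a' ∧ φ b = b' ∧ φ c = c')
    (hclear : ∀ z : L, ∃ N : ℕ, z * (∏ i ∈ Finset.range (p + q + r), x i) ^ N ∈
      Subring.closure (insert a (insert b (insert c (x '' {i | i < p + q + r})))))
    (y : ℕ → K) (hyx : ∀ i < p + q + r, y i = algebraMap L K (x i)) (hy0 : ∀ i, y i ≠ 0)
    (hrec : GRRec p q r (algebraMap L K a) (algebraMap L K b) (algebraMap L K c) y) :
    ∀ k, ∃ z, algebraMap L K z = y k := by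
  have hinj := IsFractionRing.injective L K
  set e := algebraMap L K with he
  intro k
  induction k using Nat.strong_induction_on with
  | _ k ih =>
  choose! z hz using ih
  have hzx : ∀ i < k, i < p + q + r → z i = x i := fun i h1 h2 =>
    hinj (by rw [hz i h1, hyx i h2])
  have hzu : ∀ i < k, i < p + q + r → IsUnit (z i) := fun i h1 h2 => by
    rw [hzx i h1 h2]; exact hxu i h2
  have hzrec : ∀ j, j + (p + q + r) < k →
      z (j + (p + q + r)) * z j = a * z (j + p) * z (j + (q + r))
          + b * z (j + q) * z (j + (p + r)) + c * z (j + r) * z (j + (p + q)) := by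
    intro j hj
    apply hinj
    simp only [map_add, map_mul]
    rw [hz _ hj, hz _ (by omega), hz _ (by omega), hz _ (by omega), hz _ (by omega),
          hz _ (by omega), hz _ (by omega), hz _ (by omega)]
    exact hrec j
  by_cases hk1 : k < p + q + r
  · exact ⟨x k, (hyx k hk1).symm⟩
  -- the value of `y k * y (k - n)`
  obtain ⟨j, rfl⟩ : ∃ j, k = j + (p + q + r) := ⟨k - (p + q + r), by omega⟩
  have htop : y (j + (p + q + r)) * e (z j) = e (a * z (j + p) * z (j + (q + r))
          + b * z (j + q) * z (j + (p + r)) + c * z (j + r) * z (j + (p + q))) := by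
    simp only [map_add, map_mul]
    rw [hz _ (by omega), hz _ (by omega), hz _ (by omega), hz _ (by omega),
          hz _ (by omega), hz _ (by omega), hz _ (by omega)]
    exact hrec j
  by_cases hk2 : j < p + q + r
  · exact gr_unit_div e _ (z j) _ (hzu j (by omega) hk2) htop
  by_cases hk3 : j = p + q + r
  · subst hk3
    have H : ∀ j m1 m2 m3 m4 m5 m6 m7, j + (p + q + r) < p + q + r + (p + q + r) →
        m1 = j + (p + q + r) → m2 = j + p → m3 = j + (q + r) → m4 = j + q → m5 = j + (p + r) →
        m6 = j + r → m7 = j + (p + q) →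
        z m1 * z j = a * z m2 * z m3 + b * z m4 * z m5 + c * z m6 * z m7 := by
      rintro j _ _ _ _ _ _ _ hj rfl rfl rfl rfl rfl rfl rfl
      exact hzrec j hj
    obtain ⟨W, hW⟩ := gr_confine a b c (z 0) (z p) (z q) (z r) (z (p + q)) (z (p + r)) (z (q + r))
      (z (p + q + r)) (z (p + p)) (z (q + q)) (z (r + r)) (z (p + p + q)) (z (p + p + r))
      (z (p + q + q)) (z (q + q + r)) (z (p + r + r)) (z (q + r + r))
      (z (p + p + q + q)) (z (p + p + r + r)) (z (q + q + r + r))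
      (z (p + q + r + p)) (z (p + q + r + q)) (z (p + q + r + r))
      (z (p + q + r + (p + q))) (z (p + q + r + (p + r))) (z (p + q + r + (q + r)))
      (by apply H <;> omega) (by apply H <;> omega) (by apply H <;> omega)
      (by apply H <;> omega) (by apply H <;> omega) (by apply H <;> omega)
      (by apply H <;> omega)
    have hU : IsUnit (z (q + r) * z (p + r) * z (p + q)) :=
      ((hzu _ (by omega) (by omega)).mul (hzu _ (by omega) (by omega))).mul
        (hzu _ (by omega) (by omega))
    refine gr_unit_div e _ _ W hU ?_
    have hne : e (z (p + q + r)) ≠ 0 := by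
      rw [hz _ (by omega)]; exact hy0 _
    apply mul_right_cancel₀ hne
    rw [mul_right_comm, htop, ← map_mul, hW, map_mul, mul_comm]
  -- the general case
  have hshift : ∀ m, m + (p + q + r) ≤ j + (p + q + r) → ∃ (N : ℕ) (A : L),
      y (j + (p + q + r)) * e (∏ i ∈ Finset.range (p + q + r), z (i + m)) ^ N = e A
      ∨ m = 0 := by
    intro m hm
    rcases Nat.eq_zero_or_pos m with hm0 | hm0
    · exact ⟨0, 0, Or.inr hm0⟩
    obtain ⟨φ, hφx, hφa, hφb, hφc⟩ := huniv K inferInstance (fun i => y (i + m)) (e a) (e b) (e c)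
      (fun i _ => (hy0 _).isUnit)
    have hφz : ∀ i < j + (p + q + r), φ (z i) = y (i + m) := by
      refine gr_transfer e hinj φ p q r hp hq hr a b c y hrec (fun i => y (i + m)) ?_
        (fun i => hy0 _) _ z hz ?_
      · intro i
        have := hrec (i + m)
        rw [hφa, hφb, hφc]
        simp only [add_right_comm i _ m]
        exact this
      · intro i h1 h2
        rw [hzx i h1 h2, hφx i h2]
    obtain ⟨N, hN⟩ := hclear (z (j + (p + q + r) - m))
    have hsub : Subring.closure (insert a (insert b (insert c (x '' {i | i < p + q + r}))))
        ≤ (e.range).comap φ := by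
      rw [Subring.closure_le]
      rintro t (rfl | rfl | rfl | ⟨i, hi, rfl⟩)
      · exact ⟨_, hφa.symm⟩
      · exact ⟨_, hφb.symm⟩
      · exact ⟨_, hφc.symm⟩
      · have hi' : i < p + q + r := hi
        exact ⟨z (i + m), by rw [hφx i hi', hz _ (by omega)]⟩
    obtain ⟨A, hA⟩ := hsub hN
    refine ⟨N, A, Or.inl ?_⟩
    rw [hA, map_mul, hφz _ (by omega), map_pow, map_prod, map_prod,
      Nat.sub_add_cancel (by omega)]
    congr 2
    apply Finset.prod_congr rfl
    intro i hi
    rw [Finset.mem_range] at hi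
    rw [hφx i hi, hz _ (by omega)]
  obtain ⟨N, A, hA | h⟩ := hshift 1 (by omega)
  swap
  · omega
  obtain ⟨M, B, hB | h⟩ := hshift (p + q + r + 1) (by omega)
  swap
  · omega
  obtain ⟨n', hn'⟩ : ∃ n', p + q + r = n' + 1 := ⟨p + q + r - 1, by omega⟩
  have hP : ∏ i ∈ Finset.range (p + q + r), z (i + 1) =
      (∏ i ∈ Finset.range n', z (i + 1)) * z (p + q + r) := by
    rw [hn', Finset.prod_range_succ]
  rw [hP] at hA
  refine gr_inter (z (p + q + r)) _ _ ?_ ?_ ?_ _ N M A B hA hB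
  · have h0 := hzrec 0 (by omega)
    simp only [zero_add] at h0
    rw [hzx p (by omega) (by omega), hzx q (by omega) (by omega), hzx r (by omega) (by omega),
      hzx (q + r) (by omega) (by omega), hzx (p + r) (by omega) (by omega),
      hzx (p + q) (by omega) (by omega)] at h0
    obtain ⟨u, hu⟩ := hzu 0 (by omega) (by omega)
    have : Associated (a * x p * x (q + r) + b * x q * x (p + r) + c * x r * x (p + q))
      (z (p + q + r)) := Associated.symm ⟨u, by rw [hu, h0]⟩
    exact this.prime hprime
  · refine Finset.prod_induction _ IsUnit (fun _ _ => IsUnit.mul) isUnit_one ?_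
    intro i hi
    rw [Finset.mem_range] at hi
    exact hzu _ (by omega) (by omega)
  · intro hdvd
    obtain ⟨a', b', c', hs⟩ := gr_special p q r hr hpq
    set Y : ℕ → PowerSeries ℚ :=
      fun k => PowerSeries.C ((k : ℚ) - ((p + q + r : ℕ) : ℚ)) + PowerSeries.X with hYdef
    have hYc : ∀ i, PowerSeries.constantCoeff (Y i) = (i : ℚ) - ((p + q + r : ℕ) : ℚ) := by
      intro i; simp [hYdef]
    have hYu : ∀ i, i ≠ p + q + r → IsUnit (Y i) := by
      intro i hi
      rw [PowerSeries.isUnit_iff_constantCoeff, hYc]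
      exact (sub_ne_zero.2 (by exact_mod_cast hi)).isUnit
    have hY0 : ∀ i, Y i ≠ 0 := by
      intro i
      by_cases hi : i = p + q + r
      · rw [hYdef]; simp [hi, PowerSeries.X_ne_zero]
      · exact (hYu i hi).ne_zero
    obtain ⟨φ, hφx, hφa, hφb, hφc⟩ := huniv (PowerSeries ℚ) inferInstance Y a' b' c'
      (fun i hi => hYu i hi.ne)
    have hφz : ∀ i < j + (p + q + r), φ (z i) = Y i := by
      refine gr_transfer e hinj φ p q r hp hq hr a b c y hrec Y ?_ hY0 _ z hz ?_
      · rw [hφa, hφb, hφc]; exact hs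
      · intro i h1 h2
        rw [hzx i h1 h2, hφx i h2]
    obtain ⟨t, ht⟩ := hdvd
    have h1 := congrArg (fun t => PowerSeries.constantCoeff (φ t)) ht
    simp only [map_mul, map_prod] at h1
    rw [hφz _ (by omega), hYc, sub_self, zero_mul, Finset.prod_eq_zero_iff] at h1
    obtain ⟨i, hi, h1⟩ := h1
    rw [Finset.mem_range] at hi
    rw [hφz _ (by omega), hYc] at h1
    push_cast at h1
    have : (0 : ℚ) ≤ i := Nat.cast_nonneg i
    linarith

/-- The Gale–Robinson integrality conjecture: with all-ones initial values
and positive integer parameters α, β, γ, every term of the Gale–Robinson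
sequence is an integer. -/
theorem gale_robinson_integrality
    (p q r : ℕ) (hp : 0 < p) (hq : 0 < q) (hr : 0 < r)
    (hpq : p ≠ q) (hpr : p ≠ r) (hqr : q ≠ r)
    (n : ℕ) (hn : n = p + q + r)
    (α β γ : ℤ) (hα : 0 < α) (hβ : 0 < β) (hγ : 0 < γ)
    (y : ℕ → ℚ)
    (hinit : ∀ i : ℕ, i < n → y i = 1)
    (hrec : ∀ k : ℕ,
      y (k + n) * y k = α * y (k + p) * y (k + (n - p)) + β * y (k + q) * y (k + (n - q))
        + γ * y (k + r) * y (k + (n - r))) :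
    ∀ k : ℕ, ∃ z : ℤ, y k = z := by
  subst hn
  have hs1 : p + q + r - p = q + r := by omega
  have hs2 : p + q + r - q = p + r := by omega
  have hs3 : p + q + r - r = p + q := by omega
  simp only [hs1, hs2, hs3] at hrec
  have hpos : ∀ k, 0 < y k := by
    intro k
    induction k using Nat.strong_induction_on with
    | _ k ih =>
      by_cases hk : k < p + q + r
      · rw [hinit k hk]; exact one_pos
      · obtain ⟨j, rfl⟩ : ∃ j, k = j + (p + q + r) := ⟨k - (p + q + r), by omega⟩
        have h := hrec j
        have hα' : (0 : ℚ) < α := by exact_mod_cast hα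
        have hβ' : (0 : ℚ) < β := by exact_mod_cast hβ
        have hγ' : (0 : ℚ) < γ := by exact_mod_cast hγ
        have h0 := ih j (by omega)
        have h1 := ih (j + p) (by omega)
        have h2 := ih (j + q) (by omega)
        have h3 := ih (j + r) (by omega)
        have h4 := ih (j + (q + r)) (by omega)
        have h5 := ih (j + (p + r)) (by omega)
        have h6 := ih (j + (p + q)) (by omega)
        have h7 : 0 < y (j + (p + q + r)) * y j := by rw [h]; positivity
        exact pos_of_mul_pos_left h7 h0.le
  obtain ⟨L, _, _, x₀, a, b, c, hxu₀, hprime₀, huniv₀, hclear₀⟩ := gr_ring (p + q + r)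
  let x : ℕ → L := fun i => if h : i < p + q + r then x₀ ⟨i, h⟩ else 0
  have hx : ∀ i (h : i < p + q + r), x i = x₀ ⟨i, h⟩ := fun i h => dif_pos h
  have huniv : ∀ (K : Type) (_ : CommRing K) (Y : ℕ → K) (a' b' c' : K),
      (∀ i < p + q + r, IsUnit (Y i)) →
      ∃ φ : L →+* K, (∀ i < p + q + r, φ (x i) = Y i) ∧ φ a = a' ∧ φ b = b' ∧ φ c = c' := by
    intro K _ Y a' b' c' hY
    obtain ⟨φ, h1, h2⟩ := huniv₀ K inferInstance (fun i => Y i) a' b' c' (fun i => hY i i.2)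
    exact ⟨φ, fun i hi => by rw [hx i hi, h1], h2⟩
  obtain ⟨ρ, hρ1, hρ2, hρ3, hρ4⟩ := huniv ℚ inferInstance (fun _ => 1) 1 1 1
    (fun _ _ => isUnit_one)
  obtain ⟨Y, hYx, hY0, hYrec⟩ := gr_generic (K := FractionRing L) p q r hp hq hr a b c x ρ
    hρ2 hρ3 hρ4 hρ1
  have hL := gr_laurent (K := FractionRing L) p q r hp hq hr hpq a b c x
    (fun i hi => by rw [hx i hi]; exact hxu₀ _)
    (by
      rw [hx p (by omega), hx q (by omega), hx r (by omega), hx (q + r) (by omega),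
        hx (p + r) (by omega), hx (p + q) (by omega)]
      exact hprime₀ _ _ _ _ _ _)
    huniv
    (by
      intro z
      obtain ⟨N, hN⟩ := hclear₀ z
      refine ⟨N, ?_⟩
      have e1 : ∏ i ∈ Finset.range (p + q + r), x i = ∏ i, x₀ i := by
        rw [Finset.prod_range]
        exact Finset.prod_congr rfl fun i _ => hx i i.2
      have e2 : x '' {i | i < p + q + r} = Set.range x₀ := by
        ext t
        constructor
        · rintro ⟨i, hi, rfl⟩
          exact ⟨⟨i, hi⟩, (hx i hi).symm⟩
        · rintro ⟨i, rfl⟩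
          exact ⟨i, i.2, hx i i.2⟩
      rw [e1, e2]
      exact hN)
    Y hYx hY0 hYrec
  choose z hz using hL
  obtain ⟨φ, hφx, hφa, hφb, hφc⟩ := huniv ℤ inferInstance (fun _ => 1) α β γ
    (fun _ _ => isUnit_one)
  intro k
  refine ⟨φ (z k), ?_⟩
  have hinj := IsFractionRing.injective L (FractionRing L)
  have := gr_transfer (algebraMap L (FractionRing L)) hinj ((Int.castRingHom ℚ).comp φ)
    p q r hp hq hr a b c Y hYrec y ?_ (fun i => (hpos i).ne') (k + 1) z (fun i _ => hz i) ?_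
    k (Nat.lt_succ_self k)
  · rw [← this]; simp
  · intro j
    simp only [RingHom.comp_apply, hφa, hφb, hφc, eq_intCast]
    exact hrec j
  · intro i _ hi
    have hzi : z i = x i := hinj (by rw [hz, hYx i hi])
    rw [hzi, RingHom.comp_apply, hφx i hi, hinit i hi, map_one]
end

section
/- Let y : ℤ≥0³ → F, where F is the field of rational functions over ℤ[α,β,γ] in indeterminates y_{a,b,c} indexed by triples (a,b,c) ∈ ℤ≥0³ with abc = 0, be defined by the cube recurrence y_{i,j,k} = (α y_{i−1,j,k} y_{i,j−1,k−1} + β y_{i,j−1,k} y_{i−1,j,k−1} + γ y_{i,j,k−1} y_{i−1,j−1,k}) / y_{i−1,j−1,k−1} for i,j,k ≥ 1, with initial values the indeterminates. Then every y_{i,j,k} is a Laurent polynomial in the initial variables with coefficients in ℤ[α,β,γ]. -/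
open MvPolynomial

/-- Index set for the initial cluster of the cube recurrence on ℤ≥0³:
triples with at least one coordinate equal to zero. -/
def CubeInit : Type := {p : ℕ × ℕ × ℕ // p.1 = 0 ∨ p.2.1 = 0 ∨ p.2.2 = 0}

set_option linter.unusedSectionVars false

/-- Nonvanishing solutions of the cube recurrence in a field. -/
structure IsCubeSol {L : Type*} [Field L] (α β γ : L) (y : ℕ → ℕ → ℕ → L) : Prop where
  ne : ∀ i j k, y i j k ≠ 0
  eq : ∀ i j k, y (i + 1) (j + 1) (k + 1) * y i j k =
        α * y i (j + 1) (k + 1) * y (i + 1) j k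
          + β * y (i + 1) j (k + 1) * y i (j + 1) k
          + γ * y (i + 1) (j + 1) k * y i j (k + 1)

namespace CubeLaurent

section field
variable {L : Type*} [Field L] {α β γ : L} {y : ℕ → ℕ → ℕ → L}

lemma shift (h : IsCubeSol α β γ y) (m : ℕ) : IsCubeSol α β γ (fun i j k => y (i + m) j k) where
  ne i j k := h.ne _ _ _
  eq i j k := by
    have := h.eq (i + m) j k
    rw [show i + 1 + m = i + m + 1 by ring]
    exact this

lemma swap (h : IsCubeSol α β γ y) : IsCubeSol α γ β (fun i j k => y i k j) where
  ne i j k := h.ne _ _ _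
  eq i j k := by
    have := h.eq i k j
    linear_combination this

lemma image (h : IsCubeSol α β γ y) {K : Type*} [Field K] (T : L →+* K) :
    IsCubeSol (T α) (T β) (T γ) (fun i j k => T (y i j k)) where
  ne i j k := by simpa using h.ne i j k
  eq i j k := by
    have := congrArg T (h.eq i j k)
    simpa using this

/-- layer one -/
lemma layer_one (h : IsCubeSol α β γ y) (O : Subring L) (hα : α ∈ O) (hβ : β ∈ O) (hγ : γ ∈ O)
    (h0 : ∀ i j k, (i = 0 ∨ j = 0 ∨ k = 0) → y i j k ∈ O ∧ (y i j k)⁻¹ ∈ O) :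
    ∀ j k, y 1 j k ∈ O := by
  intro j
  induction j with
  | zero => intro k; exact (h0 _ _ _ (by simp)).1
  | succ j ihj =>
    intro k
    induction k with
    | zero => exact (h0 _ _ _ (by simp)).1
    | succ k ihk =>
      have e := h.eq 0 j k
      have : y 1 (j + 1) (k + 1) = (α * y 0 (j + 1) (k + 1) * y 1 j k
          + β * y 1 j (k + 1) * y 0 (j + 1) k
          + γ * y 1 (j + 1) k * y 0 j (k + 1)) * (y 0 j k)⁻¹ := by
        rw [← div_eq_mul_inv, eq_div_iff (h.ne _ _ _)]
        simpa using e
      rw [this]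
      have g := fun j k => h0 0 j k (by simp)
      refine O.mul_mem (O.add_mem (O.add_mem ?_ ?_) ?_) (g _ _).2
      · exact O.mul_mem (O.mul_mem hα (g _ _).1) (ihj _)
      · exact O.mul_mem (O.mul_mem hβ (ihj _)) (g _ _).1
      · exact O.mul_mem (O.mul_mem hγ ihk) (g _ _).1

/-- a function on the quadrant given by boundary recursions and a square rule -/
def grid (a : L) (r d : ℕ → L → L) (s : ℕ → ℕ → L → L → L → L) : ℕ → ℕ → L
  | 0, 0 => a
  | j + 1, 0 => r j (grid a r d s j 0)
  | 0, k + 1 => d k (grid a r d s 0 k)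
  | j + 1, k + 1 => s j k (grid a r d s j k) (grid a r d s (j + 1) k) (grid a r d s j (k + 1))

/-- One step of the Moutard transformation. -/
lemma moutard_step (α β γ q t t1 t2 t12 p p1 p2 p12 s s1 s2 s12 : L) (ht : t ≠ 0)
    (e1 : γ * s1 = -(α * β) * s + (t1 * p - t * p1))
    (e2 : β * s2 = -(α * γ) * s - (t2 * p - t * p2))
    (ht12 : t12 = α * t + q * (β * t2 + γ * t1))
    (hp12 : p12 = α * p + q * (β * p2 + γ * p1))
    (hs12 : s12 * t = α * t12 * s + q * (β * s2 * t1 + γ * s1 * t2)) :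
    γ * s12 = -(α * β) * s2 + (t12 * p2 - t2 * p12) ∧
    β * s12 = -(α * γ) * s1 - (t12 * p1 - t1 * p12) := by
  have key : s12 = α ^ 2 * s + q * (t1 * p2 - t2 * p1) := by
    apply mul_right_cancel₀ ht
    rw [hs12, ht12]
    linear_combination q * t1 * e2 + q * t2 * e1
  subst ht12 hp12
  constructor
  · rw [key]; linear_combination α * e2
  · rw [key]; linear_combination α * e1

lemma layer_two (h : IsCubeSol α β γ y) (O : Subring L) (hα : α ∈ O) (hβ : β ∈ O) (hγ : γ ∈ O)
    (hγ0 : γ ≠ 0) (hγi : γ⁻¹ ∈ O)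
    (h0 : ∀ i j k, (i = 0 ∨ j = 0 ∨ k = 0) → y i j k ∈ O ∧ (y i j k)⁻¹ ∈ O) :
    ∀ j k, y 2 j k ∈ O := by
  have h1 := layer_one h O hα hβ hγ h0
  have g0 := fun j k => h0 0 j k (by simp)
  obtain ⟨t, ht⟩ : ∃ t : ℕ → ℕ → L, ∀ j k, t j k = y 1 j k * (y 0 j k)⁻¹ := ⟨_, fun _ _ => rfl⟩
  obtain ⟨s, hs⟩ : ∃ t : ℕ → ℕ → L, ∀ j k, t j k = y 2 j k * (y 0 j k)⁻¹ := ⟨_, fun _ _ => rfl⟩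
  obtain ⟨q, hq⟩ : ∃ t : ℕ → ℕ → L, ∀ j k, t j k =
    y 0 (j + 1) k * y 0 j (k + 1) * ((y 0 j k)⁻¹ * (y 0 (j + 1) (k + 1))⁻¹) := ⟨_, fun _ _ => rfl⟩
  have htO : ∀ j k, t j k ∈ O := fun j k => by rw [ht]; exact O.mul_mem (h1 _ _) (g0 _ _).2
  have hqO : ∀ j k, q j k ∈ O := fun j k => by
    rw [hq]; exact O.mul_mem (O.mul_mem (g0 _ _).1 (g0 _ _).1) (O.mul_mem (g0 _ _).2 (g0 _ _).2)
  have hsO : ∀ j k, (j = 0 ∨ k = 0) → s j k ∈ O := fun j k hh => by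
    rw [hs]; exact O.mul_mem (h0 _ _ _ (by tauto)).1 (g0 _ _).2
  have htiO : ∀ j k, (j = 0 ∨ k = 0) → (t j k)⁻¹ ∈ O := fun j k hh => by
    rw [ht, mul_inv, inv_inv]; exact O.mul_mem (h0 _ _ _ (by tauto)).2 (g0 _ _).1
  have ht0 : ∀ j k, t j k ≠ 0 := fun j k => by
    rw [ht]; exact mul_ne_zero (h.ne _ _ _) (inv_ne_zero (h.ne _ _ _))
  have ht12 : ∀ j k, t (j + 1) (k + 1) =
      α * t j k + q j k * (β * t j (k + 1) + γ * t (j + 1) k) := by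
    intro j k
    have e := h.eq 0 j k
    simp only [ht, hq, zero_add] at e ⊢
    have n1 := h.ne 0 j k
    have n2 := h.ne 0 (j + 1) k
    have n3 := h.ne 0 j (k + 1)
    have n4 := h.ne 0 (j + 1) (k + 1)
    field_simp
    linear_combination e
  have hs12 : ∀ j k, s (j + 1) (k + 1) * t j k = α * t (j + 1) (k + 1) * s j k +
      q j k * (β * s j (k + 1) * t (j + 1) k + γ * s (j + 1) k * t j (k + 1)) := by
    intro j k
    have e := h.eq 1 j k
    simp only [ht, hq, hs, Nat.reduceAdd] at e ⊢
    have n1 := h.ne 0 j k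
    have n2 := h.ne 0 (j + 1) k
    have n3 := h.ne 0 j (k + 1)
    have n4 := h.ne 0 (j + 1) (k + 1)
    field_simp
    linear_combination e
  obtain ⟨p, p00, pr, pd, p12⟩ : ∃ p : ℕ → ℕ → L, p 0 0 = 0 ∧
      (∀ j, p (j + 1) 0 =
        (t (j + 1) 0 * p j 0 - γ * s (j + 1) 0 - α * β * s j 0) * (t j 0)⁻¹) ∧
      (∀ k, p 0 (k + 1) =
        (t 0 (k + 1) * p 0 k + β * s 0 (k + 1) + α * γ * s 0 k) * (t 0 k)⁻¹) ∧
      (∀ j k, p (j + 1) (k + 1) =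
        α * p j k + q j k * (β * p j (k + 1) + γ * p (j + 1) k)) := by
    refine ⟨grid 0
      (fun j p => (t (j + 1) 0 * p - γ * s (j + 1) 0 - α * β * s j 0) * (t j 0)⁻¹)
      (fun k p => (t 0 (k + 1) * p + β * s 0 (k + 1) + α * γ * s 0 k) * (t 0 k)⁻¹)
      (fun j k p p1 p2 => α * p + q j k * (β * p2 + γ * p1)), ?_, ?_, ?_, ?_⟩
    · rw [grid]
    · intro j; rw [grid]
    · intro j; rw [grid]
    · intro j k; rw [grid]
  have hpO : ∀ j k, p j k ∈ O := by
    intro j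
    induction j with
    | zero =>
      intro k
      induction k with
      | zero => rw [p00]; exact O.zero_mem
      | succ k ih =>
        rw [pd]
        exact O.mul_mem (O.add_mem (O.add_mem (O.mul_mem (htO _ _) ih)
          (O.mul_mem hβ (hsO _ _ (by simp)))) (O.mul_mem (O.mul_mem hα hγ) (hsO _ _ (by simp))))
          (htiO _ _ (by simp))
    | succ j ihj =>
      intro k
      induction k with
      | zero =>
        rw [pr]
        exact O.mul_mem (O.sub_mem (O.sub_mem (O.mul_mem (htO _ _) (ihj _))
          (O.mul_mem hγ (hsO _ _ (by simp)))) (O.mul_mem (O.mul_mem hα hβ) (hsO _ _ (by simp))))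
          (htiO _ _ (by simp))
      | succ k ih =>
        rw [p12]
        exact O.add_mem (O.mul_mem hα (ihj _)) (O.mul_mem (hqO _ _)
          (O.add_mem (O.mul_mem hβ (ihj _)) (O.mul_mem hγ ih)))
  have b1 : ∀ j, γ * s (j + 1) 0 =
      -(α * β) * s j 0 + (t (j + 1) 0 * p j 0 - t j 0 * p (j + 1) 0) := by
    intro j
    rw [pr, mul_comm (t j 0), inv_mul_cancel_right₀ (ht0 _ _)]
    ring
  have b2 : ∀ k, β * s 0 (k + 1) =
      -(α * γ) * s 0 k - (t 0 (k + 1) * p 0 k - t 0 k * p 0 (k + 1)) := by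
    intro j
    rw [pd, mul_comm (t 0 j), inv_mul_cancel_right₀ (ht0 _ _)]
    ring
  have main : ∀ j k,
      (γ * s (j + 1) k = -(α * β) * s j k + (t (j + 1) k * p j k - t j k * p (j + 1) k)) ∧
      (β * s j (k + 1) = -(α * γ) * s j k - (t j (k + 1) * p j k - t j k * p j (k + 1))) := by
    intro j
    induction j with
    | zero =>
      intro k
      induction k with
      | zero => exact ⟨b1 0, b2 0⟩
      | succ k ih =>
        exact ⟨(moutard_step α β γ (q 0 k) _ _ _ _ _ _ _ _ _ _ _ _ (ht0 0 k) ih.1 ih.2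
          (ht12 0 k) (p12 0 k) (hs12 0 k)).1, b2 _⟩
    | succ j ihj =>
      intro k
      have r := (moutard_step α β γ (q j k) _ _ _ _ _ _ _ _ _ _ _ _ (ht0 j k) (ihj k).1
          (ihj k).2 (ht12 j k) (p12 j k) (hs12 j k)).2
      refine ⟨?_, r⟩
      induction k with
      | zero => exact b1 _
      | succ k ih =>
        have r' := (moutard_step α β γ (q j k) _ _ _ _ _ _ _ _ _ _ _ _ (ht0 j k) (ihj k).1
          (ihj k).2 (ht12 j k) (p12 j k) (hs12 j k)).2
        exact (moutard_step α β γ (q (j + 1) k) _ _ _ _ _ _ _ _ _ _ _ _ (ht0 _ k) (ih r') r'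
          (ht12 _ k) (p12 _ k) (hs12 _ k)).1
  have hsall : ∀ j k, s j k ∈ O := by
    intro j
    induction j with
    | zero => intro k; exact hsO _ _ (by simp)
    | succ j ih =>
      intro k
      have e := (main j k).1
      have : s (j + 1) k =
          γ⁻¹ * (-(α * β) * s j k + (t (j + 1) k * p j k - t j k * p (j + 1) k)) := by
        rw [← e, inv_mul_cancel_left₀ hγ0]
      rw [this]
      exact O.mul_mem hγi (O.add_mem (O.mul_mem (O.neg_mem (O.mul_mem hα hβ)) (ih _))
        (O.sub_mem (O.mul_mem (htO _ _) (hpO _ _)) (O.mul_mem (htO _ _) (hpO _ _))))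
  intro j k
  have : y 2 j k = s j k * y 0 j k := by rw [hs, inv_mul_cancel_right₀ (h.ne _ _ _)]
  rw [this]
  exact O.mul_mem (hsall _ _) (g0 _ _).1

/-- Perturbing one boundary entry `(i+1, j, 0)` by one. -/
lemma perturb {y' : ℕ → ℕ → ℕ → L} (h : IsCubeSol α β γ y) (h' : IsCubeSol α β γ y') (i j : ℕ)
    (e0 : ∀ a b, y' i a b = y i a b) (e1 : ∀ b, y' (i + 1) j b = y (i + 1) j b)
    (e2 : y' (i + 1) (j + 1) 0 = y (i + 1) (j + 1) 0 + 1) (k : ℕ) :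
    y' (i + 1) (j + 1) k - y (i + 1) (j + 1) k = γ ^ k * y i j k / y i j 0 := by
  induction k with
  | zero => rw [e2]; field_simp [h.ne i j 0]; ring
  | succ k ih =>
    have a := h.eq i j k
    have a' := h'.eq i j k
    simp only [e0, e1] at a'
    apply mul_right_cancel₀ (h.ne i j k)
    have : (y' (i + 1) (j + 1) (k + 1) - y (i + 1) (j + 1) (k + 1)) * y i j k =
      γ * (y' (i + 1) (j + 1) k - y (i + 1) (j + 1) k) * y i j (k + 1) := by
      linear_combination a' - a
    rw [this, ih]
    ring

end field

section rel
variable {A : Type*} [CommRing A] [IsDomain A] {F : Type*} [Field F] [Algebra A F]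
  [IsFractionRing A F] {L : Type*} [Field L]

/-- `w` is the value of the fraction `z` under the partial extension of `ev`. -/
def Rel (ev : A →+* L) (z : F) (w : L) : Prop :=
  ∃ a b : A, ev b ≠ 0 ∧ z * algebraMap A F b = algebraMap A F a ∧ w * ev b = ev a

variable {ev : A →+* L} {z z' : F} {w w' : L}

lemma rel_map (a : A) : Rel (F := F) ev (algebraMap A F a) (ev a) := ⟨a, 1, by simp, by simp, by simp⟩

lemma rel_add (h : Rel ev z w) (h' : Rel ev z' w') : Rel ev (z + z') (w + w') := by
  obtain ⟨a, b, hb, e, f⟩ := h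
  obtain ⟨a', b', hb', e', f'⟩ := h'
  refine ⟨a * b' + a' * b, b * b', by simp [hb, hb'], ?_, ?_⟩
  · simp only [map_mul, map_add, ← e, ← e']; ring
  · simp only [map_mul, map_add, ← f, ← f']; ring

lemma rel_mul (h : Rel ev z w) (h' : Rel ev z' w') : Rel ev (z * z') (w * w') := by
  obtain ⟨a, b, hb, e, f⟩ := h
  obtain ⟨a', b', hb', e', f'⟩ := h'
  refine ⟨a * a', b * b', by simp [hb, hb'], ?_, ?_⟩
  · simp only [map_mul, ← e, ← e']; ring
  · simp only [map_mul, ← f, ← f']; ring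

lemma rel_ne (h : Rel ev z w) (hw : w ≠ 0) : z ≠ 0 := by
  rintro rfl
  obtain ⟨a, b, hb, e, f⟩ := h
  have : a = 0 := by
    apply IsFractionRing.injective A F
    simpa using e.symm
  subst this
  simp [hw, hb] at f

lemma rel_inv (h : Rel ev z w) (hw : w ≠ 0) : Rel ev z⁻¹ w⁻¹ := by
  have hz := rel_ne h hw
  obtain ⟨a, b, hb, e, f⟩ := h
  refine ⟨b, a, ?_, ?_, ?_⟩
  · rw [← f]; exact mul_ne_zero hw hb
  · rw [← e, inv_mul_cancel_left₀ hz]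
  · rw [← f, inv_mul_cancel_left₀ hw]

lemma rel_uniq (h : Rel ev z w) (h' : Rel ev z w') : w = w' := by
  obtain ⟨a, b, hb, e, f⟩ := h
  obtain ⟨a', b', hb', e', f'⟩ := h'
  have : a * b' = a' * b := by
    apply IsFractionRing.injective A F
    simp only [map_mul, ← e, ← e']; ring
  have h2 := congrArg ev this
  simp only [map_mul, ← f, ← f'] at h2
  apply mul_right_cancel₀ (mul_ne_zero hb hb')
  linear_combination h2

/-- The local ring of `A` at the prime element `p`. -/
def locRing (F : Type*) [Field F] [Algebra A F] {p : A} (hp : Prime p) : Subring F where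
  carrier := {z | ∃ a b : A, ¬ p ∣ b ∧ z * algebraMap A F b = algebraMap A F a}
  zero_mem' := ⟨0, 1, fun h => hp.not_isUnit (isUnit_of_dvd_one h), by simp⟩
  one_mem' := ⟨1, 1, fun h => hp.not_isUnit (isUnit_of_dvd_one h), by simp⟩
  add_mem' := by
    rintro z z' ⟨a, b, hb, e⟩ ⟨a', b', hb', e'⟩
    refine ⟨a * b' + a' * b, b * b', fun h => (hp.dvd_or_dvd h).elim hb hb', ?_⟩
    simp only [map_mul, map_add, ← e, ← e']; ring
  mul_mem' := by
    rintro z z' ⟨a, b, hb, e⟩ ⟨a', b', hb', e'⟩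
    refine ⟨a * a', b * b', fun h => (hp.dvd_or_dvd h).elim hb hb', ?_⟩
    simp only [map_mul, ← e, ← e']; ring
  neg_mem' := by
    rintro z ⟨a, b, hb, e⟩
    exact ⟨-a, b, hb, by simp [e]⟩

/-- The maximal ideal of `locRing`. -/
def InM (p : A) (z : F) : Prop :=
  ∃ a b : A, ¬ p ∣ b ∧ p ∣ a ∧ z * algebraMap A F b = algebraMap A F a

variable {p : A}

lemma map_mem_loc (hp : Prime p) (a : A) : algebraMap A F a ∈ locRing F hp :=
  ⟨a, 1, fun h => hp.not_isUnit (isUnit_of_dvd_one h), by simp⟩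

lemma InM.dvd (hp : Prime p) (h : InM p z) {c d : A} (e : z * algebraMap A F d = algebraMap A F c) :
    p ∣ c := by
  obtain ⟨a, b, hb, ha, f⟩ := h
  have : c * b = a * d := by
    apply IsFractionRing.injective A F
    simp only [map_mul, ← e, ← f]; ring
  exact (hp.dvd_or_dvd (this ▸ ha.mul_right d)).resolve_right hb

lemma inM_map (hp : Prime p) {a : A} : InM p (algebraMap A F a) ↔ p ∣ a :=
  ⟨fun h => h.dvd hp (d := 1) (by simp),
   fun h => ⟨a, 1, fun h => hp.not_isUnit (isUnit_of_dvd_one h), h, by simp⟩⟩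

lemma InM.sub (hp : Prime p) (h : InM p z) (h' : InM p z') : InM p (z - z') := by
  obtain ⟨a, b, hb, ha, e⟩ := h
  obtain ⟨a', b', hb', ha', e'⟩ := h'
  refine ⟨a * b' - a' * b, b * b', fun h => (hp.dvd_or_dvd h).elim hb hb',
    dvd_sub (ha.mul_right _) (ha'.mul_right _), ?_⟩
  simp only [map_mul, map_sub, ← e, ← e']; ring

lemma InM.mul (hp : Prime p) (h : InM p z) (h' : z' ∈ locRing F hp) : InM p (z * z') := by
  obtain ⟨a, b, hb, ha, e⟩ := h
  obtain ⟨a', b', hb', e'⟩ := h'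
  refine ⟨a * a', b * b', fun h => (hp.dvd_or_dvd h).elim hb hb', ha.mul_right _, ?_⟩
  simp only [map_mul, ← e, ← e']; ring

lemma InM.prime (hp : Prime p) (h : InM p (z * z')) (h1 : z ∈ locRing F hp)
    (h' : z' ∈ locRing F hp) : InM p z ∨ InM p z' := by
  obtain ⟨a, b, hb, e⟩ := h1
  obtain ⟨a', b', hb', e'⟩ := h'
  have : p ∣ a * a' := h.dvd hp (d := b * b') (by simp only [map_mul, ← e, ← e']; ring)
  exact (hp.dvd_or_dvd this).imp (fun h => ⟨a, b, hb, h, e⟩) (fun h => ⟨a', b', hb', h, e'⟩)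

lemma InM.pow (hp : Prime p) {n : ℕ} (h : InM p (z ^ n)) (h1 : z ∈ locRing F hp) : InM p z := by
  induction n with
  | zero =>
    rw [pow_zero, ← map_one (algebraMap A F), inM_map hp] at h
    exact absurd (isUnit_of_dvd_one h) hp.not_isUnit
  | succ n ih =>
    rw [pow_succ] at h
    exact (h.prime hp (Subring.pow_mem _ h1 _) h1).elim ih id

lemma inv_mem_loc (hp : Prime p) (h1 : z ∈ locRing F hp) (h : ¬ InM p z) : z⁻¹ ∈ locRing F hp := by
  obtain ⟨a, b, hb, e⟩ := h1
  by_cases hz : z = 0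
  · subst hz; simp
  · refine ⟨b, a, fun ha => h ⟨a, b, hb, ha, e⟩, ?_⟩
    rw [← e, inv_mul_cancel_left₀ hz]

/-- An element lying in all relevant local rings has a denominator in the monoid `M`. -/
lemma exists_denom [UniqueFactorizationMonoid A] (M : Submonoid A) (b : A) :
    b ≠ 0 → ∀ z : F, (∀ p (hp : Prime p), (∀ m ∈ M, ¬ p ∣ m) → z ∈ locRing F hp) →
    (∃ a, z * algebraMap A F b = algebraMap A F a) →
    ∃ m ∈ M, ∃ a, z * algebraMap A F m = algebraMap A F a := by
  induction b using UniqueFactorizationMonoid.induction_on_prime with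
  | h₁ => intro h; exact absurd rfl h
  | h₂ b hb =>
    rintro - z - ⟨a, ha⟩
    obtain ⟨u, rfl⟩ := hb
    refine ⟨1, M.one_mem, a * (↑u⁻¹ : A), ?_⟩
    rw [map_mul, ← ha, mul_assoc, ← map_mul]
    simp
  | h₃ b p hb0 hp ih =>
    rintro - z hz ⟨a, ha⟩
    obtain ⟨m, hm, a', ha'⟩ := ih hb0 (z * algebraMap A F p)
      (fun q hq hqM => Subring.mul_mem _ (hz q hq hqM) (map_mem_loc hq p))
      ⟨a, by rw [← ha, map_mul, mul_assoc]⟩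
    by_cases hpM : ∀ m ∈ M, ¬ p ∣ m
    · obtain ⟨c, d, hd, e⟩ := hz p hp hpM
      have : a' * d = p * (c * m) := by
        apply IsFractionRing.injective A F
        simp only [map_mul, ← e, ← ha']; ring
      obtain ⟨a'', rfl⟩ := (hp.dvd_or_dvd (this ▸ dvd_mul_right p _)).resolve_right hd
      refine ⟨m, hm, a'', ?_⟩
      have hp0 : algebraMap A F p ≠ 0 := by
        simpa using hp.ne_zero
      apply mul_right_cancel₀ hp0
      rw [map_mul] at ha'
      linear_combination ha'
    · push Not at hpM
      obtain ⟨n, hn, c, rfl⟩ := hpM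
      refine ⟨p * c * m, M.mul_mem hn hm, a' * c, ?_⟩
      simp only [map_mul, ← ha']; ring

end rel

section poly
variable {σ : Type*} {F : Type*} [Field F] [Algebra (MvPolynomial σ ℤ) F]
  [IsFractionRing (MvPolynomial σ ℤ) F]

local notation "ι" => algebraMap (MvPolynomial σ ℤ) F

/-- `z` is a quotient of polynomials not involving the variable `s`. -/
def NoVar (s : σ) (z : F) : Prop :=
  ∃ a b : MvPolynomial σ ℤ, b ≠ 0 ∧ degreeOf s a = 0 ∧ degreeOf s b = 0 ∧ z * ι b = ι a

variable {s : σ} {z z' : F}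

lemma degreeOf_mul_zero {a b : MvPolynomial σ ℤ} (ha : degreeOf s a = 0) (hb : degreeOf s b = 0) :
    degreeOf s (a * b) = 0 := by
  have := degreeOf_mul_le s a b
  omega

lemma degreeOf_dvd_zero {a b : MvPolynomial σ ℤ} (h : a ∣ b) (hb0 : b ≠ 0)
    (hb : degreeOf s b = 0) : degreeOf s a = 0 := by
  obtain ⟨c, rfl⟩ := h
  rw [degreeOf_mul_eq (left_ne_zero_of_mul hb0) (right_ne_zero_of_mul hb0)] at hb
  omega

lemma NoVar.add (h : NoVar s z) (h' : NoVar s z') : NoVar s (z + z') := by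
  obtain ⟨a, b, hb0, ha, hb, e⟩ := h
  obtain ⟨a', b', hb0', ha', hb', e'⟩ := h'
  refine ⟨a * b' + a' * b, b * b', mul_ne_zero hb0 hb0', ?_, degreeOf_mul_zero hb hb', ?_⟩
  · have := degreeOf_add_le s (a * b') (a' * b)
    rw [degreeOf_mul_zero ha hb', degreeOf_mul_zero ha' hb] at this
    simpa using this
  · simp only [map_mul, map_add, ← e, ← e']; ring

lemma NoVar.mul (h : NoVar s z) (h' : NoVar s z') : NoVar s (z * z') := by
  obtain ⟨a, b, hb0, ha, hb, e⟩ := h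
  obtain ⟨a', b', hb0', ha', hb', e'⟩ := h'
  refine ⟨a * a', b * b', mul_ne_zero hb0 hb0', degreeOf_mul_zero ha ha',
    degreeOf_mul_zero hb hb', ?_⟩
  simp only [map_mul, ← e, ← e']; ring

lemma NoVar.inv (h : NoVar s z) : NoVar s z⁻¹ := by
  by_cases hz : z = 0
  · subst hz; simpa using h
  obtain ⟨a, b, hb0, ha, hb, e⟩ := h
  refine ⟨b, a, ?_, hb, ha, ?_⟩
  · rintro rfl
    simp [hz, hb0] at e
  · rw [← e, inv_mul_cancel_left₀ hz]

lemma noVar_X {t : σ} (h : t ≠ s) : NoVar s (ι (X t)) :=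
  ⟨X t, 1, one_ne_zero, degreeOf_X_of_ne h.symm, by simp, by simp⟩

open Classical in
/-- the translation of the variable `s` -/
noncomputable def tr (s : σ) (c : ℤ) : MvPolynomial σ ℤ →+* MvPolynomial σ ℤ :=
  (aeval (fun t => if t = s then X s + C c else X t) :
    MvPolynomial σ ℤ →ₐ[ℤ] MvPolynomial σ ℤ).toRingHom

lemma tr_X_self (s : σ) (c : ℤ) : tr s c (X s) = X s + C c := by simp [tr]

lemma tr_X_ne {s t : σ} (c : ℤ) (h : t ≠ s) : tr s c (X t) = X t := by simp [tr, h]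

lemma tr_comp (s : σ) (a : MvPolynomial σ ℤ) : tr s (-1) (tr s 1 a) = a := by
  have : (tr s (-1)).comp (tr s 1) = RingHom.id _ := by
    apply MvPolynomial.ringHom_ext
    · intro r; simp
    · intro t
      by_cases h : t = s
      · subst h; simp [tr_X_self]
      · simp [tr_X_ne _ h]
  exact congrArg (fun f => f a) this

lemma tr_fix (s : σ) (c : ℤ) {a : MvPolynomial σ ℤ} (h : degreeOf s a = 0) : tr s c a = a := by
  have : tr s c a = RingHom.id _ a := by
    apply MvPolynomial.hom_congr_vars (by ext; simp) _ rfl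
    intro t ht _
    have : t ≠ s := by
      rintro rfl
      classical
      rw [degreeOf_def, Multiset.count_eq_zero] at h
      exact h (by simpa [vars] using ht)
    rw [tr_X_ne _ this]; rfl
  simpa using this

lemma tr_inj (s : σ) : Function.Injective (tr s 1) :=
  Function.LeftInverse.injective (tr_comp s)

/-- The translation automorphism on the fraction field. -/
noncomputable def trF (F : Type*) [Field F] [Algebra (MvPolynomial σ ℤ) F]
    [IsFractionRing (MvPolynomial σ ℤ) F] (s : σ) : F →+* F :=
  IsFractionRing.lift (A := MvPolynomial σ ℤ) (K := F)
    (g := (algebraMap (MvPolynomial σ ℤ) F).comp (tr s 1))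
    ((IsFractionRing.injective (MvPolynomial σ ℤ) F).comp (tr_inj s))

lemma trF_map (s : σ) (a : MvPolynomial σ ℤ) : trF F s (ι a) = ι (tr s 1 a) := by
  simp [trF]

lemma trF_noVar (h : NoVar s z) : trF F s z = z := by
  obtain ⟨a, b, hb0, ha, hb, e⟩ := h
  have h2 := congrArg (trF F s) e
  rw [map_mul, trF_map, trF_map, tr_fix s _ ha, tr_fix s _ hb, ← e] at h2
  exact mul_right_cancel₀ (by simpa using hb0) h2

variable {p : MvPolynomial σ ℤ}

lemma prime_noVar (hp : Prime p) (hz : z ≠ 0) (hm : InM p z) (h : NoVar s z) :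
    degreeOf s p = 0 := by
  obtain ⟨a, b, hb0, ha, hb, e⟩ := h
  refine degreeOf_dvd_zero (hm.dvd hp e) ?_ ha
  rintro rfl
  simp [hz, hb0] at e

lemma trF_inM (hs : degreeOf s p = 0) (hm : InM p z) : InM p (trF F s z) := by
  obtain ⟨a, b, hb, ha, e⟩ := hm
  refine ⟨tr s 1 a, tr s 1 b, ?_, ?_, ?_⟩
  · intro h
    have := map_dvd (tr s (-1)) h
    rw [tr_comp, tr_fix s _ hs] at this
    exact hb this
  · have := map_dvd (tr s 1) ha
    rwa [tr_fix s _ hs] at this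
  · have h2 := congrArg (trF F s) e
    rwa [map_mul, trF_map, trF_map] at h2

end poly

section cube
variable {F : Type*} [Field F] [Algebra (MvPolynomial (CubeInit ⊕ Fin 3) ℤ) F]
  [IsFractionRing (MvPolynomial (CubeInit ⊕ Fin 3) ℤ) F]

local notation "ι" => algebraMap (MvPolynomial (CubeInit ⊕ Fin 3) ℤ) F

/-- the index of an initial variable -/
def idx (i j k : ℕ) (h : i = 0 ∨ j = 0 ∨ k = 0) : CubeInit ⊕ Fin 3 := Sum.inl ⟨(i, j, k), h⟩

lemma idx_inj {i j k h i' j' k' h'} (e : idx i j k h = idx i' j' k' h') :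
    i = i' ∧ j = j' ∧ k = k' := by
  have := congrArg Subtype.val (Sum.inl.inj e)
  simpa using this

/-- The generic solution of the cube recurrence. -/
structure IsGen (y : ℕ → ℕ → ℕ → F) : Prop extends
    IsCubeSol (ι (X (Sum.inr 0))) (ι (X (Sum.inr 1))) (ι (X (Sum.inr 2))) y where
  bdry : ∀ i j k h, y i j k = ι (X (idx i j k h))

variable {y : ℕ → ℕ → ℕ → F}

/-- Values of the generic solution under a specialization. -/
lemma IsGen.rel (hy : IsGen y) {L : Type*} [Field L] (ev : MvPolynomial (CubeInit ⊕ Fin 3) ℤ →+* L)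
    {w : ℕ → ℕ → ℕ → L}
    (hw : IsCubeSol (ev (X (Sum.inr 0))) (ev (X (Sum.inr 1))) (ev (X (Sum.inr 2))) w)
    (h0 : ∀ i j k h, w i j k = ev (X (idx i j k h))) : ∀ i j k, Rel ev (y i j k) (w i j k) := by
  intro i
  induction i with
  | zero => intro j k; rw [hy.bdry _ _ _ (by simp), h0 _ _ _ (by simp)]; exact rel_map _
  | succ i ihi =>
    intro j
    induction j with
    | zero => intro k; rw [hy.bdry _ _ _ (by simp), h0 _ _ _ (by simp)]; exact rel_map _
    | succ j ihj =>
      intro k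
      induction k with
      | zero => rw [hy.bdry _ _ _ (by simp), h0 _ _ _ (by simp)]; exact rel_map _
      | succ k ihk =>
        have e1 := eq_div_of_mul_eq (hy.ne _ _ _) (hy.eq i j k)
        have e2 := eq_div_of_mul_eq (hw.ne _ _ _) (hw.eq i j k)
        rw [e1, e2, div_eq_mul_inv, div_eq_mul_inv]
        refine rel_mul (rel_add (rel_add ?_ ?_) ?_) (rel_inv (ihi _ _) (hw.ne _ _ _))
        · exact rel_mul (rel_mul (rel_map _) (ihi _ _)) (ihj _)
        · exact rel_mul (rel_mul (rel_map _) (ihj _)) (ihi _ _)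
        · exact rel_mul (rel_mul (rel_map _) ihk) (ihi _ _)

/-- monomials in the initial variables -/
noncomputable def initMon : Submonoid (MvPolynomial (CubeInit ⊕ Fin 3) ℤ) :=
  Submonoid.closure (Set.range (fun s : CubeInit => X (Sum.inl s)))

/-- Laurentness -/
def Laurent (z : F) : Prop := ∃ m ∈ initMon, ∃ a, z * ι m = ι a

/-- Laurentness of the generic solution is inherited by all solutions. -/
lemma IsGen.transfer (hy : IsGen y) {L : Type*} [Field L] {α β γ : L} {w : ℕ → ℕ → ℕ → L}
    (hw : IsCubeSol α β γ w) (O : Subring L) (hα : α ∈ O) (hβ : β ∈ O) (hγ : γ ∈ O)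
    (h0 : ∀ i j k, (i = 0 ∨ j = 0 ∨ k = 0) → w i j k ∈ O ∧ (w i j k)⁻¹ ∈ O)
    {i j k : ℕ} (hl : Laurent (y i j k)) : w i j k ∈ O := by
  obtain ⟨m, hm, a, e⟩ := hl
  obtain ⟨v, hv⟩ : ∃ v : CubeInit ⊕ Fin 3 → L,
    v = Sum.elim (fun s => w s.1.1 s.1.2.1 s.1.2.2) ![α, β, γ] := ⟨_, rfl⟩
  obtain ⟨ev, hev⟩ : ∃ ev : MvPolynomial (CubeInit ⊕ Fin 3) ℤ →+* L, ∀ s, ev (X s) = v s :=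
    ⟨eval₂Hom (Int.castRingHom L) v, fun s => by simp⟩
  have hvO : ∀ s, v s ∈ O := by
    rintro (⟨⟨i, j, k⟩, h⟩ | s)
    · rw [hv]; exact (h0 i j k h).1
    · rw [hv]; fin_cases s <;> simpa
  have hO : ∀ a, ev a ∈ O := by
    intro a
    induction a using MvPolynomial.induction_on with
    | C n =>
      rw [show (C n : MvPolynomial (CubeInit ⊕ Fin 3) ℤ) = (n : MvPolynomial _ ℤ) by simp, map_intCast]
      exact intCast_mem O n
    | add p q hp hq => rw [map_add]; exact O.add_mem hp hq
    | mul_X p s hp => rw [map_mul, hev]; exact O.mul_mem hp (hvO s)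
  have hM : ∀ m ∈ initMon, ev m ≠ 0 ∧ (ev m)⁻¹ ∈ O := by
    intro m hm
    induction hm using Submonoid.closure_induction with
    | mem x hx =>
      obtain ⟨⟨⟨i, j, k⟩, h⟩, rfl⟩ := hx
      simp only [hev, hv]
      exact ⟨hw.ne _ _ _, (h0 _ _ _ h).2⟩
    | one => simp
    | mul x z _ _ hx hz =>
      rw [map_mul, mul_inv]
      exact ⟨mul_ne_zero hx.1 hz.1, O.mul_mem hx.2 hz.2⟩
  have r1 : Rel ev (y i j k) (w i j k) := by
    apply hy.rel
    · simpa [hev, hv] using hw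
    · intro i j k h
      rw [hev, hv]; rfl
  have r2 : Rel ev (y i j k) (ev a * (ev m)⁻¹) :=
    ⟨a, m, (hM m hm).1, e, by rw [inv_mul_cancel_right₀ (hM m hm).1]⟩
  rw [rel_uniq r1 r2]
  exact O.mul_mem (hO a) (hM m hm).2

lemma IsGen.noVar (hy : IsGen y) {i' j' k' : ℕ} (h' : i' = 0 ∨ j' = 0 ∨ k' = 0) :
    ∀ i j k, ¬ (i' ≤ i ∧ j' ≤ j ∧ k' ≤ k) → NoVar (idx i' j' k' h') (y i j k) := by
  have base : ∀ i j k, (i = 0 ∨ j = 0 ∨ k = 0) → ¬ (i' ≤ i ∧ j' ≤ j ∧ k' ≤ k) →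
      NoVar (idx i' j' k' h') (y i j k) := by
    intro i j k h hn
    rw [hy.bdry _ _ _ h]
    apply noVar_X
    intro e
    have := idx_inj e
    omega
  have cst : ∀ c, NoVar (F := F) (idx i' j' k' h') (ι (X (Sum.inr c))) := by
    intro c
    apply noVar_X
    simp [idx]
  intro i
  induction i with
  | zero => intro j k; exact base _ _ _ (by simp)
  | succ i ihi =>
    intro j
    induction j with
    | zero => intro k; exact base _ _ _ (by simp)
    | succ j ihj =>
      intro k
      induction k with
      | zero => exact base _ _ _ (by simp)
      | succ k ihk =>
        intro hn
        have e1 := eq_div_of_mul_eq (hy.ne _ _ _) (hy.eq i j k)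
        rw [e1, div_eq_mul_inv]
        refine (((((cst _).mul (ihi _ _ ?_)).mul (ihj _ ?_)).add
          (((cst _).mul (ihj _ ?_)).mul (ihi _ _ ?_))).add
          (((cst _).mul (ihk ?_)).mul (ihi _ _ ?_))).mul (ihi _ _ ?_).inv <;> omega

lemma IsGen.tr_sol (hy : IsGen y) {i' j' k' : ℕ} (h' : i' = 0 ∨ j' = 0 ∨ k' = 0) :
    IsCubeSol (ι (X (Sum.inr 0))) (ι (X (Sum.inr 1))) (ι (X (Sum.inr 2)))
      (fun i j k => trF F (idx i' j' k' h') (y i j k)) := by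
  have cst : ∀ c, trF F (idx i' j' k' h') (ι (X (Sum.inr c))) = ι (X (Sum.inr c)) := by
    intro c
    rw [trF_map, tr_X_ne]
    simp [idx]
  have := image hy.toIsCubeSol (trF F (idx i' j' k' h'))
  simpa only [cst] using this

lemma IsGen.tr_init (hy : IsGen y) {i' j' k' : ℕ} (h' : i' = 0 ∨ j' = 0 ∨ k' = 0) :
    trF F (idx i' j' k' h') (y i' j' k') = y i' j' k' + 1 := by
  rw [hy.bdry _ _ _ h', trF_map, tr_X_self]
  simp

lemma IsGen.perturb₁ (hy : IsGen y) (i j k : ℕ) :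
    trF F (idx (i + 1) (j + 1) 0 (by simp)) (y (i + 1) (j + 1) k) - y (i + 1) (j + 1) k =
      (ι (X (Sum.inr 2))) ^ k * y i j k / y i j 0 :=
  perturb hy.toIsCubeSol (hy.tr_sol _) i j
    (fun a b => trF_noVar (hy.noVar _ _ _ _ (by omega)))
    (fun b => trF_noVar (hy.noVar _ _ _ _ (by omega))) (hy.tr_init _) k

lemma IsGen.perturb₂ (hy : IsGen y) (i j k : ℕ) :
    trF F (idx (i + 1) 0 (k + 1) (by simp)) (y (i + 1) j (k + 1)) - y (i + 1) j (k + 1) =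
      (ι (X (Sum.inr 1))) ^ j * y i j k / y i 0 k :=
  perturb (swap hy.toIsCubeSol) (swap (hy.tr_sol _)) i k
    (fun a b => trF_noVar (hy.noVar _ _ _ _ (by omega)))
    (fun b => trF_noVar (hy.noVar _ _ _ _ (by omega))) (hy.tr_init _) j

variable {p : MvPolynomial (CubeInit ⊕ Fin 3) ℤ}

/-- Extracting information from a perturbation. -/
lemma inM_aux (hp : Prime p) {s : CubeInit ⊕ Fin 3} (hs : degreeOf s p = 0) {z g u v : F} {n : ℕ}
    (e : trF F s z - z = g ^ n * u / v) (hz : InM p z) (hg : g ∈ locRing F hp)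
    (hu : u ∈ locRing F hp) (hv : v ∈ locRing F hp) (hv0 : v ≠ 0) : InM p g ∨ InM p u := by
  have h1 := ((trF_inM hs hz).sub hp hz).mul hp hv
  rw [e, div_mul_cancel₀ _ hv0] at h1
  exact (h1.prime hp (Subring.pow_mem _ hg n) hu).imp (fun h => h.pow hp hg) id

section prime

lemma init_not_inM (hy : IsGen y) (hp : Prime p) (hpX : ∀ m ∈ initMon, ¬ p ∣ m)
    (i j k : ℕ) (h : i = 0 ∨ j = 0 ∨ k = 0) : ¬ InM p (y i j k) := by
  rw [hy.bdry _ _ _ h, inM_map hp]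
  exact hpX _ (Submonoid.subset_closure ⟨_, rfl⟩)

lemma init_mem (hy : IsGen y) (hp : Prime p) (hpX : ∀ m ∈ initMon, ¬ p ∣ m)
    (i j k : ℕ) (h : i = 0 ∨ j = 0 ∨ k = 0) :
    y i j k ∈ locRing F hp ∧ (y i j k)⁻¹ ∈ locRing F hp := by
  have : y i j k ∈ locRing F hp := by rw [hy.bdry _ _ _ h]; exact map_mem_loc hp _
  exact ⟨this, inv_mem_loc hp this (init_not_inM hy hp hpX _ _ _ h)⟩

lemma one_mem (hy : IsGen y) (hp : Prime p) (hpX : ∀ m ∈ initMon, ¬ p ∣ m)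
    (j k : ℕ) : y 1 j k ∈ locRing F hp :=
  layer_one hy.toIsCubeSol _ (map_mem_loc hp _) (map_mem_loc hp _) (map_mem_loc hp _)
    (init_mem hy hp hpX) j k

lemma const_ne (hp : Prime p) (h1 : InM (F := F) p (ι (X (Sum.inr 1)))) (h2 : InM (F := F) p (ι (X (Sum.inr 2)))) :
    False := by
  rw [inM_map hp] at h1 h2
  have ha := (hp.irreducible.dvd_irreducible_iff_associated (X_prime (R := ℤ)).irreducible).1 h1
  have := ha.symm.dvd.trans h2
  rw [X_dvd_X] at this
  simp at this

lemma const_deg (hp : Prime p) {c : Fin 3} (h : InM (F := F) p (ι (X (Sum.inr c)))) (i j k h') :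
    degreeOf (idx i j k h') p = 0 := by
  refine prime_noVar (F := F) hp ?_ h (noVar_X (by simp [idx]))
  simp

/-- layer-one elements are coprime to `γ` -/
lemma one_gamma (hy : IsGen y) (hp : Prime p) (hpX : ∀ m ∈ initMon, ¬ p ∣ m)
    {j k : ℕ} (h : InM p (y 1 j k)) : ¬ InM p (ι (X (Sum.inr 2))) := by
  intro h2
  cases k with
  | zero => exact init_not_inM hy hp hpX _ _ _ (by simp) h
  | succ k =>
    rcases inM_aux hp (const_deg hp h2 _ _ _ _) (hy.perturb₂ 0 j k) h (map_mem_loc hp _)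
      (init_mem hy hp hpX _ _ _ (by simp)).1 (init_mem hy hp hpX _ _ _ (by simp)).1
      (hy.ne _ _ _) with h3 | h3
    · exact const_ne hp h3 h2
    · exact init_not_inM hy hp hpX _ _ _ (by simp) h3

lemma one_beta (hy : IsGen y) (hp : Prime p) (hpX : ∀ m ∈ initMon, ¬ p ∣ m)
    {j k : ℕ} (h : InM p (y 1 j k)) : ¬ InM p (ι (X (Sum.inr 1))) := by
  intro h2
  cases j with
  | zero => exact init_not_inM hy hp hpX _ _ _ (by simp) h
  | succ j =>
    rcases inM_aux hp (const_deg hp h2 _ _ _ _) (hy.perturb₁ 0 j k) h (map_mem_loc hp _)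
      (init_mem hy hp hpX _ _ _ (by simp)).1 (init_mem hy hp hpX _ _ _ (by simp)).1
      (hy.ne _ _ _) with h3 | h3
    · exact const_ne hp h2 h3
    · exact init_not_inM hy hp hpX _ _ _ (by simp) h3

lemma one_one (hy : IsGen y) (hp : Prime p) (hpX : ∀ m ∈ initMon, ¬ p ∣ m)
    {a b : ℕ} (h : InM p (y 1 a (b + 1))) (h' : InM p (y 1 (a + 1) b)) : False := by
  have hd : degreeOf (idx (0 + 1) (a + 1) 0 (by simp)) p = 0 :=
    prime_noVar hp (hy.ne _ _ _) h (hy.noVar _ _ _ _ (by omega))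
  rcases inM_aux hp hd (hy.perturb₁ 0 a b) h' (map_mem_loc hp _)
      (init_mem hy hp hpX _ _ _ (by simp)).1 (init_mem hy hp hpX _ _ _ (by simp)).1
      (hy.ne _ _ _) with h3 | h3
  · exact one_gamma hy hp hpX h h3
  · exact init_not_inM hy hp hpX _ _ _ (by simp) h3

/-- layer one and layer two are coprime -/
lemma one_two (hy : IsGen y) (hp : Prime p) (hpX : ∀ m ∈ initMon, ¬ p ∣ m)
    {j k : ℕ} (h : InM p (y 1 j k)) (a b : ℕ) : ¬ InM p (y 2 a b) := by
  intro h'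
  cases a with
  | zero => exact init_not_inM hy hp hpX _ _ _ (by simp) h'
  | succ a =>
  cases b with
  | zero => exact init_not_inM hy hp hpX _ _ _ (by simp) h'
  | succ b =>
  have hd : ∀ a b h', degreeOf (idx (1 + 1) a b h') p = 0 := fun a b h' =>
    prime_noVar hp (hy.ne _ _ _) h (hy.noVar _ _ _ _ (by omega))
  rcases inM_aux hp (hd _ _ _) (hy.perturb₁ 1 a (b + 1)) h' (map_mem_loc hp _)
      (one_mem hy hp hpX _ _) (one_mem hy hp hpX _ _) (hy.ne _ _ _) with h3 | h3
  · exact one_gamma hy hp hpX h h3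
  rcases inM_aux hp (hd _ _ _) (hy.perturb₂ 1 (a + 1) b) h' (map_mem_loc hp _)
      (one_mem hy hp hpX _ _) (one_mem hy hp hpX _ _) (hy.ne _ _ _) with h4 | h4
  · exact one_beta hy hp hpX h h4
  exact one_one hy hp hpX h3 h4

lemma gen_step (hy : IsGen y) (hp : Prime p) (hpX : ∀ m ∈ initMon, ¬ p ∣ m)
    {i : ℕ} (ih : ∀ i' < i + 2, ∀ j k, Laurent (y i' j k)) (j k : ℕ) :
    y (i + 2) j k ∈ locRing F hp := by
  by_cases hc : ∃ a b, InM p (y 1 a b)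
  · obtain ⟨a, b, hab⟩ := hc
    have h2 : ∀ j k, y 2 j k ∈ locRing F hp :=
      layer_two hy.toIsCubeSol _ (map_mem_loc hp _) (map_mem_loc hp _) (map_mem_loc hp _)
        (by simp) (inv_mem_loc hp (map_mem_loc hp _) (one_gamma hy hp hpX hab))
        (init_mem hy hp hpX)
    refine hy.transfer (shift hy.toIsCubeSol 2) (locRing F hp) (map_mem_loc hp _)
      (map_mem_loc hp _) (map_mem_loc hp _) ?_ (ih i (by omega) j k)
    rintro i' j' k' h
    by_cases hi : i' = 0
    · subst hi
      simp only [zero_add]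
      exact ⟨h2 _ _, inv_mem_loc hp (h2 _ _) (one_two hy hp hpX hab _ _)⟩
    · exact init_mem hy hp hpX _ _ _ (by tauto)
  · push Not at hc
    refine hy.transfer (shift hy.toIsCubeSol 1) (locRing F hp) (map_mem_loc hp _)
      (map_mem_loc hp _) (map_mem_loc hp _) ?_ (ih (i + 1) (by omega) j k)
    rintro i' j' k' h
    by_cases hi : i' = 0
    · subst hi
      simp only [zero_add]
      exact ⟨one_mem hy hp hpX _ _, inv_mem_loc hp (one_mem hy hp hpX _ _) (hc _ _)⟩
    · exact init_mem hy hp hpX _ _ _ (by tauto)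

end prime

/-- The generic solution is Laurent. -/
lemma IsGen.laurent (hy : IsGen y) : ∀ i j k, Laurent (y i j k) := by
  intro i
  induction i using Nat.strong_induction_on with
  | _ i ih =>
  intro j k
  obtain ⟨b, hb, a, e⟩ : ∃ b : MvPolynomial (CubeInit ⊕ Fin 3) ℤ, b ≠ 0 ∧
      ∃ a, y i j k * ι b = ι a := by
    obtain ⟨a, b, hb, e⟩ := IsFractionRing.div_surjective (A := MvPolynomial (CubeInit ⊕ Fin 3) ℤ) (y i j k)
    have hb0 : b ≠ 0 := nonZeroDivisors.ne_zero hb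
    exact ⟨b, hb0, a, by rw [← e, div_mul_cancel₀]; simpa using hb0⟩
  refine exists_denom initMon b hb _ ?_ ⟨a, e⟩
  intro p hp hpX
  match i, ih with
  | 0, _ => exact (init_mem hy hp hpX _ _ _ (by simp)).1
  | 1, _ => exact one_mem hy hp hpX _ _
  | i + 2, ih => exact gen_step hy hp hpX ih j k

end cube

end CubeLaurent

/-- The cube recurrence on the octant ℤ≥0³ exhibits the Laurent phenomenon:
each entry is a Laurent polynomial over ℤ[α,β,γ] in the initial entries. -/
theorem cube_recurrence_laurent
    (F : Type*) [Field F] [Algebra (MvPolynomial (CubeInit ⊕ Fin 3) ℤ) F]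
    [IsFractionRing (MvPolynomial (CubeInit ⊕ Fin 3) ℤ) F]
    (x : CubeInit ⊕ Fin 3 → F)
    (hx : ∀ s, x s = algebraMap (MvPolynomial (CubeInit ⊕ Fin 3) ℤ) F (X s))
    (α β γ : F) (hα : α = x (Sum.inr 0)) (hβ : β = x (Sum.inr 1)) (hγ : γ = x (Sum.inr 2))
    (y : ℕ → ℕ → ℕ → F)
    (hinit : ∀ i j k : ℕ, ∀ h : i = 0 ∨ j = 0 ∨ k = 0,
      y i j k = x (Sum.inl ⟨(i, j, k), h⟩))
    (hrec : ∀ i j k : ℕ,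
      y (i + 1) (j + 1) (k + 1) =
        (α * y i (j + 1) (k + 1) * y (i + 1) j k
          + β * y (i + 1) j (k + 1) * y i (j + 1) k
          + γ * y (i + 1) (j + 1) k * y i j (k + 1)) / y i j k) :
    ∀ i j k : ℕ, y i j k ∈ Algebra.adjoin ℤ
      (Set.range (fun s : CubeInit => x (Sum.inl s)) ∪
       Set.range (fun s : CubeInit => (x (Sum.inl s))⁻¹) ∪ {α, β, γ}) := by
  obtain ⟨ev, hev⟩ : ∃ ev : MvPolynomial (CubeInit ⊕ Fin 3) ℤ →+* ℚ, ∀ s, ev (X s) = 1 :=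
    ⟨eval₂Hom (Int.castRingHom ℚ) (fun _ => 1), fun s => by simp⟩
  have hpos : ∀ i j k, ∃ q : ℚ, 0 < q ∧ CubeLaurent.Rel ev (y i j k) q := by
    have rx : ∀ s, CubeLaurent.Rel ev (x s) 1 := by
      intro s
      rw [hx, ← hev s]
      exact CubeLaurent.rel_map _
    have base : ∀ i j k, (i = 0 ∨ j = 0 ∨ k = 0) →
        ∃ q : ℚ, 0 < q ∧ CubeLaurent.Rel ev (y i j k) q := by
      intro i j k h
      rw [hinit i j k h]
      exact ⟨1, one_pos, rx _⟩
    intro i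
    induction i with
    | zero => intro j k; exact base _ _ _ (by simp)
    | succ i ihi =>
      intro j
      induction j with
      | zero => intro k; exact base _ _ _ (by simp)
      | succ j ihj =>
        intro k
        induction k with
        | zero => exact base _ _ _ (by simp)
        | succ k ihk =>
          obtain ⟨q1, p1, r1⟩ := ihi (j + 1) (k + 1)
          obtain ⟨q2, p2, r2⟩ := ihj k
          obtain ⟨q3, p3, r3⟩ := ihj (k + 1)
          obtain ⟨q4, p4, r4⟩ := ihi (j + 1) k
          obtain ⟨q5, p5, r5⟩ := ihk
          obtain ⟨q6, p6, r6⟩ := ihi j (k + 1)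
          obtain ⟨q7, p7, r7⟩ := ihi j k
          refine ⟨(1 * q1 * q2 + 1 * q3 * q4 + 1 * q5 * q6) * q7⁻¹, by positivity, ?_⟩
          rw [hrec, div_eq_mul_inv, hα, hβ, hγ]
          exact CubeLaurent.rel_mul (CubeLaurent.rel_add (CubeLaurent.rel_add
            (CubeLaurent.rel_mul (CubeLaurent.rel_mul (rx _) r1) r2)
            (CubeLaurent.rel_mul (CubeLaurent.rel_mul (rx _) r3) r4))
            (CubeLaurent.rel_mul (CubeLaurent.rel_mul (rx _) r5) r6))
            (CubeLaurent.rel_inv r7 p7.ne')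
  have hne : ∀ i j k, y i j k ≠ 0 := by
    intro i j k
    obtain ⟨q, hq, r⟩ := hpos i j k
    exact CubeLaurent.rel_ne r hq.ne'
  have hsol : IsCubeSol α β γ y := ⟨hne, fun i j k => by
    rw [hrec, div_mul_cancel₀ _ (hne _ _ _)]⟩
  have hgen : CubeLaurent.IsGen y := by
    refine ⟨?_, ?_⟩
    · rw [← hx, ← hx, ← hx, ← hα, ← hβ, ← hγ]; exact hsol
    · intro i j k h
      rw [hinit i j k h, hx]; rfl
  intro i j k
  refine hgen.transfer hsol (Algebra.adjoin ℤ
      (Set.range (fun s : CubeInit => x (Sum.inl s)) ∪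
       Set.range (fun s : CubeInit => (x (Sum.inl s))⁻¹) ∪ {α, β, γ})).toSubring
    (Algebra.subset_adjoin (by simp)) (Algebra.subset_adjoin (by simp))
    (Algebra.subset_adjoin (by simp)) ?_ (hgen.laurent i j k)
  intro i j k h
  rw [hinit i j k h]
  exact ⟨Algebra.subset_adjoin (Or.inl (Or.inl ⟨_, rfl⟩)),
    Algebra.subset_adjoin (Or.inl (Or.inr ⟨_, rfl⟩))⟩
end

section
/- Let y : {(i,j,k) ∈ ℤ³ : i+j+k even, k ≥ 0} → F satisfy the octahedron recurrence y_{i,j,k} = (α y_{i+1,j,k−1} y_{i−1,j,k−1} + β y_{i,j+1,k−1} y_{i,j−1,k−1})/y_{i,j,k−2} for k ≥ 2, where the entries with k ∈ {0,1} are independent indeterminates and F is the field of rational functions in them over ℤ[α,β]. Then every y_{i,j,k} is a Laurent polynomial in the initial entries with coefficients in ℤ[α,β]. -/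
open MvPolynomial

/-- Index set for the initial cluster of the octahedron recurrence on the
half-lattice: points (i,j,k) with i+j+k even and k ∈ {0,1}. -/
def OctInit : Type :=
  {p : ℤ × ℤ × ℤ // Even (p.1 + p.2.1 + p.2.2) ∧ (p.2.2 = 0 ∨ p.2.2 = 1)}


namespace OctProof

/-- Variables, in the coordinates u = (i+j+k)/2, w = (i-j+k)/2. -/
inductive Vr : Type
  | y0 (u w : ℤ) : Vr
  | y1 (u w : ℤ) : Vr
  | al : Vr
  | be : Vr

abbrev S := MvPolynomial Vr ℤ

noncomputable def M : Submonoid S := Submonoid.closure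
  ((Set.range fun p : ℤ × ℤ => (X (Vr.y0 p.1 p.2) : S)) ∪
    Set.range fun p : ℤ × ℤ => (X (Vr.y1 p.1 p.2) : S))

lemma M_le : M ≤ nonZeroDivisors S := by
  refine Submonoid.closure_le.2 ?_
  rintro _ (⟨p, rfl⟩ | ⟨p, rfl⟩)
  · exact mem_nonZeroDivisors_of_ne_zero (X_ne_zero _)
  · exact mem_nonZeroDivisors_of_ne_zero (X_ne_zero _)

abbrev R := Localization M

instance : IsDomain R := IsLocalization.isDomain_localization M_le

noncomputable def g (v : Vr) : R := algebraMap S R (X v)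

lemma isUnit_y0 (u w : ℤ) : IsUnit (g (Vr.y0 u w)) :=
  IsLocalization.map_units R (⟨_, Submonoid.subset_closure (Or.inl ⟨(u, w), rfl⟩)⟩ : M)

lemma isUnit_y1 (u w : ℤ) : IsUnit (g (Vr.y1 u w)) :=
  IsLocalization.map_units R (⟨_, Submonoid.subset_closure (Or.inr ⟨(u, w), rfl⟩)⟩ : M)

lemma exists_hom {A : Type*} [CommRing A] (f : Vr → A)
    (h0 : ∀ u w, IsUnit (f (Vr.y0 u w))) (h1 : ∀ u w, IsUnit (f (Vr.y1 u w))) :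
    ∃ φ : R →+* A, ∀ v, φ (g v) = f v := by
  have hM : ∀ m : M, IsUnit ((aeval f : S →ₐ[ℤ] A).toRingHom m) := by
    rintro ⟨m, hm⟩
    have : M ≤ (IsUnit.submonoid A).comap (aeval f : S →ₐ[ℤ] A).toRingHom := by
      refine Submonoid.closure_le.2 ?_
      rintro _ (⟨p, rfl⟩ | ⟨p, rfl⟩)
      · simpa [IsUnit.mem_submonoid_iff] using h0 _ _
      · simpa [IsUnit.mem_submonoid_iff] using h1 _ _
    exact this hm
  refine ⟨IsLocalization.lift hM, fun v => ?_⟩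
  simp [g]

lemma hom_ext {A : Type*} [CommRing A] (φ ψ : R →+* A) (h : ∀ v, φ (g v) = ψ (g v)) :
    φ = ψ := by
  refine IsLocalization.ringHom_ext M ?_
  refine MvPolynomial.ringHom_ext (fun n => by simp) (fun v => h v)

/-- Right-hand side of the recurrence. -/
def num {A : Type*} [CommRing A] (a b : A) (z : ℤ → ℤ → A) (u w : ℤ) : A :=
  a * z u w * z (u - 1) (w - 1) + b * z u (w - 1) * z (u - 1) w

/-- Solution up to level n. -/
def Sol {A : Type*} [CommRing A] (a b : A) (z : ℕ → ℤ → ℤ → A) (n : ℕ) : Prop :=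
  ∀ k, k + 2 ≤ n → ∀ u w, z (k + 2) u w * z k (u - 1) (w - 1) = num a b (z (k + 1)) u w

structure Gen (Y : ℕ → ℤ → ℤ → R) (n : ℕ) : Prop where
  i0 : ∀ u w, Y 0 u w = g (Vr.y0 u w)
  i1 : ∀ u w, Y 1 u w = g (Vr.y1 u w)
  sol : Sol (g Vr.al) (g Vr.be) Y n

lemma map_num {A B : Type*} [CommRing A] [CommRing B] (φ : A →+* B) (a b : A)
    (z : ℤ → ℤ → A) (u w : ℤ) :
    φ (num a b z u w) = num (φ a) (φ b) (fun u w => φ (z u w)) u w := by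
  simp [num]

/-- Specialization. -/
lemma spec {A : Type*} [CommRing A] [IsDomain A] {Y : ℕ → ℤ → ℤ → R} {n : ℕ} (hY : Gen Y n)
    (φ : R →+* A) (z : ℕ → ℤ → ℤ → A) (N : ℕ) (hN : N ≤ n)
    (h0 : ∀ u w, φ (g (Vr.y0 u w)) = z 0 u w)
    (h1 : ∀ u w, φ (g (Vr.y1 u w)) = z 1 u w)
    (hz : Sol (φ (g Vr.al)) (φ (g Vr.be)) z N)
    (hne : ∀ k, k + 2 ≤ N → ∀ u w, z k u w ≠ 0) :
    ∀ k, k ≤ N → ∀ u w, φ (Y k u w) = z k u w := by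
  intro k
  induction k using Nat.strong_induction_on with
  | _ k ih =>
    intro hk u w
    match k, ih, hk with
    | 0, _, _ => rw [hY.i0, h0]
    | 1, _, _ => rw [hY.i1, h1]
    | k + 2, ih, hk =>
      have e1 := congrArg φ (hY.sol k (by omega) u w)
      have e2 := hz k hk u w
      rw [map_mul, map_num] at e1
      have e3 : (fun u w => φ (Y (k + 1) u w)) = z (k + 1) := by
        funext u w; exact ih (k + 1) (by omega) (by omega) u w
      rw [e3, ← e2, ih k (by omega) (by omega)] at e1
      exact mul_right_cancel₀ (hne k hk _ _) e1

lemma gen_ne_zero {Y : ℕ → ℤ → ℤ → R} {n : ℕ} (hY : Gen Y n) :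
    ∀ k, k ≤ n → ∀ u w, Y k u w ≠ 0 := by
  obtain ⟨φ, hφ⟩ := exists_hom (A := ℚ) (fun _ => 1) (by simp) (by simp)
  have key : ∀ k, k ≤ n → ∀ u w, 0 < φ (Y k u w) := by
    intro k
    induction k using Nat.strong_induction_on with
    | _ k ih =>
      intro hk u w
      match k, ih, hk with
      | 0, _, _ => rw [hY.i0, hφ]; norm_num
      | 1, _, _ => rw [hY.i1, hφ]; norm_num
      | k + 2, ih, hk =>
        have e1 := congrArg φ (hY.sol k (by omega) u w)
        rw [map_mul, map_num] at e1
        have p1 := fun u w => ih (k + 1) (by omega) (by omega) u w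
        have p0 := ih k (by omega) (by omega) (u - 1) (w - 1)
        have : 0 < φ (Y (k + 2) u w) * φ (Y k (u - 1) (w - 1)) := by
          rw [e1]
          simp only [num, hφ]
          have := mul_pos (p1 u w) (p1 (u - 1) (w - 1))
          have := mul_pos (p1 u (w - 1)) (p1 (u - 1) w)
          linarith
        exact pos_of_mul_pos_left this p0.le
  intro k hk u w h
  have := key k hk u w
  rw [h, map_zero] at this
  exact lt_irrefl _ this

/-- Multiplicative set generated by levels s and s+1. -/
noncomputable def Ms (Y : ℕ → ℤ → ℤ → R) (s : ℕ) : Submonoid R := Submonoid.closure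
  ((Set.range fun p : ℤ × ℤ => Y s p.1 p.2) ∪ Set.range fun p : ℤ × ℤ => Y (s + 1) p.1 p.2)

lemma Ms_le {Y : ℕ → ℤ → ℤ → R} {n s : ℕ} (hY : Gen Y n) (hs : s + 1 ≤ n) :
    Ms Y s ≤ nonZeroDivisors R := by
  have hne := gen_ne_zero hY
  refine Submonoid.closure_le.2 ?_
  rintro _ (⟨p, rfl⟩ | ⟨p, rfl⟩)
  · exact mem_nonZeroDivisors_of_ne_zero (hne _ (by omega) _ _)
  · exact mem_nonZeroDivisors_of_ne_zero (hne _ (by omega) _ _)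

lemma shift_dvd_aux {Y : ℕ → ℤ → ℤ → R} {n s t : ℕ} (hY : Gen Y n) (hs : 1 ≤ s)
    (hst : s + t + 1 = n) (u w : ℤ)
    (A : Type) [CommRing A] [IsDomain A] [Algebra R A] [IsLocalization (Ms Y s) A]
    (hle : Ms Y s ≤ nonZeroDivisors R) :
    ∃ m ∈ Ms Y s, Y (s + t) (u - 1) (w - 1) ∣ m * num (g Vr.al) (g Vr.be) (Y (s + t + 1)) u w := by
  have hne := gen_ne_zero hY
  obtain ⟨ι, hιdef⟩ : ∃ ι : R →+* A, ι = algebraMap R A := ⟨_, rfl⟩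
  have hι : Function.Injective ι := hιdef ▸ IsLocalization.injective A hle
  obtain ⟨φ, hφ⟩ := exists_hom (A := A)
    (fun v => match v with
      | Vr.y0 u w => ι (Y s u w)
      | Vr.y1 u w => ι (Y (s + 1) u w)
      | Vr.al => ι (g Vr.al)
      | Vr.be => ι (g Vr.be))
    (fun u w => hιdef ▸ IsLocalization.map_units A
      (⟨_, Submonoid.subset_closure (Or.inl ⟨(u, w), rfl⟩)⟩ : Ms Y s))
    (fun u w => hιdef ▸ IsLocalization.map_units A
      (⟨_, Submonoid.subset_closure (Or.inr ⟨(u, w), rfl⟩)⟩ : Ms Y s))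
  have hsp := spec hY φ (fun k u w => ι (Y (s + k) u w)) (t + 1) (by omega)
    (fun u w => hφ _) (fun u w => hφ _)
    (by
      intro k hk u w
      have := congrArg ι (hY.sol (s + k) (by omega) u w)
      rw [map_mul, map_num] at this
      rw [hφ, hφ]
      exact this)
    (by
      intro k hk u w h
      exact hne (s + k) (by omega) u w (hι (by rw [h, map_zero])))
  have e1 := congrArg φ (hY.sol t (by omega) u w)
  rw [map_mul, map_num, hsp t (by omega), hφ, hφ] at e1
  have e3 : (fun u w => φ (Y (t + 1) u w)) = fun u w => ι (Y (s + t + 1) u w) := by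
    funext u w; exact hsp (t + 1) le_rfl u w
  rw [e3, ← map_num] at e1
  obtain ⟨⟨r, m⟩, hr⟩ := IsLocalization.surj (Ms Y s) (φ (Y (t + 2) u w))
  refine ⟨m, m.2, r, hι ?_⟩
  rw [map_mul, map_mul, ← e1]
  rw [← hιdef] at hr
  simp only at hr
  rw [← hr]
  ring

lemma shift_dvd {Y : ℕ → ℤ → ℤ → R} {n s t : ℕ} (hY : Gen Y n) (hs : 1 ≤ s)
    (hst : s + t + 1 = n) (u w : ℤ) :
    ∃ m ∈ Ms Y s, Y (s + t) (u - 1) (w - 1) ∣ m * num (g Vr.al) (g Vr.be) (Y (s + t + 1)) u w := by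
  have hle := Ms_le hY (s := s) (by omega)
  have : IsDomain (Localization (Ms Y s)) := IsLocalization.isDomain_localization hle
  exact shift_dvd_aux hY hs hst u w (Localization (Ms Y s)) hle

lemma alg_identity {A : Type*} [CommRing A] (al be a b c d Y0 Z A1 A2 B1 B2 p q r s T1 T2 T3 T4 : A)
    (hZ : Z * Y0 = al * a * c + be * b * d)
    (h1 : T1 * a = al * A1 * Z + be * p * q)
    (h2 : T2 * c = al * Z * A2 + be * r * s)
    (h3 : T3 * b = al * p * r + be * B1 * Z)
    (h4 : T4 * d = al * q * s + be * Z * B2) :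
    (al * T1 * T2 + be * T3 * T4) * (a * b * c * d) =
    Z * (al * be * p * q * r * s * Y0 + al ^ 2 * be * b * d * (A1 * r * s + A2 * p * q)
      + al * be ^ 2 * a * c * (p * r * B2 + q * s * B1)
      + Z * (al ^ 3 * b * d * A1 * A2 + be ^ 3 * a * c * B1 * B2)) := by
  have e1 : (al * T1 * T2 + be * T3 * T4) * (a * b * c * d) =
    al * b * d * (T1 * a) * (T2 * c) + be * a * c * (T3 * b) * (T4 * d) := by ring
  rw [e1, h1, h2, h3, h4]
  linear_combination (-al * be * p * q * r * s) * hZ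

/-- The bracket. -/
lemma level4 {Y : ℕ → ℤ → ℤ → R} {n : ℕ} (hY : Gen Y n) (hn : 3 ≤ n) (u w : ℤ) :
    num (g Vr.al) (g Vr.be) (Y 3) (u + 1) (w + 1) *
      (Y 1 u w * Y 1 u (w - 1) * Y 1 (u - 1) (w - 1) * Y 1 (u - 1) w) =
    Y 2 u w * (g Vr.al * g Vr.be * Y 2 (u + 1) w * Y 2 u (w + 1) * Y 2 u (w - 1) * Y 2 (u - 1) w
        * Y 0 (u - 1) (w - 1)
      + g Vr.al ^ 2 * g Vr.be * Y 1 u (w - 1) * Y 1 (u - 1) w *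
        (Y 2 (u + 1) (w + 1) * Y 2 u (w - 1) * Y 2 (u - 1) w
          + Y 2 (u - 1) (w - 1) * Y 2 (u + 1) w * Y 2 u (w + 1))
      + g Vr.al * g Vr.be ^ 2 * Y 1 u w * Y 1 (u - 1) (w - 1) *
        (Y 2 (u + 1) w * Y 2 u (w - 1) * Y 2 (u - 1) (w + 1)
          + Y 2 u (w + 1) * Y 2 (u - 1) w * Y 2 (u + 1) (w - 1))
      + Y 2 u w * (g Vr.al ^ 3 * Y 1 u (w - 1) * Y 1 (u - 1) w
            * Y 2 (u + 1) (w + 1) * Y 2 (u - 1) (w - 1)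
          + g Vr.be ^ 3 * Y 1 u w * Y 1 (u - 1) (w - 1)
            * Y 2 (u + 1) (w - 1) * Y 2 (u - 1) (w + 1))) := by
  have hZ := hY.sol 0 (by omega) u w
  have h1 := hY.sol 1 (by omega) (u + 1) (w + 1)
  have h2 := hY.sol 1 (by omega) u w
  have h3 := hY.sol 1 (by omega) (u + 1) w
  have h4 := hY.sol 1 (by omega) u (w + 1)
  simp only [num, add_sub_cancel_right, Nat.reduceAdd, zero_add] at hZ h1 h2 h3 h4 ⊢
  exact alg_identity _ _ _ _ _ _ _ _ _ _ _ _ _ _ _ _ _ _ _ _ hZ h1 h2 h3 h4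

lemma step {Y : ℕ → ℤ → ℤ → R} {n : ℕ} (hY : Gen Y (n + 1))
    (h : ∀ u w, Y n (u - 1) (w - 1) ∣ num (g Vr.al) (g Vr.be) (Y (n + 1)) u w) :
    ∃ Y', Gen Y' (n + 2) := by
  choose W hW using h
  refine ⟨fun k => if k = n + 2 then W else Y k, ?_, ?_, ?_⟩
  · intro u w; simpa using hY.i0 u w
  · intro u w
    have : (1 : ℕ) ≠ n + 2 := by omega
    simpa [this] using hY.i1 u w
  · intro k hk u w
    have a1 : k ≠ n + 2 := by omega
    have a2 : k + 1 ≠ n + 2 := by omega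
    by_cases a3 : k + 2 = n + 2
    · obtain rfl : k = n := by omega
      simp only [if_neg a1, if_neg a2, if_true]
      rw [hW, mul_comm]
    · simp only [if_neg a1, if_neg a2, if_neg a3]
      exact hY.sol k (by omega) u w

/-- Level 2 elements are prime. -/
lemma prime2 {Y : ℕ → ℤ → ℤ → R} {n : ℕ} (hY : Gen Y n) (hn : 2 ≤ n) (u w : ℤ) :
    Prime (Y 2 u w) := by
  have hne := gen_ne_zero hY
  obtain ⟨ai, hai⟩ := (isUnit_y1 u w).exists_right_inv
  obtain ⟨ci, hci⟩ := (isUnit_y1 (u - 1) (w - 1)).exists_right_inv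
  obtain ⟨yi, hyi⟩ := (isUnit_y0 (u - 1) (w - 1)).exists_right_inv
  have hZ := hY.sol 0 (by omega) u w
  simp only [num, zero_add] at hZ
  simp only [hY.i0, hY.i1] at hZ
  obtain ⟨φ, hφ⟩ := exists_hom (A := R)
    (fun v => match v with
      | Vr.y0 u w => g (Vr.y0 u w)
      | Vr.y1 u w => g (Vr.y1 u w)
      | Vr.al => - (g Vr.be * g (Vr.y1 u (w - 1)) * g (Vr.y1 (u - 1) w)) * ai * ci
      | Vr.be => g Vr.be)
    (fun u w => isUnit_y0 u w) (fun u w => isUnit_y1 u w)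
  have hφZ : φ (Y 2 u w) = 0 := by
    have e := congrArg φ hZ
    simp only [map_mul, map_add, hφ] at e
    have : φ (Y 2 u w) * g (Vr.y0 (u - 1) (w - 1)) = 0 := by
      rw [e]
      linear_combination (-(g Vr.be * g (Vr.y1 u (w - 1)) * g (Vr.y1 (u - 1) w))) *
        (g (Vr.y1 (u-1) (w-1)) * ci * hai + hci)
    exact (mul_eq_zero.1 this).resolve_right (isUnit_y0 _ _).ne_zero
  have hmod : ∀ r, Y 2 u w ∣ r - φ r := by
    have : (Ideal.Quotient.mk (Ideal.span {Y 2 u w}) : R →+* R ⧸ Ideal.span {Y 2 u w}) =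
        (Ideal.Quotient.mk (Ideal.span {Y 2 u w}) : R →+* R ⧸ Ideal.span {Y 2 u w}).comp φ := by
      refine hom_ext (A := R ⧸ Ideal.span {Y 2 u w}) _ _ fun v => ?_
      rw [RingHom.comp_apply, hφ, Ideal.Quotient.eq, Ideal.mem_span_singleton]
      cases v with
      | y0 u w => simp
      | y1 u w => simp
      | be => simp
      | al =>
        refine ⟨g (Vr.y0 (u - 1) (w - 1)) * ai * ci, ?_⟩
        linear_combination (-ai * ci) * hZ
          - g Vr.al * (g (Vr.y1 (u-1) (w-1)) * ci * hai + hci)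
    intro r
    refine Ideal.mem_span_singleton.1 (Ideal.Quotient.eq.1 ?_)
    exact congrFun (congrArg DFunLike.coe this) r
  have hiff : ∀ r, Y 2 u w ∣ r ↔ φ r = 0 := by
    intro r
    constructor
    · rintro ⟨c, rfl⟩
      rw [map_mul, hφZ, zero_mul]
    · intro h
      simpa [h] using hmod r
  refine ⟨hne 2 hn u w, fun hu => ?_, fun x y hxy => ?_⟩
  · have := hu.map φ
    rw [hφZ] at this
    exact not_isUnit_zero this
  · rw [hiff, map_mul] at hxy
    rw [hiff, hiff]
    exact mul_eq_zero.1 hxy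

/-- Initial values at level 1 making the level 2 entry at (U, W) vanish. -/
def f0 (u w : ℤ) : ℚ :=
  if u = 0 ∧ w = 0 then -1
  else if (u = 1 ∧ w = 1) ∨ (u = 1 ∧ w = -1) ∨ (u = -1 ∧ w = 1) then 1 / 2
  else 1

/-- Translate of the previous function. -/
def f (U W u w : ℤ) : ℚ := f0 (u - U) (w - W)

lemma f_pos {U W u w : ℤ} (h : ¬ (u = U ∧ w = W)) : 0 < f U W u w := by
  unfold f f0
  rw [if_neg (by omega)]
  split_ifs <;> norm_num

lemma f_ne {U W u w : ℤ} : f U W u w ≠ 0 := by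
  unfold f f0
  split_ifs <;> norm_num

lemma f_zero (U W : ℤ) : num 1 1 (f U W) U W = 0 := by
  simp only [num, f]
  ring_nf
  norm_num [f0]

lemma f_num_pos {U W u w : ℤ} (h : ¬ (u = U ∧ w = W)) : 0 < num 1 1 (f U W) u w := by
  by_cases h1 : u = U + 1 ∧ w = W + 1
  · obtain ⟨rfl, rfl⟩ := h1
    simp only [num, f]
    ring_nf
    norm_num [f0]
  by_cases h2 : u = U + 1 ∧ w = W
  · obtain ⟨rfl, rfl⟩ := h2
    simp only [num, f]
    ring_nf
    norm_num [f0]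
  by_cases h3 : u = U ∧ w = W + 1
  · obtain ⟨rfl, rfl⟩ := h3
    simp only [num, f]
    ring_nf
    norm_num [f0]
  have p1 := mul_pos (f_pos h) (f_pos (U := U) (W := W) (u := u - 1) (w := w - 1) (by omega))
  have p2 := mul_pos (f_pos (U := U) (W := W) (u := u) (w := w - 1) (by omega))
    (f_pos (U := U) (W := W) (u := u - 1) (w := w) (by omega))
  simp only [num]
  linarith

lemma chi {Y : ℕ → ℤ → ℤ → R} {n : ℕ} (hY : Gen Y n) (hn : 3 ≤ n) (F : ℤ → ℤ → ℚ) (U W : ℤ)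
    (hF : ∀ u w, F u w ≠ 0) (hF0 : num 1 1 F U W = 0)
    (hFp : ∀ u w, ¬ (u = U ∧ w = W) → 0 < num 1 1 F u w) :
    ∃ φ : R →+* ℚ, φ (g Vr.al) = 1 ∧ φ (g Vr.be) = 1 ∧ (∀ u w, φ (Y 0 u w) = 1) ∧
      (∀ u w, φ (Y 1 u w) = F u w) ∧ (∀ u w, φ (Y 2 u w) = num 1 1 F u w) ∧
      (∀ u w, 0 < φ (Y 3 u w) * F (u - 1) (w - 1)) := by
  obtain ⟨φ, hφ⟩ := exists_hom (A := ℚ)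
    (fun v => match v with
      | Vr.y1 u w => F u w
      | _ => 1)
    (fun u w => by simp) (fun u w => by simpa using hF u w)
  have a0 : ∀ u w, φ (Y 0 u w) = 1 := fun u w => by rw [hY.i0, hφ]
  have a1 : ∀ u w, φ (Y 1 u w) = F u w := fun u w => by rw [hY.i1, hφ]
  have a2 : ∀ u w, φ (Y 2 u w) = num 1 1 F u w := by
    intro u w
    have e := congrArg φ (hY.sol 0 (by omega) u w)
    simp only [map_num, map_mul, hφ, zero_add, a0, a1, mul_one] at e
    exact e
  refine ⟨φ, hφ _, hφ _, a0, a1, a2, fun u w => ?_⟩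
  have e := congrArg φ (hY.sol 1 (by omega) u w)
  simp only [map_num, map_mul, hφ, Nat.reduceAdd, a1, a2] at e
  rw [e]
  have hnn : ∀ u w, 0 ≤ num 1 1 F u w := by
    intro u w
    by_cases h : u = U ∧ w = W
    · rw [h.1, h.2, hF0]
    · exact (hFp u w h).le
  rw [num]
  by_cases h : (u = U ∧ w = W) ∨ (u - 1 = U ∧ w - 1 = W)
  · have p1 := mul_nonneg (hnn u w) (hnn (u - 1) (w - 1))
    have p2 := mul_pos (hFp u (w - 1) (by omega)) (hFp (u - 1) w (by omega))
    linarith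
  · have p1 := mul_pos (hFp u w (by omega)) (hFp (u - 1) (w - 1) (by omega))
    have p2 := mul_nonneg (hnn u (w - 1)) (hnn (u - 1) w)
    linarith

lemma not_dvd_of {A : Type*} [CommRing A] (φ : R →+* A) {a b : R} (ha : φ a = 0) (hb : φ b ≠ 0) :
    ¬ a ∣ b := by
  rintro ⟨c, rfl⟩
  exact hb (by rw [map_mul, ha, zero_mul])

lemma not_dvd3 {Y : ℕ → ℤ → ℤ → R} {n : ℕ} (hY : Gen Y n) (hn : 3 ≤ n) (U W u w : ℤ) :
    ¬ Y 2 U W ∣ Y 3 u w := by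
  obtain ⟨φ, _, _, _, _, a2, a3⟩ := chi hY hn (f U W) U W (fun _ _ => f_ne) (f_zero U W)
    (fun _ _ => f_num_pos)
  exact not_dvd_of φ (by rw [a2, f_zero]) (left_ne_zero_of_mul (a3 u w).ne')

lemma not_dvd4_of {Y : ℕ → ℤ → ℤ → R} {n : ℕ} (hY : Gen Y n) (hn : 4 ≤ n)
    (F : ℤ → ℤ → ℚ) (U W u w : ℤ)
    (hF : ∀ u w, F u w ≠ 0) (hF0 : num 1 1 F U W = 0)
    (hFp : ∀ u w, ¬ (u = U ∧ w = W) → 0 < num 1 1 F u w)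
    (h1 : 0 < F (u - 1) (w - 1)) (h2 : 0 < F (u - 1 - 1) (w - 1 - 1))
    (h3 : 0 < F (u - 1) (w - 1 - 1)) (h4 : 0 < F (u - 1 - 1) (w - 1)) :
    ¬ Y 2 U W ∣ Y 4 u w := by
  obtain ⟨φ, hal, hbe, _, _, a2, a3⟩ := chi hY (by omega) F U W hF hF0 hFp
  refine not_dvd_of φ (by rw [a2, hF0]) ?_
  have e := congrArg φ (hY.sol 2 (by omega) u w)
  simp only [map_num, map_mul, hal, hbe, Nat.reduceAdd] at e
  have p1 := pos_of_mul_pos_left (a3 u w) h1.le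
  have p2 := pos_of_mul_pos_left (a3 (u - 1) (w - 1)) h2.le
  have p3 := pos_of_mul_pos_left (a3 u (w - 1)) h3.le
  have p4 := pos_of_mul_pos_left (a3 (u - 1) w) h4.le
  refine left_ne_zero_of_mul (b := φ (Y 2 (u - 1) (w - 1))) ?_
  rw [e, num]
  have := mul_pos p1 p2
  have := mul_pos p3 p4
  apply ne_of_gt
  linarith

lemma not_dvd4 {Y : ℕ → ℤ → ℤ → R} {n : ℕ} (hY : Gen Y n) (hn : 4 ≤ n) (U W u w : ℤ) :
    ¬ Y 2 U W ∣ Y 4 u w := by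
  by_cases hv : u = U + 1 ∧ w = W + 1
  · obtain ⟨rfl, rfl⟩ := hv
    obtain ⟨φ, hal, hbe, a0, a1, a2, a3⟩ := chi hY (by omega) (f U W) U W (fun _ _ => f_ne)
      (f_zero U W) (fun _ _ => f_num_pos)
    refine not_dvd_of φ (by rw [a2, f_zero]) ?_
    have e := hY.sol 2 (by omega) (U + 1) (W + 1)
    have e4 := level4 hY (by omega) U W
    simp only [Nat.reduceAdd] at e
    rw [← e, add_sub_cancel_right, add_sub_cancel_right, mul_comm (Y 4 _ _), mul_assoc] at e4
    have e5 := congrArg φ (mul_left_cancel₀ (gen_ne_zero hY 2 (by omega) U W) e4)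
    simp only [map_mul, map_add, map_pow, hal, hbe, a0, a1, a2, f_zero] at e5
    refine left_ne_zero_of_mul (ne_of_eq_of_ne e5 ?_)
    simp only [num, f]
    ring_nf
    norm_num [f0]
  · by_cases h : (u - 1 = U ∨ u - 2 = U) ∧ (w - 1 = W ∨ w - 2 = W)
    · -- reflected choice
      refine not_dvd4_of hY hn (fun u w => f U W (2 * U - 1 - u) (2 * W - 1 - w)) U W u w
        (fun _ _ => f_ne) ?_ ?_ (f_pos (by omega)) (f_pos (by omega)) (f_pos (by omega))
        (f_pos (by omega))
      · have := f_zero U W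
        rw [← this]
        simp only [num]
        ring_nf
      · intro u w huw
        have := f_num_pos (U := U) (W := W) (u := 2 * U - u) (w := 2 * W - w) (by omega)
        simp only [num] at this ⊢
        ring_nf at this ⊢
        exact this
    · exact not_dvd4_of hY hn (f U W) U W u w
        (fun _ _ => f_ne) (f_zero U W) (fun _ _ => f_num_pos) (f_pos (by omega))
        (f_pos (by omega)) (f_pos (by omega)) (f_pos (by omega))

lemma main_step {Y : ℕ → ℤ → ℤ → R} {n : ℕ} (hY : Gen Y (n + 1)) (hn : 3 ≤ n) (u w : ℤ) :
    Y n (u - 1) (w - 1) ∣ num (g Vr.al) (g Vr.be) (Y (n + 1)) u w := by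
  obtain ⟨t, rfl⟩ : ∃ t, n = 3 + t := ⟨n - 3, by omega⟩
  obtain ⟨m3, hm3, s, hs⟩ := shift_dvd (s := 3) (t := t) hY (by omega) (by omega) u w
  obtain ⟨m1, hm1, r, hr⟩ := shift_dvd (s := 1) (t := t + 2) hY (by omega) (by omega) u w
  have ht : 1 + (t + 2) = 3 + t := by omega
  rw [ht] at hr
  have hne := gen_ne_zero hY (3 + t) (by omega) (u - 1) (w - 1)
  have hP : ∀ U W, ¬ Y 2 U W ∣ m3 := by
    intro U W
    have hp := prime2 hY (by omega) U W
    clear hs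
    induction hm3 using Submonoid.closure_induction with
    | mem x hx =>
      rcases hx with ⟨p, rfl⟩ | ⟨p, rfl⟩
      · exact not_dvd3 hY (by omega) _ _ _ _
      · exact not_dvd4 hY (by omega) _ _ _ _
    | one => exact hp.not_dvd_one
    | mul x y _ _ hx hy =>
      intro h
      exact (hp.dvd_or_dvd h).elim hx hy
  have key : ∀ a, m1 ∣ a * m3 → m1 ∣ a := by
    clear hr
    induction hm1 using Submonoid.closure_induction with
    | mem x hx =>
      rcases hx with ⟨p, rfl⟩ | ⟨p, rfl⟩
      · intro a _
        refine IsUnit.dvd ?_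
        simp only [hY.i1]
        exact isUnit_y1 _ _
      · intro a h
        exact ((prime2 hY (by omega) p.1 p.2).dvd_or_dvd h).resolve_right (hP _ _)
    | one => intro a _; exact one_dvd _
    | mul x y _ _ hx hy =>
      rintro a ⟨c, hc⟩
      obtain ⟨a', rfl⟩ := hx a ⟨y * c, by rw [hc]; ring⟩
      rcases eq_or_ne x 0 with rfl | hx0
      · simp
      obtain ⟨b, rfl⟩ := hy a' ⟨c, by apply mul_left_cancel₀ hx0; linear_combination hc⟩
      exact ⟨b, by ring⟩
  have h1 : m3 * r = m1 * s := by
    apply mul_left_cancel₀ hne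
    linear_combination m1 * hs - m3 * hr
  obtain ⟨c, rfl⟩ := key r ⟨s, by rw [mul_comm, h1]⟩
  have hm1ne : m1 ≠ 0 := nonZeroDivisors.ne_zero (Ms_le hY (by omega) hm1)
  refine ⟨c, mul_left_cancel₀ hm1ne ?_⟩
  linear_combination hr

lemma exists_gen (n : ℕ) : ∃ Y, Gen Y (n + 1) := by
  induction n with
  | zero =>
    exact ⟨fun k u w => if k = 0 then g (Vr.y0 u w) else g (Vr.y1 u w), by simp, by simp,
      fun k hk => by omega⟩
  | succ n ih =>
    obtain ⟨Y, hY⟩ := ih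
    refine step hY fun u w => ?_
    match n, hY with
    | 0, hY => rw [hY.i0]; exact (isUnit_y0 _ _).dvd
    | 1, hY => rw [hY.i1]; exact (isUnit_y1 _ _).dvd
    | 2, hY =>
      have e4 := level4 hY le_rfl (u - 1) (w - 1)
      rw [sub_add_cancel, sub_add_cancel] at e4
      refine (IsUnit.dvd_mul_right ?_).1 ⟨_, e4⟩
      simp only [hY.i1]
      exact (((isUnit_y1 _ _).mul (isUnit_y1 _ _)).mul (isUnit_y1 _ _)).mul (isUnit_y1 _ _)
    | n + 3, hY => exact main_step hY (by omega) u w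

/-- Back to the original indices. -/
def e : Vr → OctInit ⊕ Fin 2
  | Vr.y0 u w => Sum.inl ⟨(u + w, u - w, 0), ⟨u, by simp⟩, Or.inl rfl⟩
  | Vr.y1 u w => Sum.inl ⟨(u + w - 1, u - w, 1), ⟨u, by dsimp only; ring⟩, Or.inr rfl⟩
  | Vr.al => Sum.inr 0
  | Vr.be => Sum.inr 1

lemma e_inj : Function.Injective e := by
  intro a b h
  cases a <;> cases b <;> simp [e] at h ⊢
  all_goals
    have h' := congrArg Subtype.val (Sum.inl_injective h)
    simp only [Prod.mk.injEq] at h'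
    omega

end OctProof

/-- The octahedron recurrence on the half-lattice
{(i,j,k) : i+j+k even, k ≥ 0} exhibits the Laurent phenomenon:
each entry is a Laurent polynomial over ℤ[α,β] in the initial entries
(those with k ∈ {0,1}). -/
theorem octahedron_recurrence_laurent
    (F : Type*) [Field F] [Algebra (MvPolynomial (OctInit ⊕ Fin 2) ℤ) F]
    [IsFractionRing (MvPolynomial (OctInit ⊕ Fin 2) ℤ) F]
    (x : OctInit ⊕ Fin 2 → F)
    (hx : ∀ s, x s = algebraMap (MvPolynomial (OctInit ⊕ Fin 2) ℤ) F (X s))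
    (α β : F) (hα : α = x (Sum.inr 0)) (hβ : β = x (Sum.inr 1))
    (y : ℤ → ℤ → ℤ → F)
    (hinit : ∀ i j k : ℤ, ∀ h : Even (i + j + k) ∧ (k = 0 ∨ k = 1),
      y i j k = x (Sum.inl ⟨(i, j, k), h⟩))
    (hrec : ∀ i j k : ℤ, Even (i + j + k) → 2 ≤ k →
      y i j k = (α * y (i + 1) j (k - 1) * y (i - 1) j (k - 1)
        + β * y i (j + 1) (k - 1) * y i (j - 1) (k - 1)) / y i j (k - 2)) :
    ∀ i j k : ℤ, Even (i + j + k) → 0 ≤ k →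
      y i j k ∈ Algebra.adjoin ℤ
        (Set.range (fun s : OctInit => x (Sum.inl s)) ∪
         Set.range (fun s : OctInit => (x (Sum.inl s))⁻¹) ∪ {α, β}) := by
  classical
  intro i j k hev hk
  set B := Algebra.adjoin ℤ
        (Set.range (fun s : OctInit => x (Sum.inl s)) ∪
         Set.range (fun s : OctInit => (x (Sum.inl s))⁻¹) ∪ {α, β}) with hB
  have hx0 : ∀ s, x s ≠ 0 := by
    intro s h
    rw [hx] at h
    exact X_ne_zero s ((IsFractionRing.injective (MvPolynomial (OctInit ⊕ Fin 2) ℤ) F)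
      (h.trans (map_zero _).symm))
  have hxB : ∀ s, x s ∈ B := by
    rintro (s | s)
    · exact Algebra.subset_adjoin (Or.inl (Or.inl ⟨s, rfl⟩))
    · fin_cases s
      · exact Algebra.subset_adjoin (Or.inr (Or.inl hα.symm))
      · exact Algebra.subset_adjoin (Or.inr (Or.inr hβ.symm))
  have hxu : ∀ s : OctInit, IsUnit (⟨x (Sum.inl s), hxB _⟩ : B) := by
    intro s
    refine IsUnit.of_mul_eq_one ⟨(x (Sum.inl s))⁻¹,
      Algebra.subset_adjoin (Or.inl (Or.inr ⟨s, rfl⟩))⟩ ?_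
    exact Subtype.ext (mul_inv_cancel₀ (hx0 _))
  obtain ⟨θ', hθ'⟩ := OctProof.exists_hom (A := B) (fun v => ⟨x (OctProof.e v), hxB _⟩)
    (fun u w => hxu _) (fun u w => hxu _)
  obtain ⟨θ, hθdef⟩ : ∃ θ : OctProof.R →+* F, θ = B.subtype.comp θ' := ⟨_, rfl⟩
  have hθ : ∀ v, θ (OctProof.g v) = x (OctProof.e v) := by
    intro v
    rw [hθdef, RingHom.comp_apply, hθ']
    rfl
  have hmem : ∀ r, θ r ∈ B := by
    intro r
    rw [hθdef]
    exact (θ' r).2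
  have hcomp : θ.comp (algebraMap OctProof.S OctProof.R) =
      (algebraMap (MvPolynomial (OctInit ⊕ Fin 2) ℤ) F).comp
        (rename OctProof.e : OctProof.S →ₐ[ℤ] _).toRingHom := by
    refine MvPolynomial.ringHom_ext (fun n => by simp) (fun v => ?_)
    have := hθ v
    rw [hx] at this
    simpa [OctProof.g] using this
  have hθinj : ∀ r, θ r = 0 → r = 0 := by
    intro r hr
    obtain ⟨⟨s, m⟩, hs⟩ := IsLocalization.surj OctProof.M r
    have h1 : θ (algebraMap OctProof.S OctProof.R s) = 0 := by
      rw [← hs, map_mul, hr, zero_mul]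
    have h2 := congrFun (congrArg DFunLike.coe hcomp) s
    simp only [RingHom.comp_apply] at h2
    rw [h1] at h2
    have h3 : (rename OctProof.e : OctProof.S →ₐ[ℤ] _) s = 0 :=
      (IsFractionRing.injective (MvPolynomial (OctInit ⊕ Fin 2) ℤ) F)
        (h2.symm.trans (map_zero _).symm)
    have h4 : s = 0 := rename_injective _ OctProof.e_inj (h3.trans (map_zero _).symm)
    simp only [h4, map_zero] at hs
    exact (mul_eq_zero.1 hs).resolve_right (IsLocalization.map_units _ m).ne_zero
  obtain ⟨K, rfl⟩ := Int.eq_ofNat_of_zero_le hk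
  obtain ⟨Y, hY⟩ := OctProof.exists_gen K
  have hne := OctProof.gen_ne_zero hY
  have key : ∀ k : ℕ, k ≤ K → ∀ u w : ℤ, θ (Y k u w) = y (u + w - k) (u - w) k := by
    intro k
    induction k using Nat.strong_induction_on with
    | _ k ih =>
      intro hk u w
      match k, ih, hk with
      | 0, _, _ =>
        rw [hY.i0, hθ, hinit _ _ ((0 : ℕ) : ℤ) ⟨⟨u, by push_cast; ring⟩, Or.inl rfl⟩]
        simp [OctProof.e]
      | 1, _, _ =>
        rw [hY.i1, hθ, hinit _ _ ((1 : ℕ) : ℤ) ⟨⟨u, by push_cast; ring⟩, Or.inr rfl⟩]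
        simp [OctProof.e]
      | k + 2, ih, hk =>
        have e1 := congrArg θ (hY.sol k (by omega) u w)
        have i1 := ih (k + 1) (by omega) (by omega)
        have i0 := ih k (by omega) (by omega) (u - 1) (w - 1)
        have n0 : θ (Y k (u - 1) (w - 1)) ≠ 0 := fun h =>
          hne k (by omega) _ _ (hθinj _ h)
        rw [map_mul, OctProof.map_num, OctProof.num, hθ, hθ] at e1
        simp only [i1] at e1
        rw [hrec _ _ _ ⟨u, by push_cast; ring⟩ (by push_cast; omega)]
        rw [eq_comm, div_eq_iff (by convert n0 using 1; rw [i0]; congr 1 <;> push_cast <;> ring)]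
        have hy0 : y (u + w - ((k + 2 : ℕ) : ℤ)) (u - w) (((k + 2 : ℕ) : ℤ) - 2)
            = θ (Y k (u - 1) (w - 1)) := by
          rw [i0]; congr 1 <;> push_cast <;> ring
        rw [hy0, e1, hα, hβ]
        congr 2
        · refine congrArg₂ (· * ·) rfl ?_
          congr 1 <;> push_cast <;> ring
        · congr 1 <;> push_cast <;> ring
        · refine congrArg₂ (· * ·) rfl ?_
          congr 1 <;> push_cast <;> ring
        · congr 1 <;> push_cast <;> ring
  obtain ⟨u, hu⟩ := hev
  have := key K le_rfl u (u - j)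
  rw [show u + (u - j) - (K : ℤ) = i by linarith, show u - (u - j) = j by ring] at this
  rw [← this]
  exact hmem _
end
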